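/- There exist a constant c > 0 and a real number X₀ such that for all real X ≥ X₀, the number of negative squarefree integers d such that the absolute value of the discriminant of the imaginary quadratic field ℚ(√d) is at most X and the ideal class group Cl(ℚ(√d)) contains a subgroup isomorphic to (ℤ/7ℤ)² is at least c · X^(1/4). -/

import Mathlib

open NumberField

/-- `d` is a negative squarefree integer such that the imaginary quadratic field
`ℚ(√d)` (characterized as a degree-2 number field containing a square root of `d`)
has `|discriminant| ≤ X` and its ideal class group contains a subgroup isomorphic
to `(ℤ/7ℤ)²`. -/
def GoodRank7sq (X : ℝ) (d : ℤ) : Prop :=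
  d < 0 ∧ Squarefree d ∧
  ∀ (K : Type) [Field K] [NumberField K],
    (∃ x : K, x * x = (d : K)) → Module.finrank ℚ K = 2 →
      (|NumberField.discr K| : ℝ) ≤ X ∧
      ∃ f : Multiplicative (ZMod 7 × ZMod 7) →* ClassGroup (𝓞 K), Function.Injective f

/-! ## Quadratic fields -/

theorem qf_rat_sq_mul_int (d : ℤ) (hsq : Squarefree d) (q : ℚ) (n : ℤ) (h : (d : ℚ) * q ^ 2 = n) :
    ∃ m : ℤ, q = m := by
  have hden : (q.den : ℤ) * q.den ∣ d := by
    have h1 : d * q.num ^ 2 = n * (q.den : ℤ) ^ 2 := by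
      have hq : (q.den : ℚ) ≠ 0 := by exact_mod_cast q.den_nz
      have h2 : (d : ℚ) * (q.num : ℚ) ^ 2 = n * (q.den : ℚ) ^ 2 := by
        rw [← h]
        have : (q.num : ℚ) = q * q.den := by
          exact (Rat.mul_den_eq_num q).symm
        rw [this]; ring
      exact_mod_cast h2
    have hc : IsCoprime ((q.den : ℤ) * q.den) (q.num ^ 2) := by
      have : IsCoprime (q.den : ℤ) q.num := by
        rw [Int.isCoprime_iff_gcd_eq_one]
        have := q.reduced
        unfold Nat.Coprime at this
        rw [Int.gcd_comm]; simpa [Int.gcd] using this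
      exact (this.mul_left this).pow_right
    exact hc.dvd_of_dvd_mul_right (by rw [h1]; exact ⟨n, by ring⟩)
  have hu := hsq _ hden
  have h1 : q.den = 1 := by
    have := Int.isUnit_iff.mp hu
    omega
  exact ⟨q.num, ((Rat.den_eq_one_iff q).mp h1).symm⟩

section
variable {K : Type} [Field K] [NumberField K]

theorem qf_linInd (d : ℤ) (hd : d < 0) (x : K) (hx : x * x = (d : K)) :
    LinearIndependent ℚ ![(1 : K), x] := by
  rw [LinearIndependent.pair_iff]
  intro a b h
  have hq : ∀ q : ℚ, x ≠ (q : K) := by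
    intro q hq
    rw [hq] at hx
    have : q * q = (d : ℚ) := by exact_mod_cast hx
    have h1 : (d : ℚ) < 0 := by exact_mod_cast hd
    nlinarith [mul_self_nonneg q]
  by_cases hb : b = 0
  · subst hb
    simp at h
    exact ⟨h, rfl⟩
  · exfalso
    apply hq (-a / b)
    have hb' : (b : K) ≠ 0 := by exact_mod_cast hb
    rw [Algebra.smul_def, Algebra.smul_def] at h
    simp only [eq_ratCast, mul_one] at h
    push_cast
    field_simp
    linear_combination h

theorem qf_basis (d : ℤ) (hd : d < 0) (x : K) (hx : x * x = (d : K))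
    (hfr : Module.finrank ℚ K = 2) : ∃ b : Module.Basis (Fin 2) ℚ K, ⇑b = ![(1 : K), x] := by
  refine ⟨basisOfLinearIndependentOfCardEqFinrank (qf_linInd d hd x hx) (by simp [hfr]), ?_⟩
  simp

theorem qf_matrix (d : ℤ) (x : K) (hx : x * x = (d : K))
    (b : Module.Basis (Fin 2) ℚ K) (hb : ⇑b = ![(1 : K), x]) (p q : ℚ) :
    Algebra.leftMulMatrix b ((p : K) + q * x) = !![p, q * d; q, p] := by
  have e0 : b 0 = 1 := by rw [hb]; rfl
  have e1 : b 1 = x := by rw [hb]; rfl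
  have h0 : ((p : K) + q * x) * b 0 = p • b 0 + q • b 1 := by
    rw [e0, e1, Algebra.smul_def, Algebra.smul_def]; simp
  have h1 : ((p : K) + q * x) * b 1 = (q * d) • b 0 + p • b 1 := by
    rw [e0, e1, Algebra.smul_def, Algebra.smul_def]; simp
    linear_combination (q : K) * hx
  ext i j
  rw [Algebra.leftMulMatrix_eq_repr_mul]
  fin_cases j
  · simp only [Fin.zero_eta, h0]
    fin_cases i <;> simp
  · simp only [Fin.mk_one, h1]
    fin_cases i <;> simp

theorem qf_trace (d : ℤ) (hd : d < 0) (x : K) (hx : x * x = (d : K))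
    (hfr : Module.finrank ℚ K = 2) (p q : ℚ) : Algebra.trace ℚ K ((p : K) + q * x) = 2 * p := by
  obtain ⟨b, hb⟩ := qf_basis d hd x hx hfr
  rw [Algebra.trace_eq_matrix_trace b, qf_matrix d x hx b hb, Matrix.trace_fin_two]
  simp; ring

theorem qf_norm (d : ℤ) (hd : d < 0) (x : K) (hx : x * x = (d : K))
    (hfr : Module.finrank ℚ K = 2) (p q : ℚ) :
    Algebra.norm ℚ ((p : K) + q * x) = p ^ 2 - d * q ^ 2 := by
  obtain ⟨b, hb⟩ := qf_basis d hd x hx hfr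
  rw [Algebra.norm_eq_matrix_det b, qf_matrix d x hx b hb, Matrix.det_fin_two]
  simp; ring

theorem qf_repr (d : ℤ) (hd : d < 0) (x : K) (hx : x * x = (d : K))
    (hfr : Module.finrank ℚ K = 2) (y : K) : ∃ p q : ℚ, y = p + q * x := by
  obtain ⟨b, hb⟩ := qf_basis d hd x hx hfr
  refine ⟨b.repr y 0, b.repr y 1, ?_⟩
  conv_lhs => rw [← b.sum_repr y]
  simp [Fin.sum_univ_two, hb, Algebra.smul_def]

theorem qf_int_repr (d : ℤ) (hd : d < 0) (hsq : Squarefree d) (x : K) (hx : x * x = (d : K))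
    (hfr : Module.finrank ℚ K = 2) (y : K) (hy : IsIntegral ℤ y) :
    ∃ a b : ℤ, 2 * y = a + b * x := by
  obtain ⟨p, q, rfl⟩ := qf_repr d hd x hx hfr y
  have ht : IsIntegral ℤ (Algebra.trace ℚ K ((p : K) + q * x)) := Algebra.isIntegral_trace hy
  have hn : IsIntegral ℤ (Algebra.norm ℚ ((p : K) + q * x)) := Algebra.isIntegral_norm ℚ hy
  rw [qf_trace d hd x hx hfr] at ht
  rw [qf_norm d hd x hx hfr] at hn
  obtain ⟨a, ha⟩ := IsIntegrallyClosed.isIntegral_iff.mp ht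
  obtain ⟨n, hn⟩ := IsIntegrallyClosed.isIntegral_iff.mp hn
  simp only [algebraMap_int_eq, eq_intCast] at ha hn
  obtain ⟨b, hb⟩ := qf_rat_sq_mul_int d hsq (2 * q) (a ^ 2 - 4 * n) (by
    push_cast
    rw [ha, hn]; ring)
  refine ⟨a, b, ?_⟩
  have h1 : (2 : K) * p = a := by exact_mod_cast ha.symm
  have h2 : (2 : K) * q = b := by exact_mod_cast hb
  linear_combination h1 + x * h2

theorem qf_unit (d : ℤ) (hd : d < -4) (hsq : Squarefree d) (x : K) (hx : x * x = (d : K))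
    (hfr : Module.finrank ℚ K = 2) (y : (𝓞 K)ˣ) : y = 1 ∨ y = -1 := by
  obtain ⟨a, b, hab⟩ := qf_int_repr d (by omega) hsq x hx hfr ((y : 𝓞 K) : K)
    (RingOfIntegers.isIntegral_coe _)
  have hn := (NumberField.isUnit_iff_norm (x := (y : 𝓞 K))).mp y.isUnit
  have hy : (((y : 𝓞 K)) : K) = (((a : ℚ) / 2 : ℚ) : K) + (((b : ℚ) / 2 : ℚ) : K) * x := by
    push_cast
    linear_combination hab / 2
  rw [RingOfIntegers.coe_norm, hy, qf_norm d (by omega) x hx hfr] at hn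
  have hd' : (d : ℚ) < -4 := by exact_mod_cast hd
  have hnn : (0 : ℚ) ≤ ((a : ℚ) / 2) ^ 2 - d * ((b : ℚ) / 2) ^ 2 := by
    nlinarith [sq_nonneg ((a : ℚ) / 2), sq_nonneg ((b : ℚ) / 2)]
  rw [abs_of_nonneg hnn] at hn
  have hz : a ^ 2 - d * b ^ 2 = 4 := by
    have : (a : ℚ) ^ 2 - d * b ^ 2 = 4 := by linear_combination 4 * hn
    exact_mod_cast this
  have hb : b = 0 := by
    by_contra hb
    have : 1 ≤ b ^ 2 := by
      have := sq_pos_of_ne_zero hb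
      omega
    nlinarith [sq_nonneg a]
  subst hb
  have ha : a = 2 ∨ a = -2 := by
    have : (a - 2) * (a + 2) = 0 := by linear_combination hz
    rcases mul_eq_zero.mp this with h | h
    · left; omega
    · right; omega
  rcases ha with rfl | rfl
  · left
    ext
    rw [hy]; simp
  · right
    ext
    rw [hy]; simp
end

section
variable {K : Type} [Field K] [NumberField K]

theorem qf_discr (d : ℤ) (hd : d < 0) (hsq : Squarefree d) (x : K) (hx : x * x = (d : K))
    (hfr : Module.finrank ℚ K = 2) : |d| ≤ |discr K| ∧ |discr K| ≤ 4 * |d| := by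
  obtain ⟨b, hb⟩ := qf_basis d hd x hx hfr
  have hdb : Algebra.discr ℚ ⇑b = 4 * d := by
    rw [Algebra.discr_def, Matrix.det_fin_two]
    simp only [Algebra.traceMatrix_apply, Algebra.traceForm_apply, hb]
    simp only [Matrix.cons_val_zero, Matrix.cons_val_one]
    have t1 := qf_trace d hd x hx hfr 1 0
    have t2 := qf_trace d hd x hx hfr 0 1
    have t3 := qf_trace d hd x hx hfr d 0
    simp at t1 t2 t3
    rw [hx]
    simp [t1, t2, t3]; ring
  have hxi : IsIntegral ℤ x := by
    refine ⟨Polynomial.X ^ 2 - Polynomial.C d, Polynomial.monic_X_pow_sub_C _ two_ne_zero, ?_⟩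
    rw [Polynomial.eval₂_sub, Polynomial.eval₂_X_pow, Polynomial.eval₂_C, sq, hx]
    simp
  have hbi : ∀ i, IsIntegral ℤ (b i) := by
    intro i
    fin_cases i
    · simp [hb, isIntegral_one]
    · simpa [hb] using hxi
  -- integral basis indexed by Fin 2
  have hrk : Module.finrank ℤ (𝓞 K) = 2 := by rw [RingOfIntegers.rank, hfr]
  let B : Module.Basis (Fin 2) ℤ (𝓞 K) := (Module.finBasisOfFinrankEq ℤ (𝓞 K) hrk)
  let y : Fin 2 → 𝓞 K := fun i => ⟨b i, hbi i⟩
  have hBd : Algebra.discr ℤ B = discr K := discr_eq_discr K B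
  have hyd : Algebra.discr ℤ y = (B.toMatrix y).det ^ 2 * discr K := by
    rw [← hBd, ← Algebra.discr_of_matrix_vecMul]
    congr 1
    rw [Module.Basis.toMatrix_map_vecMul]
  have hyd2 : (Algebra.discr ℤ y : ℚ) = Algebra.discr ℚ ⇑b := by
    rw [Algebra.discr_def, Algebra.discr_def, Matrix.det_fin_two, Matrix.det_fin_two]
    simp only [Algebra.traceMatrix_apply, Algebra.traceForm_apply]
    push_cast
    simp only [Algebra.coe_trace_int]
    rfl
  have key : 4 * d = (B.toMatrix y).det ^ 2 * discr K := by
    rw [← hyd]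
    rw [hdb] at hyd2
    exact_mod_cast hyd2.symm
  generalize (B.toMatrix y).det = m at key
  generalize discr K = D at key
  have hm0 : m ≠ 0 := by rintro rfl; simp at key; omega
  have hm1 : 1 ≤ m ^ 2 := by
    have := sq_pos_of_ne_zero hm0; omega
  have habs : 4 * |d| = m ^ 2 * |D| := by
    have := congrArg abs key
    rw [abs_mul, abs_mul, abs_of_nonneg (sq_nonneg m)] at this
    simpa using this
  refine ⟨?_, by nlinarith [abs_nonneg D]⟩
  have hm4 : m ^ 2 ≤ 4 := by
    rcases Int.even_or_odd m with ⟨k, hk⟩ | hodd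
    · have hk2 : d = k * k * D := by
        subst hk
        have : 4 * d = 4 * (k * k * D) := by rw [key]; ring
        omega
      have := hsq k ⟨D, hk2⟩
      rcases Int.isUnit_iff.mp this with h | h <;> subst h <;> subst hk <;> norm_num
    · have hc : IsCoprime (m * m) (4 : ℤ) := by
        have : IsCoprime m (2 : ℤ) := by
          rw [Int.isCoprime_iff_gcd_eq_one, Int.gcd_comm, ← Int.isCoprime_iff_gcd_eq_one]
          exact Int.isCoprime_two_left.mpr hodd
        have h2 : IsCoprime m ((2 : ℤ) * 2) := this.mul_right this
        exact (h2.mul_left h2)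
      have : m * m ∣ d := hc.dvd_of_dvd_mul_left ⟨D, by rw [key]; ring⟩
      have := hsq m this
      rcases Int.isUnit_iff.mp this with h | h <;> subst h <;> norm_num
  nlinarith [abs_nonneg D]

/-- existence of the quadratic field -/
theorem qf_exists (d : ℤ) (hd : d < 0) : ∃ (K : Type) (_ : Field K) (_ : NumberField K),
    (∃ x : K, x * x = (d : K)) ∧ Module.finrank ℚ K = 2 := by
  let P : Polynomial ℚ := Polynomial.X ^ 2 - Polynomial.C (d : ℚ)
  have hdeg : P.natDegree = 2 := Polynomial.natDegree_X_pow_sub_C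
  have hm : P.Monic := Polynomial.monic_X_pow_sub_C _ two_ne_zero
  have hirr : Irreducible P := by
    rw [Polynomial.irreducible_iff_roots_eq_zero_of_degree_le_three (by omega) (by omega)]
    rw [Multiset.eq_zero_iff_forall_notMem]
    intro q hq
    rw [Polynomial.mem_roots hm.ne_zero] at hq
    simp [P] at hq
    have h1 : (d : ℚ) < 0 := by exact_mod_cast hd
    nlinarith [sq_nonneg q]
  have : Fact (Irreducible P) := ⟨hirr⟩
  have hfr : Module.finrank ℚ (AdjoinRoot P) = 2 := by
    rw [(AdjoinRoot.powerBasis hm.ne_zero).finrank, AdjoinRoot.powerBasis_dim, hdeg]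
  have : Module.Finite ℚ (AdjoinRoot P) := Module.finite_of_finrank_pos (by omega)
  have : CharZero (AdjoinRoot P) := algebraRat.charZero _
  refine ⟨AdjoinRoot P, inferInstance, { }, ⟨AdjoinRoot.root P, ?_⟩, hfr⟩
  have h := AdjoinRoot.eval₂_root P
  have h2 : Polynomial.eval₂ (AdjoinRoot.of P) (AdjoinRoot.root P) P =
      AdjoinRoot.root P ^ 2 - AdjoinRoot.of P (d : ℚ) := by
    have gen : ∀ (f : ℚ →+* AdjoinRoot P) (y : AdjoinRoot P), Polynomial.eval₂ f y
        (Polynomial.X ^ 2 - Polynomial.C (d : ℚ)) = y ^ 2 - f (d : ℚ) := by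
      intro f y
      rw [Polynomial.eval₂_sub, Polynomial.eval₂_X_pow, Polynomial.eval₂_C]
    exact gen _ _
  rw [h2, sub_eq_zero] at h
  rw [← sq, h]; simp

theorem qf_ideal_pow (g g' : 𝓞 K) (T r : ℤ) (hT : g + g' = (T : 𝓞 K))
    (hr : g * g' = ((r ^ 14 : ℤ) : 𝓞 K)) (hc : IsCoprime T r) :
    ∃ I : Ideal (𝓞 K), Ideal.span {g} = I ^ 7 := by
  classical
  have hco : IsCoprime (Ideal.span {g}) (Ideal.span {g'}) := by
    rw [Ideal.isCoprime_span_singleton_iff]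
    obtain ⟨a, b, hab⟩ := (hc.pow_right (n := 14))
    have h := congrArg (Int.cast : ℤ → 𝓞 K) hab
    rw [Int.cast_add, Int.cast_mul, Int.cast_mul, ← hT, ← hr] at h
    refine ⟨a + b * g', a, ?_⟩
    rw [Int.cast_one] at h
    linear_combination h
  let _ : GCDMonoid (Ideal (𝓞 K)) := Classical.choice (by
    exact ⟨UniqueFactorizationMonoid.toGCDMonoid _⟩)
  refine exists_eq_pow_of_mul_eq_pow_of_coprime (c := Ideal.span {((r ^ 2 : ℤ) : 𝓞 K)}) hco ?_
  rw [Ideal.span_singleton_mul_span_singleton, hr, Ideal.span_singleton_pow]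
  congr 2
  push_cast; ring
end

theorem hom_of_two {G : Type*} [CommGroup G] (a b : G) (ha : a ^ 7 = 1) (hb : b ^ 7 = 1)
    (h : ∀ i j : ℕ, i < 7 → j < 7 → a ^ i * b ^ j = 1 → i = 0 ∧ j = 0) :
    ∃ f : Multiplicative (ZMod 7 × ZMod 7) →* G, Function.Injective f := by
  let fa : ZMod 7 →+ Additive G := ZMod.lift 7 ⟨(zmultiplesHom (Additive G)) (Additive.ofMul a), by
    show (zmultiplesHom (Additive G)) (Additive.ofMul a) ((7 : ℕ) : ℤ) = 0
    rw [zmultiplesHom_apply, natCast_zsmul, ← ofMul_pow, ha]; rfl⟩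
  let fb : ZMod 7 →+ Additive G := ZMod.lift 7 ⟨(zmultiplesHom (Additive G)) (Additive.ofMul b), by
    show (zmultiplesHom (Additive G)) (Additive.ofMul b) ((7 : ℕ) : ℤ) = 0
    rw [zmultiplesHom_apply, natCast_zsmul, ← ofMul_pow, hb]; rfl⟩
  have hfa : ∀ i : ZMod 7, fa i = Additive.ofMul (a ^ i.val) := by
    intro i
    conv_lhs => rw [← ZMod.natCast_zmod_val i]
    have := ZMod.lift_coe 7 (⟨(zmultiplesHom (Additive G)) (Additive.ofMul a), by
      show (zmultiplesHom (Additive G)) (Additive.ofMul a) ((7 : ℕ) : ℤ) = 0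
      rw [zmultiplesHom_apply, natCast_zsmul, ← ofMul_pow, ha]; rfl⟩ :
      { f : ℤ →+ Additive G // f (7 : ℕ) = 0 }) (i.val : ℤ)
    rw [Int.cast_natCast] at this
    rw [this]
    show (i.val : ℤ) • Additive.ofMul a = _
    rw [natCast_zsmul, ofMul_pow]
  have hfb : ∀ i : ZMod 7, fb i = Additive.ofMul (b ^ i.val) := by
    intro i
    conv_lhs => rw [← ZMod.natCast_zmod_val i]
    have := ZMod.lift_coe 7 (⟨(zmultiplesHom (Additive G)) (Additive.ofMul b), by
      show (zmultiplesHom (Additive G)) (Additive.ofMul b) ((7 : ℕ) : ℤ) = 0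
      rw [zmultiplesHom_apply, natCast_zsmul, ← ofMul_pow, hb]; rfl⟩ :
      { f : ℤ →+ Additive G // f (7 : ℕ) = 0 }) (i.val : ℤ)
    rw [Int.cast_natCast] at this
    rw [this]
    show (i.val : ℤ) • Additive.ofMul b = _
    rw [natCast_zsmul, ofMul_pow]
  let f := AddMonoidHom.toMultiplicativeLeft (fa.coprod fb)
  refine ⟨f, ?_⟩
  rw [injective_iff_map_eq_one]
  intro x hx
  obtain ⟨i, j⟩ := x
  have h1 : fa i + fb j = 0 := hx
  rw [hfa, hfb] at h1
  have h2 : a ^ i.val * b ^ j.val = 1 := h1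
  obtain ⟨hi, hj⟩ := h _ _ (ZMod.val_lt i) (ZMod.val_lt j) h2
  rw [ZMod.val_eq_zero] at hi hj
  subst hi; subst hj; rfl

theorem qf_class (K : Type) [Field K] [NumberField K] (d : ℤ) (hd : d < -4) (hsq : Squarefree d)
    (x : K) (hx : x * x = (d : K)) (hfr : Module.finrank ℚ K = 2)
    (T1 e1 r1 T2 e2 r2 : ℤ)
    (hn1 : 4 * T1 ^ 2 - d * e1 ^ 2 = 16 * r1 ^ 14) (hn2 : 4 * T2 ^ 2 - d * e2 ^ 2 = 16 * r2 ^ 14)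
    (hc1 : IsCoprime T1 r1) (hc2 : IsCoprime T2 r2) (hr1 : r1 ≠ 0) (hr2 : r2 ≠ 0)
    (hind : ∀ i j : ℕ, i < 7 → j < 7 → ∀ y : ℤ√d, ∀ ε : ℤ, (ε = 1 ∨ ε = -1) →
      2 ^ 7 * (⟨2 * T1, e1⟩ : ℤ√d) ^ i * (⟨2 * T2, e2⟩ : ℤ√d) ^ j = ε * 4 ^ (i + j) * y ^ 7 →
      i = 0 ∧ j = 0) :
    ∃ f : Multiplicative (ZMod 7 × ZMod 7) →* ClassGroup (𝓞 K), Function.Injective f := by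
  have hxd : (d : K) = x ^ 2 := by rw [← hx, sq]
  -- the elements
  have mk : ∀ T e r : ℤ, 4 * T ^ 2 - d * e ^ 2 = 16 * r ^ 14 → ∃ g g' : 𝓞 K,
      (4 * algebraMap (𝓞 K) K g = 2 * T + e * x) ∧ g + g' = (T : 𝓞 K) ∧ g * g' = ((r ^ 14 : ℤ) : 𝓞 K) := by
    intro T e r h
    have hK : (4 : K) * T ^ 2 - d * e ^ 2 = 16 * r ^ 14 := by exact_mod_cast congrArg (Int.cast : ℤ → K) h
    have int : ∀ e' : K, e' ^ 2 = e ^ 2 → IsIntegral ℤ ((2 * (T : K) + e' * x) / 4) := by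
      intro e' he'
      refine ⟨Polynomial.X ^ 2 - Polynomial.C T * Polynomial.X + Polynomial.C (r ^ 14), ?_, ?_⟩
      · monicity!
      · rw [Polynomial.eval₂_add, Polynomial.eval₂_sub, Polynomial.eval₂_X_pow, Polynomial.eval₂_mul,
          Polynomial.eval₂_C, Polynomial.eval₂_C, Polynomial.eval₂_X]
        simp only [algebraMap_int_eq, eq_intCast]
        push_cast
        rw [hxd] at hK
        linear_combination (x ^ 2 / 16) * he' - hK / 16
    have lift : ∀ y : K, IsIntegral ℤ y → ∃ g : 𝓞 K, algebraMap (𝓞 K) K g = y := fun y hy => ⟨⟨y, hy⟩, rfl⟩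
    obtain ⟨g, hg⟩ := lift _ (int e rfl)
    obtain ⟨g', hg'⟩ := lift _ (int (-e) (by ring))
    refine ⟨g, g', ?_, ?_, ?_⟩
    · rw [hg]; ring
    · apply RingOfIntegers.coe_injective
      rw [map_add, hg, hg', map_intCast]
      ring
    · apply RingOfIntegers.coe_injective
      rw [map_mul, hg, hg', map_intCast]
      push_cast
      rw [hxd] at hK
      linear_combination hK / 16
  obtain ⟨g1, g1', hg1, ht1, hp1⟩ := mk T1 e1 r1 hn1
  obtain ⟨g2, g2', hg2, ht2, hp2⟩ := mk T2 e2 r2 hn2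
  obtain ⟨I1, hI1⟩ := qf_ideal_pow g1 g1' T1 r1 ht1 hp1 hc1
  obtain ⟨I2, hI2⟩ := qf_ideal_pow g2 g2' T2 r2 ht2 hp2 hc2
  have g1ne : g1 ≠ 0 := by
    rintro rfl
    rw [zero_mul] at hp1
    have : r1 ^ 14 = 0 := by exact_mod_cast hp1.symm
    exact hr1 (by simpa using this)
  have g2ne : g2 ≠ 0 := by
    rintro rfl
    rw [zero_mul] at hp2
    have : r2 ^ 14 = 0 := by exact_mod_cast hp2.symm
    exact hr2 (by simpa using this)
  have I1ne : I1 ∈ nonZeroDivisors (Ideal (𝓞 K)) := by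
    rw [mem_nonZeroDivisors_iff_ne_zero]
    rintro rfl
    simp at hI1; exact g1ne hI1
  have I2ne : I2 ∈ nonZeroDivisors (Ideal (𝓞 K)) := by
    rw [mem_nonZeroDivisors_iff_ne_zero]
    rintro rfl
    simp at hI2; exact g2ne hI2
  refine hom_of_two (ClassGroup.mk0 ⟨I1, I1ne⟩) (ClassGroup.mk0 ⟨I2, I2ne⟩) ?_ ?_ ?_
  · rw [← map_pow, ClassGroup.mk0_eq_one_iff]
    exact ⟨g1, by simp [← hI1]⟩
  · rw [← map_pow, ClassGroup.mk0_eq_one_iff]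
    exact ⟨g2, by simp [← hI2]⟩
  intro i j hi hj h
  rw [← map_pow, ← map_pow, ← map_mul, ClassGroup.mk0_eq_one_iff] at h
  obtain ⟨⟨z, hz⟩⟩ := h
  have hz' : I1 ^ i * I2 ^ j = Ideal.span {z} := by simpa using hz
  have h7 : Ideal.span {g1 ^ i * g2 ^ j} = Ideal.span {z ^ 7} := by
    rw [← Ideal.span_singleton_mul_span_singleton, ← Ideal.span_singleton_pow,
      ← Ideal.span_singleton_pow, ← Ideal.span_singleton_pow, hI1, hI2, ← hz']
    ring
  rw [Ideal.span_singleton_eq_span_singleton] at h7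
  obtain ⟨u, hu⟩ := h7.symm
  obtain ⟨a, b, hab⟩ := qf_int_repr d (by omega) hsq x hx hfr (algebraMap (𝓞 K) K z) (RingOfIntegers.isIntegral_coe _)
  -- embedding
  let φ : ℤ√d →+* K := Zsqrtd.lift ⟨x, hx⟩
  have hφ : ∀ p q : ℤ, φ ⟨p, q⟩ = p + q * x := fun p q => rfl
  have hφi : Function.Injective φ := by
    rw [injective_iff_map_eq_zero]
    rintro ⟨p, q⟩ h0
    rw [hφ] at h0
    have hl := qf_linInd d (by omega) x hx
    rw [LinearIndependent.pair_iff] at hl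
    have := hl p q (by simpa [Algebra.smul_def] using h0)
    ext
    · exact_mod_cast this.1
    · exact_mod_cast this.2
  have hue : ∃ ε : ℤ, (ε = 1 ∨ ε = -1) ∧ algebraMap (𝓞 K) K (u : 𝓞 K) = ε := by
    rcases qf_unit d hd hsq x hx hfr u with h | h
    · exact ⟨1, Or.inl rfl, by simp [h]⟩
    · exact ⟨-1, Or.inr rfl, by simp [h]⟩
  obtain ⟨ε, hε, huε⟩ := hue
  refine hind i j hi hj ⟨a, b⟩ ε hε ?_
  apply hφi
  rw [map_mul, map_mul, map_mul, map_mul, map_pow, map_pow, map_pow, map_pow, map_pow, hφ (2 * T1), hφ (2 * T2), hφ a]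
  have hu' := congrArg (algebraMap (𝓞 K) K) hu
  rw [map_mul, map_mul, map_pow, map_pow, map_pow, huε] at hu'
  push_cast
  rw [← hg1, ← hg2, ← hab]
  simp only [map_ofNat, map_intCast]
  rw [mul_pow, mul_pow, mul_pow, pow_add]
  linear_combination (-2 ^ 7 * (4 : K) ^ i * 4 ^ j) * hu'


def fW (u v : ℤ) : ℤ := v ^ 2 + 12 * u ^ 2
def fR1 (u v : ℤ) : ℤ := -263 * v ^ 2 - 77 * u * v + 690 * u ^ 2
def fR2 (u v : ℤ) : ℤ := -13 * v ^ 2 - 923 * u * v - 2310 * u ^ 2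
def fG (u v : ℤ) : ℤ := -240347 * v ^ 6 - 17767750 * u * v ^ 5 + 867410541 * u ^ 2 * v ^ 4
  + 710710000 * u ^ 3 * v ^ 3 - 7112334168 * u ^ 4 * v ^ 2 - 2558556000 * u ^ 5 * v
  + 13601688912 * u ^ 6
def fF (u v : ℤ) : ℤ := fW u v * fG u v
def fM : ℤ := 2 * 3 * 7 * 19 * 29 * 41 * 43 * 317 * 379 * 2027
def fA (r w : ℤ) : ℤ := 28672 * w ^ 3 + 11136 * w ^ 2 * r + 1255 * w * r ^ 2 + 37 * r ^ 3
def fB (r w : ℤ) : ℤ := 64 * w ^ 2 + 17 * w * r + r ^ 2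
def fhat (r w : ℤ) : ℤ := 4 * r ^ 3 + 1233 * r ^ 2 * w + 49280 * r * w ^ 2 + 200704 * w ^ 3

theorem fhat1 (u v : ℤ) : fhat (fR1 u v) (fW u v) = fG u v := by
  unfold fhat fR1 fW fG; ring
theorem fhat2 (u v : ℤ) : fhat (fR2 u v) (fW u v) = fG u v := by
  unfold fhat fR2 fW fG; ring
theorem fAB (r w : ℤ) : w * fA r w ^ 2 - fhat r w * fB r w ^ 2 = -4 * r ^ 7 := by
  unfold fhat fA fB; ring

theorem fnorm (r w g d s : ℤ) (hg : fhat r w = g) (hF : w * g = d * s ^ 2) :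
    4 * (w * fA r w ^ 2 + 2 * r ^ 7) ^ 2 - d * (2 * fA r w * fB r w * s) ^ 2 = 16 * r ^ 14 := by
  have h := fAB r w
  rw [hg] at h
  generalize fA r w = A at *
  generalize fB r w = B at *
  linear_combination 4 * A ^ 2 * B ^ 2 * hF + 4 * w * A ^ 2 * h

theorem isCoprime_of_primes (a b : ℤ) (h : ∀ p : ℕ, p.Prime → (p : ℤ) ∣ a → ¬ (p : ℤ) ∣ b) :
    IsCoprime a b := by
  rw [Int.isCoprime_iff_gcd_eq_one]
  by_contra hne
  obtain ⟨p, hp, hpd⟩ := Nat.exists_prime_and_dvd hne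
  exact h p hp ((Int.natCast_dvd_natCast.mpr hpd).trans (Int.gcd_dvd_left _ _))
    ((Int.natCast_dvd_natCast.mpr hpd).trans (Int.gcd_dvd_right _ _))

theorem fM_prime (p : ℕ) (hp : p.Prime) (h : (p : ℤ) ∣ fM) : p = 2 ∨ p = 3 ∨ p = 7 ∨ p = 19 ∨
    p = 29 ∨ p = 41 ∨ p = 43 ∨ p = 317 ∨ p = 379 ∨ p = 2027 := by
  have h' : p ∣ 2 * 3 * 7 * 19 * 29 * 41 * 43 * 317 * 379 * 2027 := by
    unfold fM at h; exact_mod_cast h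
  simp only [hp.dvd_mul] at h'
  have e : ∀ q : ℕ, q.Prime → (p ∣ q ↔ p = q) := fun q hq => Nat.prime_dvd_prime_iff_eq hp hq
  rw [e 2 (by norm_num), e 3 (by norm_num), e 7 (by norm_num), e 19 (by norm_num),
    e 29 (by norm_num), e 41 (by norm_num), e 43 (by norm_num), e 317 (by norm_num),
    e 379 (by norm_num), e 2027 (by norm_num)] at h'
  tauto

theorem prime_dvd_fM (p : ℕ) (hp : p.Prime) (c : ℤ) (hc : c ≠ 0)
    (h : (p : ℤ) ∣ c) (hcM : c ∣ fM ^ 50) : (p : ℤ) ∣ fM :=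
  Int.Prime.dvd_pow' hp (h.trans hcM)

theorem fcop (u v : ℤ) (hu : fM ∣ u) (hv : fM ∣ v - 1) (c0 : ℤ) (hc0 : c0 = -263 ∨ c0 = -13 ∨ c0 = -240347)
    (r : ℤ) (hr : fM ∣ r - c0) (p : ℕ) (hp : p.Prime) (hpM : (p : ℤ) ∣ fM) : ¬ (p : ℤ) ∣ r := by
  intro h
  have h1 : (p : ℤ) ∣ c0 := by
    have := dvd_sub h (hpM.trans hr)
    simpa using this
  rcases fM_prime p hp hpM with rfl | rfl | rfl | rfl | rfl | rfl | rfl | rfl | rfl | rfl <;>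
  rcases hc0 with rfl | rfl | rfl <;> revert h1 <;> norm_num

theorem fW_mod (u v : ℤ) (hu : fM ∣ u) (hv : fM ∣ v - 1) : fM ∣ fW u v - 1 := by
  obtain ⟨a, rfl⟩ := hu
  obtain ⟨b, hb⟩ := hv
  obtain rfl : v = 1 + fM * b := by linarith
  exact ⟨2 * b + fM * b ^ 2 + 12 * fM * a ^ 2, by unfold fW; ring⟩
theorem fR1_mod (u v : ℤ) (hu : fM ∣ u) (hv : fM ∣ v - 1) : fM ∣ fR1 u v - (-263) := by
  obtain ⟨a, rfl⟩ := hu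
  obtain ⟨b, hb⟩ := hv
  obtain rfl : v = 1 + fM * b := by linarith
  exact ⟨-263 * (2 * b + fM * b ^ 2) - 77 * a * (1 + fM * b) + 690 * fM * a ^ 2,
    by unfold fR1; ring⟩
theorem fR2_mod (u v : ℤ) (hu : fM ∣ u) (hv : fM ∣ v - 1) : fM ∣ fR2 u v - (-13) := by
  obtain ⟨a, rfl⟩ := hu
  obtain ⟨b, hb⟩ := hv
  obtain rfl : v = 1 + fM * b := by linarith
  exact ⟨-13 * (2 * b + fM * b ^ 2) - 923 * a * (1 + fM * b) - 2310 * fM * a ^ 2,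
    by unfold fR2; ring⟩
theorem fG_mod (u v : ℤ) (hu : fM ∣ u) (hv : fM ∣ v - 1) : fM ∣ fG u v - (-240347) := by
  have h1 : fG u v - (-240347) = u * (- 17767750 * v ^ 5 + 867410541 * u * v ^ 4
    + 710710000 * u ^ 2 * v ^ 3 - 7112334168 * u ^ 3 * v ^ 2 - 2558556000 * u ^ 4 * v
    + 13601688912 * u ^ 5) + (v - 1) * (-240347 * (v ^ 5 + v ^ 4 + v ^ 3 + v ^ 2 + v + 1)) := by
    unfold fG; ring
  rw [h1]
  exact dvd_add (hu.mul_right _) (hv.mul_right _)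
theorem fF_mod (u v : ℤ) (hu : fM ∣ u) (hv : fM ∣ v - 1) : fM ∣ fF u v - (-240347) := by
  have : fF u v - (-240347) = (fW u v - 1) * fG u v + (fG u v - (-240347)) := by unfold fF; ring
  rw [this]
  exact dvd_add ((fW_mod u v hu hv).mul_right _) (fG_mod u v hu hv)

/-- primes dividing both `w` and `r` divide `fM`. -/
theorem fcoprime_T (r : ℤ → ℤ → ℤ) (c0 : ℤ) (hc0 : c0 = -263 ∨ c0 = -13 ∨ c0 = -240347)
    (hbez : ∀ u v : ℤ, ∃ s t s' t', s * fW u v + t * r u v = 619286 * v ^ 3 ∧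
      s' * fW u v + t' * r u v = 24 * 619286 * u ^ 3)
    (u v : ℤ) (huv : IsCoprime u v) (hu : fM ∣ u) (hv : fM ∣ v - 1) (hr : fM ∣ r u v - c0) :
    IsCoprime (fW u v * fA (r u v) (fW u v) ^ 2 + 2 * r u v ^ 7) (r u v) := by
  apply isCoprime_of_primes
  intro p hp h1 h2
  have hpi : Prime (p : ℤ) := Nat.prime_iff_prime_int.mp hp
  have hnM : ¬ (p : ℤ) ∣ fM := fun h => fcop u v hu hv c0 hc0 _ hr p hp h h2
  have hW : ¬ (p : ℤ) ∣ fW u v := by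
    intro hW
    obtain ⟨s, t, s', t', e1, e2⟩ := hbez u v
    have k1 : (p : ℤ) ∣ 619286 * v ^ 3 := by
      rw [← e1]; exact dvd_add (hW.mul_left _) (h2.mul_left _)
    have k2 : (p : ℤ) ∣ 24 * 619286 * u ^ 3 := by
      rw [← e2]; exact dvd_add (hW.mul_left _) (h2.mul_left _)
    have n1 : ¬ (p : ℤ) ∣ 619286 := fun h => hnM (prime_dvd_fM p hp _ (by norm_num) h (by
      refine dvd_trans ?_ (dvd_pow_self fM (by norm_num : 50 ≠ 0))
      unfold fM; norm_num))
    have n2 : ¬ (p : ℤ) ∣ 24 := fun h => hnM (prime_dvd_fM p hp _ (by norm_num) h (by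
      refine dvd_trans ?_ (pow_dvd_pow fM (by norm_num : 3 ≤ 50))
      unfold fM; norm_num))
    have pv : (p : ℤ) ∣ v := hpi.dvd_of_dvd_pow ((hpi.dvd_or_dvd k1).resolve_left n1)
    have pu : (p : ℤ) ∣ u := by
      rw [mul_assoc] at k2
      exact hpi.dvd_of_dvd_pow ((hpi.dvd_or_dvd ((hpi.dvd_or_dvd k2).resolve_left n2)).resolve_left n1)
    exact hpi.not_unit (huv.isUnit_of_dvd' pu pv)
  have h3 : (p : ℤ) ∣ fW u v * fA (r u v) (fW u v) ^ 2 := by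
    have := dvd_sub h1 ((h2.trans (dvd_pow_self _ (by norm_num : 7 ≠ 0))).mul_left 2)
    simpa using this
  have h4 := hpi.dvd_of_dvd_pow ((hpi.dvd_or_dvd h3).resolve_left hW)
  have h5 : (p : ℤ) ∣ 28672 * fW u v ^ 3 := by
    have : 28672 * fW u v ^ 3 = fA (r u v) (fW u v) - r u v * (11136 * fW u v ^ 2 +
      1255 * fW u v * r u v + 37 * r u v ^ 2) := by unfold fA; ring
    rw [this]
    exact dvd_sub h4 (h2.mul_right _)
  have n3 : ¬ (p : ℤ) ∣ 28672 := fun h => hnM (prime_dvd_fM p hp _ (by norm_num) h (by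
      refine dvd_trans ?_ (pow_dvd_pow fM (by norm_num : 12 ≤ 50))
      unfold fM; norm_num))
  exact hW (hpi.dvd_of_dvd_pow ((hpi.dvd_or_dvd h5).resolve_left n3))

theorem indep_q (q n : ℕ) [Fact q.Prime] (hq : q = 7 * n + 1) (hn : Even n) (h2 : (2 : ZMod q) ≠ 0)
    (k1 k2 Y : ZMod q) (hk1 : k1 ≠ 0) (hk2 : k2 ≠ 0) (ε : ℤ) (hε : ε = 1 ∨ ε = -1) (i j : ℕ)
    (h : 2 ^ 7 * k1 ^ i * k2 ^ j = (ε : ZMod q) * 4 ^ (i + j) * Y ^ 7) :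
    (k1 ^ n) ^ i * (k2 ^ n) ^ j = (4 ^ n) ^ (i + j) := by
  have hY : Y ≠ 0 := by
    rintro rfl
    rw [zero_pow (by norm_num), mul_zero] at h
    exact mul_ne_zero (mul_ne_zero (pow_ne_zero _ h2) (pow_ne_zero _ hk1)) (pow_ne_zero _ hk2) h
  have hp : ∀ z : ZMod q, z ≠ 0 → z ^ (7 * n) = 1 := by
    intro z hz
    have := ZMod.pow_card_sub_one_eq_one hz
    rwa [show q - 1 = 7 * n by omega] at this
  have he : (ε : ZMod q) ^ n = 1 := by
    rcases hε with rfl | rfl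
    · simp
    · simp [hn]
  have h' := congrArg (· ^ n) h
  simp only [mul_pow, ← pow_mul] at h'
  rw [hp 2 h2, hp Y hY, he] at h'
  simp only [← pow_mul]
  rw [mul_comm n i, mul_comm n j, mul_comm n (i + j)]
  simpa using h'

theorem indep_zsqrtd (q : ℕ) [Fact q.Prime] (d s : ℤ) (W r1 r2 g A1 B1 A2 B2 : ℤ) (ρ : ZMod q)
    (hF : W * g = d * s ^ 2) (hρ : ρ * ρ = (W : ZMod q) * g) (hρ0 : ρ ≠ 0) :
    ∃ ψ : ℤ√d →+* ZMod q, (ψ ⟨2 * (W * A1 ^ 2 + 2 * r1 ^ 7), 2 * A1 * B1 * s⟩ =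
        2 * (W * A1 ^ 2 + 2 * r1 ^ 7) + 2 * A1 * B1 * ρ) ∧
      (ψ ⟨2 * (W * A2 ^ 2 + 2 * r2 ^ 7), 2 * A2 * B2 * s⟩ =
        2 * (W * A2 ^ 2 + 2 * r2 ^ 7) + 2 * A2 * B2 * ρ) := by
  have hF' : (W : ZMod q) * g = d * s ^ 2 := by exact_mod_cast congrArg (Int.cast : ℤ → ZMod q) hF
  have hs : (s : ZMod q) ≠ 0 := by
    intro h
    rw [h] at hF'
    apply hρ0
    have : ρ * ρ = 0 := by rw [hρ, hF']; ring
    exact mul_self_eq_zero.mp this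
  refine ⟨Zsqrtd.lift ⟨ρ / s, ?_⟩, ?_, ?_⟩
  · field_simp
    rw [sq, hρ, hF']; ring
  · rw [Zsqrtd.lift_apply_apply]
    push_cast
    field_simp
  · rw [Zsqrtd.lift_apply_apply]
    push_cast
    field_simp

theorem fact_prime_29 : Fact (Nat.Prime 29) := ⟨by norm_num⟩
theorem fact_prime_43 : Fact (Nat.Prime 43) := ⟨by norm_num⟩
attribute [local instance] fact_prime_29 fact_prime_43

theorem fam_indep (d s u v : ℤ) (hu : fM ∣ u) (hv : fM ∣ v - 1) (hF : fW u v * fG u v = d * s ^ 2) :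
    ∀ i j : ℕ, i < 7 → j < 7 → ∀ y : ℤ√d, ∀ ε : ℤ, (ε = 1 ∨ ε = -1) →
      2 ^ 7 * (⟨2 * (fW u v * fA (fR1 u v) (fW u v) ^ 2 + 2 * fR1 u v ^ 7),
          2 * fA (fR1 u v) (fW u v) * fB (fR1 u v) (fW u v) * s⟩ : ℤ√d) ^ i *
        (⟨2 * (fW u v * fA (fR2 u v) (fW u v) ^ 2 + 2 * fR2 u v ^ 7),
          2 * fA (fR2 u v) (fW u v) * fB (fR2 u v) (fW u v) * s⟩ : ℤ√d) ^ j
        = ε * 4 ^ (i + j) * y ^ 7 → i = 0 ∧ j = 0 := by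
  intro i j hi hj y ε hε h
  have cast : ∀ (q : ℕ), (q : ℤ) ∣ fM → ((fW u v : ZMod q) = 1 ∧ (fG u v : ZMod q) = -240347 ∧
      (fR1 u v : ZMod q) = -263 ∧ (fR2 u v : ZMod q) = -13) := by
    intro q hq
    refine ⟨?_, ?_, ?_, ?_⟩
    · have := (ZMod.intCast_zmod_eq_zero_iff_dvd _ q).mpr (hq.trans (fW_mod u v hu hv))
      push_cast at this
      linear_combination this
    · have := (ZMod.intCast_zmod_eq_zero_iff_dvd _ q).mpr (hq.trans (fG_mod u v hu hv))
      push_cast at this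
      linear_combination this
    · have := (ZMod.intCast_zmod_eq_zero_iff_dvd _ q).mpr (hq.trans (fR1_mod u v hu hv))
      push_cast at this
      linear_combination this
    · have := (ZMod.intCast_zmod_eq_zero_iff_dvd _ q).mpr (hq.trans (fR2_mod u v hu hv))
      push_cast at this
      linear_combination this
  obtain ⟨c1, c2, c3, c4⟩ := cast 29 (by unfold fM; norm_num)
  obtain ⟨e1, e2, e3, e4⟩ := cast 43 (by unfold fM; norm_num)
  obtain ⟨ψ, hψ1, hψ2⟩ := indep_zsqrtd 29 d s (fW u v) (fR1 u v) (fR2 u v) (fG u v)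
    (fA (fR1 u v) (fW u v)) (fB (fR1 u v) (fW u v)) (fA (fR2 u v) (fW u v)) (fB (fR2 u v) (fW u v))
    11 hF (by rw [c1, c2]; decide) (by decide)
  obtain ⟨χ, hχ1, hχ2⟩ := indep_zsqrtd 43 d s (fW u v) (fR1 u v) (fR2 u v) (fG u v)
    (fA (fR1 u v) (fW u v)) (fB (fR1 u v) (fW u v)) (fA (fR2 u v) (fW u v)) (fB (fR2 u v) (fW u v))
    18 hF (by rw [e1, e2]; decide) (by decide)
  have h29 := congrArg ψ h
  have h43 := congrArg χ h
  simp only [map_mul, map_pow, map_ofNat, map_intCast] at h29 h43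
  rw [hψ1, hψ2] at h29
  rw [hχ1, hχ2] at h43
  unfold fA fB at h29 h43
  push_cast at h29 h43
  rw [c1, c3, c4] at h29
  rw [e1, e3, e4] at h43
  replace h29 := indep_q 29 4 rfl (by decide) (by decide) _ _ (ψ y) (by decide) (by decide) ε hε i j h29
  replace h43 := indep_q 43 6 rfl (by decide) (by decide) _ _ (χ y) (by decide) (by decide) ε hε i j h43
  clear hψ1 hψ2 hχ1 hχ2 h
  interval_cases i <;> interval_cases j <;> first | exact ⟨rfl, rfl⟩ | (exfalso; revert h29; decide) | (exfalso; revert h43; decide)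

theorem fam_class (K : Type) [Field K] [NumberField K] (d : ℤ) (hd : d < -4) (hsq : Squarefree d)
    (x : K) (hx : x * x = (d : K)) (hfr : Module.finrank ℚ K = 2) (u v s : ℤ)
    (huv : IsCoprime u v) (hu : fM ∣ u) (hv : fM ∣ v - 1) (hF : fF u v = d * s ^ 2) :
    ∃ f : Multiplicative (ZMod 7 × ZMod 7) →* ClassGroup (𝓞 K), Function.Injective f := by
  unfold fF at hF
  have nz : ∀ r c0 : ℤ, (c0 = -263 ∨ c0 = -13 ∨ c0 = -240347) → fM ∣ r - c0 → r ≠ 0 := by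
    rintro r c0 hc hr rfl
    exact fcop u v hu hv c0 hc 0 hr 2 (by norm_num) (by unfold fM; norm_num) (dvd_zero _)
  refine qf_class K d hd hsq x hx hfr (fW u v * fA (fR1 u v) (fW u v) ^ 2 + 2 * fR1 u v ^ 7)
    (2 * fA (fR1 u v) (fW u v) * fB (fR1 u v) (fW u v) * s) (fR1 u v)
    (fW u v * fA (fR2 u v) (fW u v) ^ 2 + 2 * fR2 u v ^ 7)
    (2 * fA (fR2 u v) (fW u v) * fB (fR2 u v) (fW u v) * s) (fR2 u v)
    (fnorm _ _ _ d s (fhat1 u v) hF) (fnorm _ _ _ d s (fhat2 u v) hF)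
    (fcoprime_T fR1 (-263) (by tauto) ?_ u v huv hu hv (fR1_mod u v hu hv))
    (fcoprime_T fR2 (-13) (by tauto) ?_ u v huv hu hv (fR2_mod u v hu hv))
    (nz _ (-263) (by tauto) (fR1_mod u v hu hv)) (nz _ (-13) (by tauto) (fR2_mod u v hu hv))
    (fam_indep d s u v hu hv hF)
  · intro u v
    refine ⟨113537 * v - 26565 * u, -1923 * v + 462 * u, 1017427 * u + 20251 * v, 3846 * u + 77 * v, ?_, ?_⟩
    · unfold fW fR1; ring
    · unfold fW fR1; ring
  · intro u v
    refine ⟨633287 * v + 1066065 * u, 1077 * v + 5538 * u, 823927 * u + 11999 * v, -2154 * u + 923 * v, ?_, ?_⟩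
    · unfold fW fR2; ring
    · unfold fW fR2; ring

/-! ## Arithmetic of the form `F` -/

def fFu (u v : ℤ) : ℤ := (-17767750) * v ^ 7
    + (1729052754) * u * v ^ 6
    + (1492491000) * u ^ 2 * v ^ 5
    + (13186369296) * u ^ 3 * v ^ 4
    + (29849820000) * u ^ 4 * v ^ 3
    + (-430477926624) * u ^ 5 * v ^ 2
    + (-214918704000) * u ^ 6 * v
    + (1305762135552) * u ^ 7
def fS (u v : ℤ) : ℤ := (-764340089479359402077933297601391980348744432) * v ^ 6
    + (-709187502234556286293659333712088010493635750) * u * v ^ 5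
    + (-5743638970314439364749030984905476886746794974) * u ^ 2 * v ^ 4
    + (-11235009338466166292393679195855887091008820000) * u ^ 3 * v ^ 3
    + (188208805762992422222028544112570870426728533528) * u ^ 4 * v ^ 2
    + (88579039937568382813480397194411512330967404000) * u ^ 5 * v
    + (-569651045835665289634851421158818683510275599232) * u ^ 6
def fT (u v : ℤ) : ℤ := (-4048483159284210761132961061369657676269000) * v ^ 7
    + (379958844387357523083037469854138084940938659) * u * v ^ 6
    + (231628985139622007329119854947452647774508750) * u ^ 2 * v ^ 5
    + (1439841000774167916717196797142747491759306267) * u ^ 3 * v ^ 4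
    + (2308568501734095327179259109454822451622842000) * u ^ 4 * v ^ 3
    + (-31366331566528714723600988072437279584910269432) * u ^ 5 * v ^ 2
    + (-12746671268010586521035310004025456235822132000) * u ^ 6 * v
    + (71206380729458161204356427644852335438784449904) * u ^ 7
theorem fST (u v : ℤ) : fS u v * fF u v + fT u v * fFu u v = 255639284139467629962345203176752493478408202747904 * v ^ 14 := by
  unfold fS fT fF fFu fW fG; ring
def fR (x h z : ℤ) : ℤ := (864526377) * z ^ 6
    + (1492491000) * x * z ^ 5
    + (497497000) * h * z ^ 5
    + (19779553944) * x ^ 2 * z ^ 4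
    + (13186369296) * x * h * z ^ 4
    + (3296592324) * h ^ 2 * z ^ 4
    + (59699640000) * x ^ 3 * z ^ 3
    + (59699640000) * x ^ 2 * h * z ^ 3
    + (29849820000) * x * h ^ 2 * z ^ 3
    + (5969964000) * h ^ 3 * z ^ 3
    + (-1076194816560) * x ^ 4 * z ^ 2
    + (-1434926422080) * x ^ 3 * h * z ^ 2
    + (-1076194816560) * x ^ 2 * h ^ 2 * z ^ 2
    + (-430477926624) * x * h ^ 3 * z ^ 2
    + (-71746321104) * h ^ 4 * z ^ 2
    + (-644756112000) * x ^ 5 * z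
    + (-1074593520000) * x ^ 4 * h * z
    + (-1074593520000) * x ^ 3 * h ^ 2 * z
    + (-644756112000) * x ^ 2 * h ^ 3 * z
    + (-214918704000) * x * h ^ 4 * z
    + (-30702672000) * h ^ 5 * z
    + (4570167474432) * x ^ 6
    + (9140334948864) * x ^ 5 * h
    + (11425418686080) * x ^ 4 * h ^ 2
    + (9140334948864) * x ^ 3 * h ^ 3
    + (4570167474432) * x ^ 2 * h ^ 4
    + (1305762135552) * x * h ^ 5
    + (163220266944) * h ^ 6
theorem fTaylor (x h z : ℤ) : fF (x + h) z = fF x z + h * (fFu x z + h * fR x h z) := by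
  unfold fR fF fFu fW fG; ring
theorem fWG (u v : ℤ) : ((118542222406490377) * v ^ 5
    + (-15411933639852750) * u * v ^ 4
    + (-651235413631003671) * u ^ 2 * v ^ 3
    + (252740350826964000) * u ^ 3 * v ^ 2
    + (1129374086954432508) * u ^ 4 * v
    + (-725014224498564000) * u ^ 5) * fW u v
    + ((-876063033) * v
    + (639639000) * u ^ 1) * fG u v = 118752781528282828 * v ^ 7 := by
  unfold fW fG; ring

/-- The points we use. -/
structure FPt (L : ℤ) (P : ℤ × ℤ) : Prop where
  cop : IsCoprime P.1 P.2
  hu : fM ∣ P.1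
  hv : fM ∣ P.2 - 1
  u1 : 22 * L ≤ P.1
  u2 : P.1 ≤ 23 * L
  v1 : 42 * L ≤ P.2
  v2 : P.2 ≤ 44 * L

theorem fG_v (u v : ℤ) (h1 : v ≤ 2 * u) (h2 : 42 * u ≤ 23 * v) :
    10 ^ 7 * v ^ 6 ≤ - fG u v ∧ - fG u v ≤ 10 ^ 8 * v ^ 6 := by
  obtain ⟨s, hs⟩ : ∃ s, s = 2 * u - v := ⟨_, rfl⟩
  obtain ⟨t, ht⟩ : ∃ t, t = 23 * v - 42 * u := ⟨_, rfl⟩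
  have s0 : 0 ≤ s := by omega
  have t0 : 0 ≤ t := by omega
  have k : 4096 * (- fG u v) = 175275950392101888 * s ^ 6 + 47194815109800960 * s ^ 5 * t
      + 5179575454265088 * s ^ 4 * t ^ 2 + 296349984335360 * s ^ 3 * t ^ 3
      + 9300540789504 * s ^ 2 * t ^ 4 + 151096453120 * s * t ^ 5 + 984461312 * t ^ 6 := by
    subst hs ht; unfold fG; ring
  have k2 : 4096 * v ^ 6 = (42 * s + 2 * t) ^ 6 := by
    subst hs ht; ring
  constructor
  · have : 0 ≤ 4096 * (- fG u v) - 10 ^ 7 * (4096 * v ^ 6) := by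
      rw [k, k2]; ring_nf; positivity
    linarith
  · have : 0 ≤ 10 ^ 8 * (4096 * v ^ 6) - 4096 * (- fG u v) := by
      rw [k, k2]; ring_nf; positivity
    linarith

theorem FPt.G_bd {L : ℤ} {P : ℤ × ℤ} (h : FPt L P) (hL : 1 ≤ L) :
    L ^ 6 ≤ - fG P.1 P.2 ∧ - fG P.1 P.2 ≤ 10 ^ 18 * L ^ 6 := by
  obtain ⟨h1, h2⟩ := fG_v P.1 P.2 (by linarith [h.v2, h.u1]) (by linarith [h.v1, h.u2])
  have a : (42 * L) ^ 6 ≤ P.2 ^ 6 := pow_le_pow_left₀ (by linarith) h.v1 6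
  have b : P.2 ^ 6 ≤ (44 * L) ^ 6 := pow_le_pow_left₀ (by linarith [h.v1]) h.v2 6
  have c : 0 ≤ L ^ 6 := by positivity
  rw [mul_pow] at a b
  constructor <;> nlinarith

theorem FPt.W_bd {L : ℤ} {P : ℤ × ℤ} (h : FPt L P) (hL : 1 ≤ L) :
    L ^ 2 ≤ fW P.1 P.2 ∧ fW P.1 P.2 ≤ 10 ^ 4 * L ^ 2 := by
  have a : (42 * L) ^ 2 ≤ P.2 ^ 2 := pow_le_pow_left₀ (by linarith) h.v1 2
  have b : P.2 ^ 2 ≤ (44 * L) ^ 2 := pow_le_pow_left₀ (by linarith [h.v1]) h.v2 2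
  have b' : P.1 ^ 2 ≤ (23 * L) ^ 2 := pow_le_pow_left₀ (by linarith [h.u1]) h.u2 2
  unfold fW
  constructor <;> nlinarith [sq_nonneg P.1, sq_nonneg L]

theorem FPt.F_bd {L : ℤ} {P : ℤ × ℤ} (h : FPt L P) (hL : 1 ≤ L) :
    L ^ 8 ≤ - fF P.1 P.2 ∧ - fF P.1 P.2 ≤ 10 ^ 22 * L ^ 8 := by
  obtain ⟨g1, g2⟩ := h.G_bd hL
  obtain ⟨w1, w2⟩ := h.W_bd hL
  have e : - fF P.1 P.2 = fW P.1 P.2 * (- fG P.1 P.2) := by unfold fF; ring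
  have l2 : 0 ≤ L ^ 2 := by positivity
  have l6 : 0 ≤ L ^ 6 := by positivity
  rw [e]
  constructor
  · calc L ^ 8 = L ^ 2 * L ^ 6 := by ring
      _ ≤ _ := mul_le_mul w1 g1 l6 (by linarith)
  · calc _ ≤ (10 ^ 4 * L ^ 2) * (10 ^ 18 * L ^ 6) := mul_le_mul w2 g2 (by linarith) (by linarith)
      _ = _ := by ring

theorem FPt.F_neg {L : ℤ} {P : ℤ × ℤ} (h : FPt L P) (hL : 1 ≤ L) : fF P.1 P.2 < 0 := by
  have := (h.F_bd hL).1
  have : 0 < L ^ 8 := by positivity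
  linarith

theorem FPt.not_M {L : ℤ} {P : ℤ × ℤ} (h : FPt L P) (p : ℕ) (hp : p.Prime)
    (hF : (p : ℤ) ∣ fF P.1 P.2) : ¬ (p : ℤ) ∣ fM := fun hM =>
  fcop P.1 P.2 h.hu h.hv (-240347) (by tauto) _ (fF_mod P.1 P.2 h.hu h.hv) p hp hM hF

theorem FPt.not_v {L : ℤ} {P : ℤ × ℤ} (h : FPt L P) (p : ℕ) (hp : p.Prime)
    (hF : (p : ℤ) ∣ fF P.1 P.2) : ¬ (p : ℤ) ∣ P.2 := by
  intro hv
  have hpi : Prime (p : ℤ) := Nat.prime_iff_prime_int.mp hp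
  have hnM := h.not_M p hp hF
  have e : ∀ u v : ℤ, 163220266944 * u ^ 8 = fF u v - v * (-240347 * v ^ 7 - 17767750 * u * v ^ 6
    + 864526377 * u ^ 2 * v ^ 5 + 497497000 * u ^ 3 * v ^ 4 + 3296592324 * u ^ 4 * v ^ 3
    + 5969964000 * u ^ 5 * v ^ 2 - 71746321104 * u ^ 6 * v - 30702672000 * u ^ 7) := by
    intro u v; unfold fF fW fG; ring
  have h1 : (p : ℤ) ∣ 163220266944 * P.1 ^ 8 := by
    rw [e P.1 P.2]; exact dvd_sub hF (hv.mul_right _)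
  have n1 : ¬ (p : ℤ) ∣ 163220266944 := fun h => hnM (prime_dvd_fM p hp _ (by norm_num) h (by
      refine dvd_trans ?_ (pow_dvd_pow fM (by norm_num : 6 ≤ 50))
      unfold fM; norm_num))
  have pu := hpi.dvd_of_dvd_pow ((hpi.dvd_or_dvd h1).resolve_left n1)
  exact hpi.not_isUnit (h.cop.isUnit_of_dvd' pu hv)

theorem FPt.not_WG {L : ℤ} {P : ℤ × ℤ} (h : FPt L P) (p : ℕ) (hp : p.Prime)
    (hW : (p : ℤ) ∣ fW P.1 P.2) : ¬ (p : ℤ) ∣ fG P.1 P.2 := by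
  intro hG
  have hpi : Prime (p : ℤ) := Nat.prime_iff_prime_int.mp hp
  have hF : (p : ℤ) ∣ fF P.1 P.2 := hW.mul_right _
  have e := fWG P.1 P.2
  have h1 : (p : ℤ) ∣ 118752781528282828 * P.2 ^ 7 := by
    rw [← e]; exact dvd_add (hW.mul_left _) (hG.mul_left _)
  have n1 : ¬ (p : ℤ) ∣ 118752781528282828 :=
    fun h' => h.not_M p hp hF (prime_dvd_fM p hp _ (by norm_num) h' (by
      refine dvd_trans ?_ (pow_dvd_pow fM (by norm_num : 3 ≤ 50))
      unfold fM; norm_num))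
  exact h.not_v p hp hF (hpi.dvd_of_dvd_pow ((hpi.dvd_or_dvd h1).resolve_left n1))

theorem fF_hom (k u v : ℤ) : fF (k * u) (k * v) = k ^ 8 * fF u v := by
  unfold fF fW fG; ring
theorem fFu_hom (k u v : ℤ) : fFu (k * u) (k * v) = k ^ 7 * fFu u v := by
  unfold fFu; ring

/-- Hensel-type statement. -/
theorem FPt.hensel {L : ℤ} {P Q : ℤ × ℤ} (hP : FPt L P) (hQ : FPt L Q) (p j : ℕ) (hp : p.Prime)
    (hj : 1 ≤ j) (h1 : (p : ℤ) ^ j ∣ fF P.1 P.2) (h2 : (p : ℤ) ^ j ∣ fF Q.1 Q.2)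
    (hD : (p : ℤ) ∣ P.1 * Q.2 - Q.1 * P.2) : (p : ℤ) ^ j ∣ P.1 * Q.2 - Q.1 * P.2 := by
  have hpi : Prime (p : ℤ) := Nat.prime_iff_prime_int.mp hp
  have hpj : (p : ℤ) ∣ (p : ℤ) ^ j := dvd_pow_self _ (by omega)
  have hF1 := hpj.trans h1
  have hnM := hP.not_M p hp hF1
  have hnu : ¬ (p : ℤ) ∣ fFu P.1 P.2 := by
    intro hu
    have e := fST P.1 P.2
    have h3 := dvd_add (hF1.mul_left (fS P.1 P.2)) (hu.mul_left (fT P.1 P.2))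
    rw [e] at h3
    have n1 : ¬ (p : ℤ) ∣ 255639284139467629962345203176752493478408202747904 :=
      fun h' => hnM (prime_dvd_fM p hp _ (by norm_num) h' (by
        refine dvd_trans ?_ (pow_dvd_pow fM (by norm_num : 33 ≤ 50))
        unfold fM; norm_num))
    exact hP.not_v p hp hF1 (hpi.dvd_of_dvd_pow ((hpi.dvd_or_dvd h3).resolve_left n1))
  obtain ⟨D, hDD⟩ : ∃ D, D = P.1 * Q.2 - Q.1 * P.2 := ⟨_, rfl⟩
  rw [← hDD] at hD ⊢
  have t := fTaylor (Q.2 * P.1) (-D) (Q.2 * P.2)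
  rw [show Q.2 * P.1 + -D = P.2 * Q.1 by rw [hDD]; ring, fF_hom, fFu_hom,
    show Q.2 * P.2 = P.2 * Q.2 by ring, fF_hom] at t
  have k : (p : ℤ) ^ j ∣ D * (Q.2 ^ 7 * fFu P.1 P.2 +
      -D * fR (Q.2 * P.1) (-D) (P.2 * Q.2)) := by
    have : D * (Q.2 ^ 7 * fFu P.1 P.2 + -D * fR (Q.2 * P.1) (-D) (P.2 * Q.2)) =
      Q.2 ^ 8 * fF P.1 P.2 - P.2 ^ 8 * fF Q.1 Q.2 := by linarith
    rw [this]
    exact dvd_sub (h1.mul_left _) (h2.mul_left _)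
  refine (IsCoprime.pow_left ?_).dvd_of_dvd_mul_right k
  rw [Prime.coprime_iff_not_dvd hpi]
  intro h4
  have h5 : (p : ℤ) ∣ Q.2 ^ 7 * fFu P.1 P.2 := by
    have := dvd_add h4 (hD.mul_right (fR (Q.2 * P.1) (-D) (P.2 * Q.2)))
    have e : Q.2 ^ 7 * fFu P.1 P.2 + -D * fR (Q.2 * P.1) (-D) (P.2 * Q.2) +
      D * fR (Q.2 * P.1) (-D) (P.2 * Q.2) = Q.2 ^ 7 * fFu P.1 P.2 := by ring
    rwa [e] at this
  rcases hpi.dvd_or_dvd h5 with h6 | h6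
  · exact hQ.not_v p hp (hpj.trans h2) (hpi.dvd_of_dvd_pow h6)
  · exact hnu h6

/-- The polynomial modulo `p`. -/
noncomputable def fpoly (p : ℕ) : Polynomial (ZMod p) :=
  Polynomial.C (163220266944 : ZMod p) * Polynomial.X ^ 8 +
  (Polynomial.C (-30702672000) * Polynomial.X ^ 7 + Polynomial.C (-71746321104) * Polynomial.X ^ 6
  + Polynomial.C 5969964000 * Polynomial.X ^ 5 + Polynomial.C 3296592324 * Polynomial.X ^ 4
  + Polynomial.C 497497000 * Polynomial.X ^ 3 + Polynomial.C 864526377 * Polynomial.X ^ 2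
  + Polynomial.C (-17767750) * Polynomial.X + Polynomial.C (-240347))

theorem fpoly_natDegree (p : ℕ) : (fpoly p).natDegree ≤ 8 := by
  unfold fpoly; compute_degree

theorem fpoly_ne (p : ℕ) (hp : p.Prime) (hM : ¬ (p : ℤ) ∣ fM) : fpoly p ≠ 0 := by
  intro h
  have h8 : (fpoly p).coeff 8 = 163220266944 := by
    unfold fpoly
    simp [Polynomial.coeff_X, Polynomial.coeff_X_pow, Polynomial.coeff_C]
  rw [h, Polynomial.coeff_zero] at h8
  have : ((163220266944 : ℤ) : ZMod p) = 0 := by push_cast; exact h8.symm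
  rw [ZMod.intCast_zmod_eq_zero_iff_dvd] at this
  exact hM (prime_dvd_fM p hp _ (by norm_num) this (by
      refine dvd_trans ?_ (pow_dvd_pow fM (by norm_num : 6 ≤ 50))
      unfold fM; norm_num))

theorem FPt.root {L : ℤ} {P : ℤ × ℤ} (h : FPt L P) (p : ℕ) [Fact p.Prime]
    (hF : (p : ℤ) ∣ fF P.1 P.2) :
    ((P.1 : ZMod p) / (P.2 : ZMod p)) ∈ (fpoly p).roots.toFinset := by
  have hp : p.Prime := Fact.out
  have hnv := h.not_v p hp hF
  have hv : (P.2 : ZMod p) ≠ 0 := by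
    rwa [Ne, ZMod.intCast_zmod_eq_zero_iff_dvd]
  rw [Multiset.mem_toFinset, Polynomial.mem_roots (fpoly_ne p hp (h.not_M p hp hF)),
    Polynomial.IsRoot.def]
  have h0 : ((fF P.1 P.2 : ℤ) : ZMod p) = 0 := by rwa [ZMod.intCast_zmod_eq_zero_iff_dvd]
  unfold fF fW fG at h0
  push_cast at h0
  have : (fpoly p).eval ((P.1 : ZMod p) / (P.2 : ZMod p)) * (P.2 : ZMod p) ^ 8 = 0 := by
    rw [← h0]
    unfold fpoly
    simp only [Polynomial.eval_add, Polynomial.eval_mul, Polynomial.eval_C, Polynomial.eval_pow,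
      Polynomial.eval_X]
    field_simp
    ring
  exact (mul_eq_zero.mp this).resolve_right (pow_ne_zero _ hv)

theorem FPt.same_root {L : ℤ} {P Q : ℤ × ℤ} (hP : FPt L P) (hQ : FPt L Q) (p : ℕ) [Fact p.Prime]
    (h1 : (p : ℤ) ∣ fF P.1 P.2) (h2 : (p : ℤ) ∣ fF Q.1 Q.2)
    (h : (P.1 : ZMod p) / (P.2 : ZMod p) = (Q.1 : ZMod p) / (Q.2 : ZMod p)) :
    (p : ℤ) ∣ P.1 * Q.2 - Q.1 * P.2 := by
  have hp : p.Prime := Fact.out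
  have hv : (P.2 : ZMod p) ≠ 0 := by
    rw [Ne, ZMod.intCast_zmod_eq_zero_iff_dvd]; exact hP.not_v p hp h1
  have hv' : (Q.2 : ZMod p) ≠ 0 := by
    rw [Ne, ZMod.intCast_zmod_eq_zero_iff_dvd]; exact hQ.not_v p hp h2
  rw [← ZMod.intCast_zmod_eq_zero_iff_dvd]
  push_cast
  rw [div_eq_div_iff hv hv'] at h
  linear_combination h

theorem fpoly_card (p : ℕ) [Fact p.Prime] : (fpoly p).roots.toFinset.card ≤ 8 :=
  (Multiset.toFinset_card_le _).trans ((Polynomial.card_roots' _).trans (fpoly_natDegree p))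

/-- distinct points are separated -/
theorem FPt.eq_of_det {L : ℤ} {P Q : ℤ × ℤ} (hP : FPt L P) (hQ : FPt L Q) (hL : 1 ≤ L)
    (h : P.1 * Q.2 - Q.1 * P.2 = 0) : P = Q := by
  have e : P.1 * Q.2 = Q.1 * P.2 := by linarith
  have a : P.1 ∣ Q.1 := hP.cop.dvd_of_dvd_mul_right (Dvd.intro _ e)
  have b : Q.1 ∣ P.1 := hQ.cop.dvd_of_dvd_mul_right (Dvd.intro _ e.symm)
  have pu : 0 < P.1 := by linarith [hP.u1]
  have qu : 0 < Q.1 := by linarith [hQ.u1]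
  have e1 : P.1 = Q.1 := Int.dvd_antisymm pu.le qu.le a b
  have e2 : P.2 = Q.2 := by
    rw [e1] at e
    exact (mul_left_cancel₀ qu.ne' e).symm
  exact Prod.ext e1 e2

theorem FPt.det_lt {L : ℤ} {P Q : ℤ × ℤ} (hP : FPt L P) (hQ : FPt L Q) (hL : 1 ≤ L) :
    |P.1 * Q.2 - Q.1 * P.2| ≤ 1012 * L ^ 2 := by
  have h1 := hP.u1; have h2 := hP.u2; have h3 := hP.v1; have h4 := hP.v2
  have g1 := hQ.u1; have g2 := hQ.u2; have g3 := hQ.v1; have g4 := hQ.v2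
  rw [abs_le]
  have a1 : P.1 * Q.2 ≤ (23 * L) * (44 * L) := mul_le_mul h2 g4 (by linarith) (by linarith)
  have a2 : Q.1 * P.2 ≤ (23 * L) * (44 * L) := mul_le_mul g2 h4 (by linarith) (by linarith)
  have a3 : 0 ≤ P.1 * Q.2 := mul_nonneg (by linarith) (by linarith)
  have a4 : 0 ≤ Q.1 * P.2 := mul_nonneg (by linarith) (by linarith)
  constructor <;> nlinarith

/-- few points with pairwise determinants divisible by `q` -/
theorem sep_card {L : ℤ} (hL : 1 ≤ L) (s : Finset (ℤ × ℤ)) (hs : ∀ P ∈ s, FPt L P) (q : ℕ)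
    (hq : 0 < q) (h : ∀ P ∈ s, ∀ Q ∈ s, (q : ℤ) ∣ P.1 * Q.2 - Q.1 * P.2) :
    (s.card : ℝ) ≤ 2 + 2000 * (L : ℝ) ^ 2 / q := by
  have hLr : (1 : ℝ) ≤ L := by exact_mod_cast hL
  have hqr : (0 : ℝ) < q := by exact_mod_cast hq
  set c : ℝ := 1936 * (L : ℝ) ^ 2 / q with hc
  have c0 : 0 < c := by positivity
  have vpos : ∀ P ∈ s, (0 : ℝ) < P.2 := fun P hP => by
    have := (hs P hP).v1
    exact_mod_cast (by linarith : (0 : ℤ) < P.2)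
  let f : ℤ × ℤ → ℤ := fun P => ⌊c * ((P.1 : ℝ) / P.2)⌋
  have hinj : Set.InjOn f s := by
    intro P hP Q hQ hPQ
    by_contra hne
    have hD : P.1 * Q.2 - Q.1 * P.2 ≠ 0 := fun h0 => hne ((hs P hP).eq_of_det (hs Q hQ) hL h0)
    have h1 : (q : ℤ) ≤ |P.1 * Q.2 - Q.1 * P.2| :=
      Int.le_of_dvd (abs_pos.mpr hD) ((dvd_abs _ _).mpr (h P hP Q hQ))
    have h1r : (q : ℝ) ≤ |(P.1 : ℝ) * Q.2 - Q.1 * P.2| := by exact_mod_cast h1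
    have h2 := Int.abs_sub_lt_one_of_floor_eq_floor hPQ
    have pv := vpos P hP
    have qv := vpos Q hQ
    have e : c * ((P.1 : ℝ) / P.2) - c * ((Q.1 : ℝ) / Q.2) =
      c * ((P.1 : ℝ) * Q.2 - Q.1 * P.2) / (P.2 * Q.2) := by field_simp
    rw [e, abs_div, abs_mul, abs_of_pos c0, abs_of_pos (mul_pos pv qv), div_lt_one (mul_pos pv qv)] at h2
    have p44 : (P.2 : ℝ) ≤ 44 * L := by exact_mod_cast (hs P hP).v2
    have q44 : (Q.2 : ℝ) ≤ 44 * L := by exact_mod_cast (hs Q hQ).v2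
    have h3 : (P.2 : ℝ) * Q.2 ≤ (44 * L) * (44 * L) := mul_le_mul p44 q44 qv.le (by linarith)
    have h4 : c * q ≤ c * |(P.1 : ℝ) * Q.2 - Q.1 * P.2| := mul_le_mul_of_nonneg_left h1r c0.le
    have h5 : c * q = 1936 * (L : ℝ) ^ 2 := by rw [hc]; field_simp
    nlinarith
  have hsub : s.image f ⊆ Finset.Icc 0 ⌊c⌋ := by
    intro x hx
    obtain ⟨P, hP, rfl⟩ := Finset.mem_image.mp hx
    have pv := vpos P hP
    have u0 : (0 : ℝ) < P.1 := by
      have := (hs P hP).u1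
      exact_mod_cast (by linarith : (0 : ℤ) < P.1)
    have uv : (P.1 : ℝ) ≤ P.2 := by
      have := (hs P hP).u2; have := (hs P hP).v1
      exact_mod_cast (by linarith : P.1 ≤ P.2)
    rw [Finset.mem_Icc]
    refine ⟨Int.floor_nonneg.mpr (by positivity), Int.floor_mono ?_⟩
    exact mul_le_of_le_one_right c0.le ((div_le_one pv).mpr uv)
  have h1 : s.card ≤ (Finset.Icc 0 ⌊c⌋).card := by
    rw [← Finset.card_image_of_injOn hinj]; exact Finset.card_le_card hsub
  rw [Int.card_Icc] at h1
  have h2 : (s.card : ℝ) ≤ c + 1 := by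
    have h0 : 0 ≤ ⌊c⌋ := Int.floor_nonneg.mpr c0.le
    have : (s.card : ℤ) ≤ ⌊c⌋ + 1 := by omega
    have h3 : (s.card : ℝ) ≤ (⌊c⌋ : ℝ) + 1 := by exact_mod_cast this
    linarith [Int.floor_le c]
  have : c ≤ 2000 * (L : ℝ) ^ 2 / q := by rw [hc]; gcongr; norm_num
  linarith

/-- few points with `p ^ j ∣ F` -/
theorem pow_card {L : ℤ} (hL : 1 ≤ L) (s : Finset (ℤ × ℤ)) (hs : ∀ P ∈ s, FPt L P) (p j : ℕ)
    (hp : p.Prime) (hj : 1 ≤ j) :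
    ((s.filter (fun P => (p : ℤ) ^ j ∣ fF P.1 P.2)).card : ℝ) ≤
      16 + 16000 * (L : ℝ) ^ 2 / (p : ℝ) ^ j := by
  have : Fact p.Prime := ⟨hp⟩
  classical
  have hpj : (p : ℤ) ∣ (p : ℤ) ^ j := dvd_pow_self _ (by omega)
  set t := s.filter (fun P => (p : ℤ) ^ j ∣ fF P.1 P.2) with ht
  have hts : ∀ P ∈ t, FPt L P ∧ (p : ℤ) ^ j ∣ fF P.1 P.2 := fun P hP => by
    rw [ht, Finset.mem_filter] at hP; exact ⟨hs P hP.1, hP.2⟩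
  set f : ℤ × ℤ → ZMod p := fun P => (P.1 : ZMod p) / (P.2 : ZMod p)
  have h1 : t.card = ∑ b ∈ (fpoly p).roots.toFinset, (t.filter (fun P => f P = b)).card :=
    Finset.card_eq_sum_card_fiberwise (fun P hP => (hts P hP).1.root p (hpj.trans (hts P hP).2))
  have h2 : ∀ b ∈ (fpoly p).roots.toFinset, ((t.filter (fun P => f P = b)).card : ℝ) ≤
      2 + 2000 * (L : ℝ) ^ 2 / (p : ℝ) ^ j := by
    intro b _
    have := sep_card hL (t.filter (fun P => f P = b))
      (fun P hP => (hts P (Finset.mem_filter.mp hP).1).1) (p ^ j) (pow_pos hp.pos j) ?_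
    · exact_mod_cast this
    · intro P hP Q hQ
      rw [Finset.mem_filter] at hP hQ
      obtain ⟨a1, a2⟩ := hts P hP.1
      obtain ⟨b1, b2⟩ := hts Q hQ.1
      push_cast
      exact a1.hensel b1 p j hp hj a2 b2 (a1.same_root b1 p (hpj.trans a2) (hpj.trans b2)
        (hP.2.trans hQ.2.symm))
  rw [h1]
  push_cast
  refine (Finset.sum_le_sum h2).trans ?_
  rw [Finset.sum_const, nsmul_eq_mul]
  have h8 : ((fpoly p).roots.toFinset.card : ℝ) ≤ 8 := by exact_mod_cast fpoly_card p
  have h0 : 0 ≤ 2 + 2000 * (L : ℝ) ^ 2 / (p : ℝ) ^ j := by positivity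
  calc _ ≤ 8 * (2 + 2000 * (L : ℝ) ^ 2 / (p : ℝ) ^ j) := mul_le_mul_of_nonneg_right h8 h0
    _ = _ := by ring

/-! ## The box -/

theorem cong_card (s : Finset ℤ) (A l : ℤ) (q : ℕ) (hq : 0 < q) (hl : 0 < l)
    (hs : ∀ x ∈ s, A ≤ x ∧ x < A + l) (h : ∀ x ∈ s, ∀ y ∈ s, (q : ℤ) ∣ x - y) :
    (s.card : ℝ) ≤ (l : ℝ) / q + 1 := by
  have hq' : (0 : ℤ) < q := by exact_mod_cast hq
  have hinj : Set.InjOn (fun x : ℤ => (x - A) / q) s := by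
    intro x hx y hy hxy
    simp only at hxy
    have h1 := Int.mul_ediv_add_emod (x - A) q
    have h2 := Int.mul_ediv_add_emod (y - A) q
    have h3 : (x - A) % q = (y - A) % q := by
      obtain ⟨k, hk⟩ := h x hx y hy
      have e : (x - A) = (y - A) + (x - y) := by ring
      rw [e, hk, Int.add_mul_emod_self_left]
    rw [hxy, h3] at h1
    linarith
  have hsub : s.image (fun x : ℤ => (x - A) / q) ⊆ Finset.Icc 0 (l / q) := by
    intro z hz
    obtain ⟨x, hx, rfl⟩ := Finset.mem_image.mp hz
    obtain ⟨a, b⟩ := hs x hx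
    rw [Finset.mem_Icc]
    exact ⟨Int.ediv_nonneg (by linarith) hq'.le, Int.ediv_le_ediv hq' (by linarith)⟩
  have h1 : s.card ≤ (Finset.Icc 0 (l / (q : ℤ))).card := by
    rw [← Finset.card_image_of_injOn hinj]; exact Finset.card_le_card hsub
  rw [Int.card_Icc] at h1
  have h0 : 0 ≤ l / (q : ℤ) := Int.ediv_nonneg hl.le hq'.le
  have h2 : (s.card : ℤ) ≤ l / q + 1 := by omega
  have h3 : (s.card : ℝ) ≤ ((l / (q : ℤ) : ℤ) : ℝ) + 1 := by exact_mod_cast h2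
  have h4 : ((l / (q : ℤ) : ℤ) : ℝ) ≤ (l : ℝ) / q := by
    rw [le_div_iff₀ (by exact_mod_cast hq)]
    exact_mod_cast Int.ediv_mul_le l hq'.ne'
  linarith

noncomputable def boxAll (N : ℕ) : Finset (ℤ × ℤ) :=
  Finset.Ico (22 * N : ℤ) (23 * N) ×ˢ Finset.Ico (42 * N : ℤ) (44 * N)

open Classical in
noncomputable def box (N : ℕ) : Finset (ℤ × ℤ) :=
  ((boxAll N).filter (fun P => IsCoprime (fM * P.1) (1 + fM * P.2))).image
    (fun P => (fM * P.1, 1 + fM * P.2))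

theorem fM_pos : 0 < fM := by unfold fM; norm_num

theorem box_pt (N : ℕ) (P : ℤ × ℤ) (hP : P ∈ box N) : FPt (fM * N) P := by
  unfold box boxAll at hP
  simp only [Finset.mem_image, Finset.mem_filter, Finset.mem_product, Finset.mem_Ico] at hP
  obtain ⟨⟨a, b⟩, ⟨⟨⟨h1, h2⟩, h3, h4⟩, h5⟩, rfl⟩ := hP
  have := fM_pos
  refine ⟨h5, ⟨a, rfl⟩, ⟨b, by ring⟩, ?_, ?_, ?_, ?_⟩
  · show 22 * (fM * N) ≤ fM * a
    nlinarith
  · show fM * a ≤ 23 * (fM * N)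
    nlinarith
  · show 42 * (fM * N) ≤ 1 + fM * b
    nlinarith
  · show 1 + fM * b ≤ 44 * (fM * N)
    have : b ≤ 44 * N - 1 := by omega
    nlinarith

theorem box_card (N : ℕ) (hN : 1380 ≤ N) : (2 / 5 : ℝ) * N ^ 2 ≤ (box N).card := by
  classical
  have hM := fM_pos
  have hinj : Function.Injective (fun P : ℤ × ℤ => (fM * P.1, 1 + fM * P.2)) := by
    rintro ⟨a, b⟩ ⟨c, d⟩ h
    simp only [Prod.mk.injEq] at h ⊢
    exact ⟨mul_left_cancel₀ hM.ne' h.1, mul_left_cancel₀ hM.ne' (by linarith [h.2])⟩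
  have hcard : (box N).card = ((boxAll N).filter
      (fun P => IsCoprime (fM * P.1) (1 + fM * P.2))).card := by
    unfold box
    rw [Finset.card_image_of_injective _ hinj]
  have htot : (boxAll N).card = 2 * N ^ 2 := by
    unfold boxAll
    rw [Finset.card_product, Int.card_Ico, Int.card_Ico]
    have e1 : (23 * (N : ℤ) - 22 * N).toNat = N := by omega
    have e2 : (44 * (N : ℤ) - 42 * N).toNat = 2 * N := by omega
    rw [e1, e2]; ring
  have hsplit := Finset.card_filter_add_card_filter_not (s := boxAll N)
    (fun P => IsCoprime (fM * P.1) (1 + fM * P.2))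
  -- the bad set
  let A : ℕ → Finset ℤ := fun p => (Finset.Ico (22 * N : ℤ) (23 * N)).filter (fun a => (p : ℤ) ∣ a)
  let B : ℕ → Finset ℤ := fun p => (Finset.Ico (42 * N : ℤ) (44 * N)).filter
    (fun b => (p : ℤ) ∣ 1 + fM * b)
  let I : Finset ℕ := (Finset.Ioc 4 (23 * N)).filter (fun p => p.Prime ∧ ¬ (p : ℤ) ∣ fM)
  have hbad : (boxAll N).filter (fun P => ¬ IsCoprime (fM * P.1) (1 + fM * P.2)) ⊆
      I.biUnion (fun p => A p ×ˢ B p) := by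
    rintro ⟨a, b⟩ hP
    simp only [boxAll, Finset.mem_filter, Finset.mem_product, Finset.mem_Ico] at hP
    obtain ⟨⟨⟨h1, h2⟩, h3, h4⟩, h5⟩ := hP
    have h6 : ¬ ∀ p : ℕ, p.Prime → (p : ℤ) ∣ fM * a → ¬ (p : ℤ) ∣ 1 + fM * b :=
      fun h => h5 (isCoprime_of_primes _ _ h)
    push Not at h6
    obtain ⟨p, hp, k1, k2⟩ := h6
    have hpi : Prime (p : ℤ) := Nat.prime_iff_prime_int.mp hp
    have hpM : ¬ (p : ℤ) ∣ fM := by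
      intro h
      have := (Int.dvd_add_left (h.mul_right b)).mp k2
      exact hpi.not_isUnit (isUnit_of_dvd_one this)
    have pa : (p : ℤ) ∣ a := (hpi.dvd_or_dvd k1).resolve_left hpM
    simp only [Finset.mem_biUnion, Finset.mem_product, A, B, I, Finset.mem_filter, Finset.mem_Ico,
      Finset.mem_Ioc]
    refine ⟨p, ⟨⟨?_, ?_⟩, hp, hpM⟩, ⟨⟨h1, h2⟩, pa⟩, ⟨h3, h4⟩, k2⟩
    · by_contra hlt
      have h2p := hp.two_le
      have : p = 2 ∨ p = 3 ∨ p = 4 := by omega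
      rcases this with rfl | rfl | rfl
      · exact hpM (by unfold fM; norm_num)
      · exact hpM (by unfold fM; norm_num)
      · revert hp; norm_num
    · have := Int.le_of_dvd (by omega) pa
      omega
  have hN0 : (0 : ℝ) < N := by positivity
  have hAB : ∀ p ∈ I, ((A p ×ˢ B p).card : ℝ) ≤ 6 * (N : ℝ) ^ 2 * ((p : ℝ) ^ 2)⁻¹ + 6 := by
    intro p hp
    simp only [I, Finset.mem_filter, Finset.mem_Ioc] at hp
    obtain ⟨⟨hp4, hp23⟩, hpp, hpM⟩ := hp
    have hp0 : (0 : ℝ) < p := by exact_mod_cast hpp.pos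
    have hA : ((A p).card : ℝ) ≤ (N : ℝ) / p + 1 := by
      have := cong_card (A p) (22 * N) N p hpp.pos (by omega) ?_ ?_
      · simpa using this
      · intro x hx
        simp only [A, Finset.mem_filter, Finset.mem_Ico] at hx
        omega
      · intro x hx y hy
        simp only [A, Finset.mem_filter, Finset.mem_Ico] at hx hy
        exact dvd_sub hx.2 hy.2
    have hB : ((B p).card : ℝ) ≤ 2 * (N : ℝ) / p + 1 := by
      have := cong_card (B p) (42 * N) (2 * N) p hpp.pos (by omega) ?_ ?_
      · simpa using this
      · intro x hx
        simp only [B, Finset.mem_filter, Finset.mem_Ico] at hx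
        omega
      · intro x hx y hy
        simp only [B, Finset.mem_filter, Finset.mem_Ico] at hx hy
        have h1 := dvd_sub hx.2 hy.2
        have h2 : (p : ℤ) ∣ fM * (x - y) := by
          rw [show fM * (x - y) = 1 + fM * x - (1 + fM * y) by ring]; exact h1
        exact ((Nat.prime_iff_prime_int.mp hpp).dvd_or_dvd h2).resolve_left hpM
    rw [Finset.card_product]
    push_cast
    have hx0 : 0 ≤ (N : ℝ) / p := by positivity
    have e : 6 * (N : ℝ) ^ 2 * ((p : ℝ) ^ 2)⁻¹ = 6 * ((N : ℝ) / p) ^ 2 := by field_simp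
    rw [e]
    rw [mul_div_assoc] at hB
    generalize (N : ℝ) / p = x at *
    calc ((A p).card : ℝ) * (B p).card ≤ (x + 1) * (2 * x + 1) :=
          mul_le_mul hA hB (by positivity) (by positivity)
      _ ≤ _ := by nlinarith [sq_nonneg (x - 1), sq_nonneg (x-2)]
  have h1 : (((boxAll N).filter (fun P => ¬ IsCoprime (fM * P.1) (1 + fM * P.2))).card : ℝ) ≤
      6 * (N : ℝ) ^ 2 * (1 / 4) + 138 * N := by
    calc _ ≤ ((I.biUnion (fun p => A p ×ˢ B p)).card : ℝ) := by
          exact_mod_cast Finset.card_le_card hbad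
      _ ≤ ∑ p ∈ I, ((A p ×ˢ B p).card : ℝ) := by exact_mod_cast Finset.card_biUnion_le
      _ ≤ ∑ p ∈ I, (6 * (N : ℝ) ^ 2 * ((p : ℝ) ^ 2)⁻¹ + 6) := Finset.sum_le_sum hAB
      _ ≤ ∑ p ∈ Finset.Ioc 4 (23 * N), (6 * (N : ℝ) ^ 2 * ((p : ℝ) ^ 2)⁻¹ + 6) :=
          Finset.sum_le_sum_of_subset_of_nonneg (Finset.filter_subset _ _)
            (fun _ _ _ => by positivity)
      _ = 6 * (N : ℝ) ^ 2 * (∑ p ∈ Finset.Ioc 4 (23 * N), ((p : ℝ) ^ 2)⁻¹) +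
            ((23 * N - 4 : ℕ) : ℝ) * 6 := by
          rw [Finset.sum_add_distrib, ← Finset.mul_sum, Finset.sum_const, Nat.card_Ioc, nsmul_eq_mul]
      _ ≤ _ := by
          have h2 := sum_Ioc_inv_sq_le_sub (α := ℝ) (k := 4) (n := 23 * N) (by norm_num) (by omega)
          have h3 : (0 : ℝ) ≤ ((23 * N : ℕ) : ℝ)⁻¹ := by positivity
          have h4 : ((23 * N - 4 : ℕ) : ℝ) ≤ 23 * N := by
            have : 23 * N - 4 ≤ 23 * N := by omega
            exact_mod_cast this
          have h5 : (∑ p ∈ Finset.Ioc 4 (23 * N), ((p : ℝ) ^ 2)⁻¹) ≤ 1 / 4 := by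
            push_cast at h2 h3 ⊢
            linarith
          have h6 : 0 ≤ 6 * (N : ℝ) ^ 2 := by positivity
          nlinarith [mul_le_mul_of_nonneg_left h5 h6]
  rw [htot] at hsplit
  have h2 : ((box N).card : ℝ) + (((boxAll N).filter
    (fun P => ¬ IsCoprime (fM * P.1) (1 + fM * P.2))).card : ℝ) = 2 * (N : ℝ) ^ 2 := by
    rw [hcard]; exact_mod_cast hsplit
  have hNr : (1380 : ℝ) ≤ N := by exact_mod_cast hN
  nlinarith

/-! ## Smooth and rough parts -/

def smo (z m : ℕ) : ℕ := (m.primeFactorsList.filter (fun p => decide (p ≤ z))).prod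
def rou (z m : ℕ) : ℕ := (m.primeFactorsList.filter (fun p => !decide (p ≤ z))).prod

theorem list_filter_prod (l : List ℕ) (f : ℕ → Bool) :
    (l.filter f).prod * (l.filter (fun p => !f p)).prod = l.prod := by
  induction l with
  | nil => simp
  | cons a l ih =>
    by_cases h : f a <;> simp [h, ← ih] <;> ring

theorem smo_mul_rou (z m : ℕ) (hm : m ≠ 0) : smo z m * rou z m = m := by
  unfold smo rou
  rw [list_filter_prod m.primeFactorsList (fun p => decide (p ≤ z)), Nat.prod_primeFactorsList hm]

theorem rou_mul (z a b : ℕ) (ha : a ≠ 0) (hb : b ≠ 0) : rou z (a * b) = rou z a * rou z b := by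
  unfold rou
  rw [((Nat.perm_primeFactorsList_mul ha hb).filter _).prod_eq, List.filter_append,
    List.prod_append]

theorem smo_pos (z m : ℕ) : 0 < smo z m := by
  unfold smo
  apply List.prod_pos
  intro p hp
  exact (Nat.prime_of_mem_primeFactorsList (List.mem_of_mem_filter hp)).pos

theorem rou_dvd (z m : ℕ) (hm : m ≠ 0) : rou z m ∣ m := Dvd.intro_left _ (smo_mul_rou z m hm)

theorem rou_prime (z m p : ℕ) (hp : p.Prime) (h : p ∣ rou z m) : z < p := by
  unfold rou at h
  obtain ⟨q, hq, hpq⟩ := (Nat.Prime.prime hp).dvd_prod_iff.mp h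
  have hqp := Nat.prime_of_mem_primeFactorsList (List.mem_of_mem_filter hq)
  have := (Nat.prime_dvd_prime_iff_eq hp hqp).mp hpq
  subst this
  have := List.of_mem_filter hq
  simpa using this

theorem log_smo (z m J : ℕ) (hm : m ≠ 0) (hJ : m < 2 ^ J) : Real.log (smo z m) =
    ∑ p ∈ (Finset.range (z + 1)).filter Nat.Prime, ∑ j ∈ Finset.Icc 1 J,
      if p ^ j ∣ m then Real.log p else 0 := by
  have h1 : smo z m = ∏ p ∈ (Finset.range (z + 1)).filter Nat.Prime, p ^ (m.factorization p) := by
    unfold smo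
    rw [Finset.prod_list_count]
    refine Finset.prod_subset_one_on_sdiff ?_ ?_ ?_
    · intro p hp
      rw [List.mem_toFinset, List.mem_filter] at hp
      have h2 := Nat.prime_of_mem_primeFactorsList hp.1
      have h3 : p ≤ z := by simpa using hp.2
      simp only [Finset.mem_filter, Finset.mem_range]
      exact ⟨by omega, h2⟩
    · intro p hp
      simp only [Finset.mem_sdiff, Finset.mem_filter, Finset.mem_range, List.mem_toFinset,
        List.mem_filter] at hp
      have : p ∉ m.primeFactorsList := fun h => hp.2 ⟨h, by simp; omega⟩
      rw [← Nat.primeFactorsList_count_eq, List.count_eq_zero_of_not_mem this, pow_zero]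
    · intro p hp
      rw [List.mem_toFinset] at hp
      rw [← Nat.primeFactorsList_count_eq, List.count_filter (List.of_mem_filter hp)]
  rw [h1]
  push_cast
  rw [Real.log_prod]
  · refine Finset.sum_congr rfl ?_
    intro p hp
    have hpp : p.Prime := (Finset.mem_filter.mp hp).2
    rw [Real.log_pow, ← Finset.sum_filter, Finset.sum_const, nsmul_eq_mul]
    congr 2
    have : (Finset.Icc 1 J).filter (fun j => p ^ j ∣ m) = Finset.Icc 1 (m.factorization p) := by
      ext j
      simp only [Finset.mem_filter, Finset.mem_Icc]
      rw [hpp.pow_dvd_iff_le_factorization hm]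
      have : m.factorization p ≤ J := by
        have h3 := Nat.le_of_dvd (Nat.pos_of_ne_zero hm) (Nat.ordProj_dvd m p)
        have h4 : 2 ^ (m.factorization p) ≤ p ^ (m.factorization p) :=
          Nat.pow_le_pow_left hpp.two_le _
        exact ((Nat.pow_lt_pow_iff_right (by norm_num)).mp (h4.trans_lt (h3.trans_lt hJ))).le
      omega
    rw [this]; simp
  · intro p hp
    have hpp : p.Prime := (Finset.mem_filter.mp hp).2
    have : (p : ℝ) ≠ 0 := by exact_mod_cast hpp.ne_zero
    positivity

/-- A weak form of the first theorem of Mertens. -/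
theorem mertens_two_pow (i : ℕ) :
    ∑ p ∈ (Finset.range (2 ^ i + 1)).filter Nat.Prime, Real.log p / p ≤ 4 * i := by
  induction i with
  | zero =>
    have : (Finset.range (2 ^ 0 + 1)).filter Nat.Prime = ∅ := by decide
    rw [this]; simp
  | succ i ih =>
    have hsub : (Finset.range (2 ^ i + 1)).filter Nat.Prime ⊆
      (Finset.range (2 ^ (i + 1) + 1)).filter Nat.Prime := by
      apply Finset.filter_subset_filter
      apply Finset.range_subset_range.mpr
      rw [pow_succ]; omega
    rw [← Finset.sum_sdiff hsub]
    have h1 : ∑ p ∈ (Finset.range (2 ^ (i + 1) + 1)).filter Nat.Prime \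
        (Finset.range (2 ^ i + 1)).filter Nat.Prime, Real.log p / p ≤
        ∑ p ∈ (Finset.range (2 ^ (i + 1) + 1)).filter Nat.Prime, Real.log p / 2 ^ i := by
      refine (Finset.sum_le_sum (g := fun p : ℕ => Real.log p / 2 ^ i) ?_).trans
        (Finset.sum_le_sum_of_subset_of_nonneg Finset.sdiff_subset ?_)
      · intro p hp
        simp only [Finset.mem_sdiff, Finset.mem_filter, Finset.mem_range, not_and] at hp
        have h2 : 2 ^ i < p := by
          by_contra h; exact hp.2 (by omega) hp.1.2
        have h3 : (2 : ℝ) ^ i ≤ p := by exact_mod_cast h2.le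
        have h4 : 0 ≤ Real.log p := Real.log_natCast_nonneg p
        exact div_le_div_of_nonneg_left h4 (by positivity) h3
      · intro p _ _
        have h4 : 0 ≤ Real.log p := Real.log_natCast_nonneg p
        positivity
    have h2 : ∑ p ∈ (Finset.range (2 ^ (i + 1) + 1)).filter Nat.Prime, Real.log p ≤
        Real.log 4 * 2 ^ (i + 1) := by
      have h3 := Chebyshev.theta_le_log4_mul_x (x := ((2 ^ (i + 1) : ℕ) : ℝ)) (by positivity)
      rw [Chebyshev.theta_eq_sum_Icc, Nat.floor_natCast] at h3
      push_cast at h3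
      refine le_trans (le_of_eq ?_) h3
      apply Finset.sum_congr _ (fun _ _ => rfl)
      ext p
      simp only [Finset.mem_filter, Finset.mem_range, Finset.mem_Icc]
      constructor
      · rintro ⟨a, b⟩; exact ⟨⟨by omega, by omega⟩, b⟩
      · rintro ⟨a, b⟩; exact ⟨by omega, b⟩
    have h3 : Real.log 4 ≤ 2 := by
      rw [show (4 : ℝ) = 2 ^ 2 by norm_num, Real.log_pow]
      have := Real.log_two_lt_d9
      push_cast; linarith
    rw [← Finset.sum_div] at h1
    have h4 : (∑ p ∈ (Finset.range (2 ^ (i + 1) + 1)).filter Nat.Prime, Real.log p) / 2 ^ i ≤ 4 := by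
      rw [div_le_iff₀ (by positivity)]
      have : (0 : ℝ) < 2 ^ i := by positivity
      have e : (2 : ℝ) ^ (i + 1) = 2 ^ i * 2 := pow_succ _ _
      rw [e] at h2
      nlinarith
    push_cast
    linarith

theorem smooth_sum {L : ℤ} (hL : 1 ≤ L) (s : Finset (ℤ × ℤ)) (hs : ∀ P ∈ s, FPt L P) (i J : ℕ)
    (hJ : (10 : ℤ) ^ 22 * L ^ 8 < 2 ^ J) :
    ∑ P ∈ s, Real.log (smo (2 ^ i) (fF P.1 P.2).natAbs) ≤
      32 * J * 2 ^ i * i + 128000 * (L : ℝ) ^ 2 * i := by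
  have h1 : ∀ P ∈ s, Real.log (smo (2 ^ i) (fF P.1 P.2).natAbs) =
      ∑ p ∈ (Finset.range (2 ^ i + 1)).filter Nat.Prime, ∑ j ∈ Finset.Icc 1 J,
      if (p : ℤ) ^ j ∣ fF P.1 P.2 then Real.log p else 0 := by
    intro P hP
    have hb := (hs P hP).F_bd hL
    have hn := (hs P hP).F_neg hL
    rw [log_smo _ _ J (by omega) (by zify; rw [abs_of_neg hn]; linarith)]
    refine Finset.sum_congr rfl fun p _ => Finset.sum_congr rfl fun j _ => ?_
    have : (p ^ j ∣ (fF P.1 P.2).natAbs) ↔ (p : ℤ) ^ j ∣ fF P.1 P.2 := by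
      rw [← Int.natCast_dvd]; push_cast; rfl
    simp only [this]
  rw [Finset.sum_congr rfl h1, Finset.sum_comm]
  have h2 : ∀ p ∈ (Finset.range (2 ^ i + 1)).filter Nat.Prime,
      (∑ P ∈ s, ∑ j ∈ Finset.Icc 1 J, if (p : ℤ) ^ j ∣ fF P.1 P.2 then Real.log p else 0) ≤
      16 * J * i + 32000 * (L : ℝ) ^ 2 * (Real.log p / p) := by
    intro p hp
    simp only [Finset.mem_filter, Finset.mem_range] at hp
    have hpp := hp.2
    have hlog : 0 ≤ Real.log p := Real.log_natCast_nonneg p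
    have hp0 : (2 : ℝ) ≤ p := by exact_mod_cast hpp.two_le
    rw [Finset.sum_comm]
    have h3 : ∀ j ∈ Finset.Icc 1 J, (∑ P ∈ s, if (p : ℤ) ^ j ∣ fF P.1 P.2 then Real.log p else 0) ≤
        Real.log p * 16 + Real.log p * 16000 * (L : ℝ) ^ 2 * (1 / (p : ℝ)) ^ j := by
      intro j hj
      rw [← Finset.sum_filter, Finset.sum_const, nsmul_eq_mul, mul_comm]
      have := mul_le_mul_of_nonneg_left (pow_card hL s hs p j hpp (Finset.mem_Icc.mp hj).1) hlog
      refine this.trans (le_of_eq ?_)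
      rw [div_pow, one_pow]; ring
    refine (Finset.sum_le_sum h3).trans ?_
    rw [Finset.sum_add_distrib, Finset.sum_const, Nat.card_Icc, nsmul_eq_mul, ← Finset.mul_sum]
    have h4 : ∑ j ∈ Finset.Icc 1 J, (1 / (p : ℝ)) ^ j ≤ 2 / p := by
      have h5 : ∀ n : ℕ, ∑ j ∈ Finset.Icc 1 n, (1 / (p : ℝ)) ^ j ≤ 2 / p - (1 / (p : ℝ)) ^ n * (2 / p) + 0 := by
        intro n
        induction n with
        | zero => simp
        | succ n ih =>
          rw [Finset.sum_Icc_succ_top (by omega)]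
          refine (add_le_add_left ih _).trans ?_
          have : 0 < (1 / (p : ℝ)) ^ n := by positivity
          rw [pow_succ]
          generalize (1 / (p : ℝ)) ^ n = y at *
          have e : 2 / (p : ℝ) = 2 * (1 / p) := by ring
          rw [e]
          have hx : 1 / (p : ℝ) ≤ 1 / 2 := one_div_le_one_div_of_le (by norm_num) hp0
          have hx0 : 0 < 1 / (p : ℝ) := by positivity
          generalize 1 / (p : ℝ) = x at *
          nlinarith [mul_pos this hx0]
      have := h5 J
      have h6 : 0 ≤ (1 / (p : ℝ)) ^ J * (2 / p) := by positivity
      linarith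
    have h7 : Real.log p ≤ i := by
      have : (p : ℝ) ≤ 2 ^ i := by exact_mod_cast (by omega : p ≤ 2 ^ i)
      have h8 := Real.log_le_log (by linarith) this
      rw [Real.log_pow] at h8
      have := Real.log_two_lt_d9
      have hi : (0 : ℝ) ≤ i := by positivity
      nlinarith
    have e : J + 1 - 1 = J := by omega
    rw [e]
    have h9 : (J : ℝ) * (Real.log p * 16) ≤ 16 * J * i := by
      have : (0 : ℝ) ≤ J := by positivity
      nlinarith
    have h10 : 0 ≤ Real.log p * 16000 * (L : ℝ) ^ 2 := by positivity
    have h11 := mul_le_mul_of_nonneg_left h4 h10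
    have e2 : Real.log p * 16000 * (L : ℝ) ^ 2 * (2 / p) = 32000 * (L : ℝ) ^ 2 * (Real.log p / p) := by
      ring
    linarith
  refine (Finset.sum_le_sum h2).trans ?_
  rw [Finset.sum_add_distrib, Finset.sum_const, nsmul_eq_mul, ← Finset.mul_sum]
  have h3 := mertens_two_pow i
  have h4 : (((Finset.range (2 ^ i + 1)).filter Nat.Prime).card : ℝ) ≤ 2 ^ i + 1 := by
    have := Finset.card_filter_le (Finset.range (2 ^ i + 1)) Nat.Prime
    rw [Finset.card_range] at this
    exact_mod_cast this
  have h5 : (1 : ℝ) ≤ 2 ^ i := one_le_pow₀ (by norm_num)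
  have h6 : (0 : ℝ) ≤ 16 * J * i := by positivity
  have h7 : (0 : ℝ) ≤ 32000 * (L : ℝ) ^ 2 := by positivity
  nlinarith [mul_le_mul_of_nonneg_left h3 h7, mul_le_mul_of_nonneg_right h4 h6]

/-! ## Few points with G = -k m^2 -/

noncomputable def gc0 (a v : ℝ) : ℝ := (240347) * v ^ 6
    + (17767750) * a ^ 1 * v ^ 5
    + (-867410541) * a ^ 2 * v ^ 4
    + (-710710000) * a ^ 3 * v ^ 3
    + (7112334168) * a ^ 4 * v ^ 2
    + (2558556000) * a ^ 5 * v ^ 1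
    + (-13601688912) * a ^ 6
noncomputable def gc1 (a v : ℝ) : ℝ := (17767750) * v ^ 5
    + (-1734821082) * a ^ 1 * v ^ 4
    + (-2132130000) * a ^ 2 * v ^ 3
    + (28449336672) * a ^ 3 * v ^ 2
    + (12792780000) * a ^ 4 * v ^ 1
    + (-81610133472) * a ^ 5
noncomputable def gc2 (a v : ℝ) : ℝ := (-867410541) * v ^ 4
    + (-2132130000) * a ^ 1 * v ^ 3
    + (42674005008) * a ^ 2 * v ^ 2
    + (25585560000) * a ^ 3 * v ^ 1
    + (-204025333680) * a ^ 4
noncomputable def gc3 (a v : ℝ) : ℝ := (-710710000) * v ^ 3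
    + (28449336672) * a ^ 1 * v ^ 2
    + (25585560000) * a ^ 2 * v ^ 1
    + (-272033778240) * a ^ 3
noncomputable def gc4 (a v : ℝ) : ℝ := (7112334168) * v ^ 2
    + (12792780000) * a ^ 1 * v ^ 1
    + (-204025333680) * a ^ 2
noncomputable def gc5 (a v : ℝ) : ℝ := (2558556000) * v ^ 1
    + (-81610133472) * a ^ 1
noncomputable def gc6 (_a _v : ℝ) : ℝ := (-13601688912)

theorem gc_expand (a h v : ℤ) : ((-fG (a + h) v : ℤ) : ℝ) = gc0 a v + gc1 a v * h + gc2 a v * h ^ 2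
    + gc3 a v * h ^ 3 + gc4 a v * h ^ 4 + gc5 a v * h ^ 5 + gc6 a v * h ^ 6 := by
  unfold fG gc0 gc1 gc2 gc3 gc4 gc5 gc6
  push_cast
  ring

theorem gc_bd_aux (f : ℝ → ℝ → ℝ) (hf : Continuous (fun x : ℝ × ℝ => f x.1 x.2)) (n : ℕ)
    (hom : ∀ l a v, f (l * a) (l * v) = l ^ n * f a v) :
    ∃ C : ℝ, ∀ L a v : ℝ, 1 ≤ L → 22 * L ≤ a → a ≤ 23 * L → 42 * L ≤ v → v ≤ 44 * L →
      |f a v| ≤ C * L ^ n := by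
  obtain ⟨C, hC⟩ := (isCompact_Icc.prod isCompact_Icc :
    IsCompact ((Set.Icc (22 : ℝ) 23) ×ˢ (Set.Icc (42 : ℝ) 44))).exists_bound_of_continuousOn
    hf.continuousOn
  refine ⟨C, ?_⟩
  intro L a v hL h1 h2 h3 h4
  have hL0 : 0 < L := by linarith
  have := hC (a / L, v / L) ⟨⟨by rw [le_div_iff₀ hL0]; exact h1, by rw [div_le_iff₀ hL0]; exact h2⟩,
    ⟨by rw [le_div_iff₀ hL0]; exact h3, by rw [div_le_iff₀ hL0]; exact h4⟩⟩
  have e := hom L (a / L) (v / L)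
  rw [mul_div_cancel₀ _ hL0.ne', mul_div_cancel₀ _ hL0.ne'] at e
  rw [e, abs_mul, abs_of_pos (by positivity), mul_comm]
  exact mul_le_mul_of_nonneg_right this (by positivity)

theorem gc_bd : ∃ C : ℝ, 1 ≤ C ∧ ∀ L a v : ℝ, 1 ≤ L → 22 * L ≤ a → a ≤ 23 * L → 42 * L ≤ v →
    v ≤ 44 * L → |gc1 a v| ≤ C * L ^ 5 ∧ |gc2 a v| ≤ C * L ^ 4 ∧ |gc3 a v| ≤ C * L ^ 3 ∧
      |gc4 a v| ≤ C * L ^ 2 ∧ |gc5 a v| ≤ C * L ∧ |gc6 a v| ≤ C := by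
  obtain ⟨C1, h1⟩ := gc_bd_aux gc1 (by unfold gc1; fun_prop) 5 (by intros; unfold gc1; ring)
  obtain ⟨C2, h2⟩ := gc_bd_aux gc2 (by unfold gc2; fun_prop) 4 (by intros; unfold gc2; ring)
  obtain ⟨C3, h3⟩ := gc_bd_aux gc3 (by unfold gc3; fun_prop) 3 (by intros; unfold gc3; ring)
  obtain ⟨C4, h4⟩ := gc_bd_aux gc4 (by unfold gc4; fun_prop) 2 (by intros; unfold gc4; ring)
  obtain ⟨C5, h5⟩ := gc_bd_aux gc5 (by unfold gc5; fun_prop) 1 (by intros; unfold gc5; ring)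
  obtain ⟨C6, h6⟩ := gc_bd_aux gc6 (by unfold gc6; fun_prop) 0 (by intros; unfold gc6; ring)
  refine ⟨1 + |C1| + |C2| + |C3| + |C4| + |C5| + |C6|, ?_, ?_⟩
  · have := abs_nonneg C1; have := abs_nonneg C2; have := abs_nonneg C3
    have := abs_nonneg C4; have := abs_nonneg C5; have := abs_nonneg C6
    linarith
  intro L a v hL k1 k2 k3 k4
  have e1 := abs_nonneg C1; have e2 := abs_nonneg C2; have e3 := abs_nonneg C3
  have e4 := abs_nonneg C4; have e5 := abs_nonneg C5; have e6 := abs_nonneg C6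
  have f1 := le_abs_self C1; have f2 := le_abs_self C2; have f3 := le_abs_self C3
  have f4 := le_abs_self C4; have f5 := le_abs_self C5; have f6 := le_abs_self C6
  have hL0 : 0 ≤ L := by linarith
  refine ⟨(h1 L a v hL k1 k2 k3 k4).trans (mul_le_mul_of_nonneg_right (by linarith) (by positivity)),
    (h2 L a v hL k1 k2 k3 k4).trans (mul_le_mul_of_nonneg_right (by linarith) (by positivity)),
    (h3 L a v hL k1 k2 k3 k4).trans (mul_le_mul_of_nonneg_right (by linarith) (by positivity)),
    (h4 L a v hL k1 k2 k3 k4).trans (mul_le_mul_of_nonneg_right (by linarith) (by positivity)),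
    ?_, ?_⟩
  · have := (h5 L a v hL k1 k2 k3 k4)
    rw [pow_one] at this
    exact this.trans (mul_le_mul_of_nonneg_right (by linarith) (by positivity))
  · have := (h6 L a v hL k1 k2 k3 k4)
    rw [pow_zero, mul_one] at this
    linarith

set_option maxHeartbeats 4000000 in
/-- cubic approximation to the square root of a sextic -/
theorem cubic_approx (C L g0 g1 g2 g3 g4 g5 g6 : ℝ) (hC : 1 ≤ C) (hL : 1 ≤ L) (h0 : L ^ 6 ≤ g0)
    (h1 : |g1| ≤ C * L ^ 5) (h2 : |g2| ≤ C * L ^ 4) (h3 : |g3| ≤ C * L ^ 3)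
    (h4 : |g4| ≤ C * L ^ 2) (h5 : |g5| ≤ C * L) (h6 : |g6| ≤ C) :
    ∃ t0 t1 t2 t3 : ℝ, ∀ h y : ℝ, 0 ≤ h → 4 * C ^ 3 * h ≤ L → L ^ 3 ≤ y →
      y ^ 2 = g0 + g1 * h + g2 * h ^ 2 + g3 * h ^ 3 + g4 * h ^ 4 + g5 * h ^ 5 + g6 * h ^ 6 →
      |y - (t0 + t1 * h + t2 * h ^ 2 + t3 * h ^ 3)| ≤ 20 * C ^ 6 * h ^ 4 / L := by
  have hL0 : 0 < L := by linarith
  have hC0 : 0 < C := by linarith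
  have hC2 : C ≤ C ^ 2 := by nlinarith
  have hC3 : C ^ 2 ≤ C ^ 3 := by nlinarith [sq_nonneg C]
  have hC4 : C ^ 3 ≤ C ^ 4 := pow_le_pow_right₀ hC (by norm_num)
  have hC5 : C ^ 4 ≤ C ^ 5 := pow_le_pow_right₀ hC (by norm_num)
  have hC6 : C ^ 5 ≤ C ^ 6 := pow_le_pow_right₀ hC (by norm_num)
  obtain ⟨t0, ht0⟩ : ∃ t, t = Real.sqrt g0 := ⟨_, rfl⟩
  have g00 : 0 ≤ g0 := le_trans (by positivity) h0
  have s0 : t0 ^ 2 = g0 := by rw [ht0]; exact Real.sq_sqrt g00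
  have b0 : L ^ 3 ≤ t0 := by
    rw [ht0]; apply Real.le_sqrt_of_sq_le
    calc (L ^ 3) ^ 2 = L ^ 6 := by ring
      _ ≤ g0 := h0
  have t0p : 0 < t0 := lt_of_lt_of_le (by positivity) b0
  have dv : ∀ g B : ℝ, |g| ≤ 2 * B * L ^ 3 → 0 ≤ B → |g / (2 * t0)| ≤ B := by
    intro g B hg hB
    rw [abs_div, abs_of_pos (by positivity : 0 < 2 * t0), div_le_iff₀ (by positivity)]
    nlinarith
  obtain ⟨t1, ht1⟩ : ∃ t, t = g1 / (2 * t0) := ⟨_, rfl⟩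
  have s1 : 2 * t0 * t1 = g1 := by rw [ht1]; field_simp
  have b1 : |t1| ≤ C * L ^ 2 := by
    rw [ht1]; apply dv _ _ _ (by positivity)
    refine h1.trans ?_
    have : 0 ≤ C * L ^ 5 := by positivity
    calc _ ≤ 2 * (C * L ^ 5) := by linarith
      _ = _ := by ring
  obtain ⟨t2, ht2⟩ : ∃ t, t = (g2 - t1 ^ 2) / (2 * t0) := ⟨_, rfl⟩
  have s2 : 2 * t0 * t2 = g2 - t1 ^ 2 := by rw [ht2]; field_simp
  have q1 : t1 ^ 2 ≤ C ^ 2 * L ^ 4 := by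
    calc t1 ^ 2 = |t1| ^ 2 := (sq_abs _).symm
      _ ≤ (C * L ^ 2) ^ 2 := pow_le_pow_left₀ (abs_nonneg _) b1 2
      _ = _ := by ring
  have b2 : |t2| ≤ C ^ 2 * L := by
    rw [ht2]; apply dv _ _ _ (by positivity)
    have : |g2 - t1 ^ 2| ≤ |g2| + |t1 ^ 2| := abs_sub _ _
    rw [abs_of_nonneg (sq_nonneg t1)] at this
    have k : C * L ^ 4 ≤ C ^ 2 * L ^ 4 := mul_le_mul_of_nonneg_right hC2 (by positivity)
    calc _ ≤ 2 * (C ^ 2 * L ^ 4) := by linarith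
      _ = _ := by ring
  obtain ⟨t3, ht3⟩ : ∃ t, t = (g3 - 2 * t1 * t2) / (2 * t0) := ⟨_, rfl⟩
  have s3 : 2 * t0 * t3 = g3 - 2 * t1 * t2 := by rw [ht3]; field_simp
  have q12 : |t1 * t2| ≤ C ^ 3 * L ^ 3 := by
    rw [abs_mul]
    calc _ ≤ (C * L ^ 2) * (C ^ 2 * L) := mul_le_mul b1 b2 (abs_nonneg _) (by positivity)
      _ = _ := by ring
  have b3 : |t3| ≤ 2 * C ^ 3 := by
    rw [ht3]; apply dv _ _ _ (by positivity)
    have h7 : |g3 - 2 * t1 * t2| ≤ |g3| + |2 * t1 * t2| := abs_sub _ _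
    have e : |2 * t1 * t2| = 2 * |t1 * t2| := by rw [mul_assoc, abs_mul]; norm_num
    have k : C * L ^ 3 ≤ C ^ 3 * L ^ 3 :=
      mul_le_mul_of_nonneg_right (le_self_pow₀ hC (by norm_num)) (by positivity)
    have : 0 ≤ C ^ 3 * L ^ 3 := by positivity
    calc _ ≤ 4 * (C ^ 3 * L ^ 3) := by linarith
      _ = _ := by ring
  refine ⟨t0, t1, t2, t3, ?_⟩
  intro h y hh hhL hy hyy
  have hLh : h ≤ L := by
    have : 1 ≤ C ^ 3 := one_le_pow₀ hC
    nlinarith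
  obtain ⟨T, hT⟩ : ∃ T, T = t0 + t1 * h + t2 * h ^ 2 + t3 * h ^ 3 := ⟨_, rfl⟩
  rw [← hT]
  have Tpos : 0 ≤ T := by
    have a1 : -(C * L ^ 2 * h) ≤ t1 * h := by
      have := (abs_le.mp b1).1; nlinarith
    have a2 : -(C ^ 2 * L * h ^ 2) ≤ t2 * h ^ 2 := by
      have := (abs_le.mp b2).1; nlinarith [sq_nonneg h]
    have a3 : -(2 * C ^ 3 * h ^ 3) ≤ t3 * h ^ 3 := by
      have := (abs_le.mp b3).1
      have : 0 ≤ h ^ 3 := by positivity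
      nlinarith
    have c1 : C * L ^ 2 * h ≤ C ^ 3 * h * L ^ 2 := by
      have k : 0 ≤ L ^ 2 * h := by positivity
      have := mul_le_mul_of_nonneg_right (le_self_pow₀ hC (by norm_num : (3 : ℕ) ≠ 0)) k
      calc _ = C * (L ^ 2 * h) := by ring
        _ ≤ _ := this
        _ = _ := by ring
    have c2 : C ^ 2 * L * h ^ 2 ≤ C ^ 3 * h * L ^ 2 := by
      calc C ^ 2 * L * h ^ 2 ≤ C ^ 3 * L * (h * L) := by
            apply mul_le_mul (mul_le_mul_of_nonneg_right hC3 hL0.le) _ (by positivity) (by positivity)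
            rw [sq]; exact mul_le_mul_of_nonneg_left hLh hh
        _ = _ := by ring
    have c3 : 2 * C ^ 3 * h ^ 3 ≤ 2 * (C ^ 3 * h * L ^ 2) := by
      calc 2 * C ^ 3 * h ^ 3 = 2 * (C ^ 3 * h * h ^ 2) := by ring
        _ ≤ _ := by gcongr
    have c4 : 4 * C ^ 3 * h * L ^ 2 ≤ L * L ^ 2 := mul_le_mul_of_nonneg_right hhL (by positivity)
    have c5 : L * L ^ 2 = L ^ 3 := by ring
    rw [hT]
    linarith
  have key : T ^ 2 - y ^ 2 = h ^ 4 * ((t2 ^ 2 + 2 * (t1 * t3) - g4) + (2 * (t2 * t3) - g5) * h +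
      (t3 ^ 2 - g6) * h ^ 2) := by
    rw [hyy, hT]
    linear_combination s0 + h * s1 + h ^ 2 * s2 + h ^ 3 * s3
  have L2 : 0 < L ^ 2 := by positivity
  have d1 : |t2 ^ 2 + 2 * (t1 * t3) - g4| ≤ 6 * C ^ 6 * L ^ 2 := by
    have e1 : t2 ^ 2 ≤ C ^ 4 * L ^ 2 := by
      calc t2 ^ 2 = |t2| ^ 2 := (sq_abs _).symm
        _ ≤ (C ^ 2 * L) ^ 2 := pow_le_pow_left₀ (abs_nonneg _) b2 2
        _ = _ := by ring
    have e2 : |t1 * t3| ≤ 2 * C ^ 4 * L ^ 2 := by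
      rw [abs_mul]
      calc _ ≤ (C * L ^ 2) * (2 * C ^ 3) := mul_le_mul b1 b3 (abs_nonneg _) (by positivity)
        _ = _ := by ring
    have e3 := sq_nonneg t2
    rw [abs_le] at e2 h4 ⊢
    have m1 : C * L ^ 2 ≤ C ^ 6 * L ^ 2 := mul_le_mul_of_nonneg_right (by first | exact le_self_pow₀ hC (by norm_num) | exact pow_le_pow_right₀ hC (by norm_num)) L2.le
    have m2 : C ^ 4 * L ^ 2 ≤ C ^ 6 * L ^ 2 := mul_le_mul_of_nonneg_right (by first | exact le_self_pow₀ hC (by norm_num) | exact pow_le_pow_right₀ hC (by norm_num)) L2.le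
    constructor <;> linarith [e2.1, e2.2, h4.1, h4.2]
  have d2 : |(2 * (t2 * t3) - g5) * h| ≤ 5 * C ^ 6 * L ^ 2 := by
    have e2 : |t2 * t3| ≤ 2 * C ^ 5 * L := by
      rw [abs_mul]
      calc _ ≤ (C ^ 2 * L) * (2 * C ^ 3) := mul_le_mul b2 b3 (abs_nonneg _) (by positivity)
        _ = _ := by ring
    have e3 : |2 * (t2 * t3) - g5| ≤ 5 * C ^ 6 * L := by
      rw [abs_le] at e2 h5 ⊢
      have m1 : C * L ≤ C ^ 6 * L := mul_le_mul_of_nonneg_right (by first | exact le_self_pow₀ hC (by norm_num) | exact pow_le_pow_right₀ hC (by norm_num)) hL0.le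
      have m2 : C ^ 5 * L ≤ C ^ 6 * L := mul_le_mul_of_nonneg_right (by first | exact le_self_pow₀ hC (by norm_num) | exact pow_le_pow_right₀ hC (by norm_num)) hL0.le
      constructor <;> linarith [e2.1, e2.2, h5.1, h5.2]
    rw [abs_mul, abs_of_nonneg hh]
    calc _ ≤ (5 * C ^ 6 * L) * L := mul_le_mul e3 hLh hh (by positivity)
      _ = _ := by ring
  have d3 : |(t3 ^ 2 - g6) * h ^ 2| ≤ 5 * C ^ 6 * L ^ 2 := by
    have e1 : t3 ^ 2 ≤ 4 * C ^ 6 := by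
      calc t3 ^ 2 = |t3| ^ 2 := (sq_abs _).symm
        _ ≤ (2 * C ^ 3) ^ 2 := pow_le_pow_left₀ (abs_nonneg _) b3 2
        _ = _ := by ring
    have e3 : |t3 ^ 2 - g6| ≤ 5 * C ^ 6 := by
      have := sq_nonneg t3
      rw [abs_le] at h6 ⊢
      constructor <;> linarith [h6.1, h6.2]
    rw [abs_mul, abs_of_nonneg (sq_nonneg h)]
    exact mul_le_mul e3 (pow_le_pow_left₀ hh hLh 2) (by positivity) (by positivity)
  have d : |T ^ 2 - y ^ 2| ≤ h ^ 4 * (20 * C ^ 6 * L ^ 2) := by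
    rw [key, abs_mul, abs_of_nonneg (by positivity : 0 ≤ h ^ 4)]
    apply mul_le_mul_of_nonneg_left _ (by positivity)
    refine (abs_add_le _ _).trans ?_
    have := abs_add_le (t2 ^ 2 + 2 * (t1 * t3) - g4) ((2 * (t2 * t3) - g5) * h)
    have : 0 ≤ C ^ 6 * L ^ 2 := by positivity
    linarith
  have e : |T ^ 2 - y ^ 2| = |y - T| * (y + T) := by
    rw [show T ^ 2 - y ^ 2 = -((y - T) * (y + T)) by ring, abs_neg, abs_mul,
      abs_of_nonneg (by have : 0 < L ^ 3 := by positivity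
                        linarith : 0 ≤ y + T)]
  rw [e] at d
  have f1 : |y - T| * L ^ 3 ≤ |y - T| * (y + T) :=
    mul_le_mul_of_nonneg_left (by linarith) (abs_nonneg _)
  rw [le_div_iff₀ hL0]
  have f2 : (|y - T| * L) * L ^ 2 ≤ (20 * C ^ 6 * h ^ 4) * L ^ 2 := by
    calc _ = |y - T| * L ^ 3 := by ring
      _ ≤ _ := f1.trans d
      _ = _ := by ring
  exact le_of_mul_le_mul_right f2 L2

/-! ## The determinant step -/

def vd {R : Type*} [CommRing R] (a b c d : R) : R :=
  (b - a) * (c - a) * (d - a) * (c - b) * (d - b) * (d - c)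

def dt {R : Type*} [CommRing R] (m0 m1 m2 m3 m4 x0 x1 x2 x3 x4 : R) : R :=
  m0 * vd x1 x2 x3 x4 - m1 * vd x0 x2 x3 x4 + m2 * vd x0 x1 x3 x4 - m3 * vd x0 x1 x2 x4
    + m4 * vd x0 x1 x2 x3

theorem vd_bd (H a b c d : ℝ) (ha : 0 ≤ a ∧ a ≤ H) (hb : 0 ≤ b ∧ b ≤ H) (hc : 0 ≤ c ∧ c ≤ H)
    (hd : 0 ≤ d ∧ d ≤ H) : |vd a b c d| ≤ H ^ 6 := by
  have k : ∀ x y : ℝ, 0 ≤ x ∧ x ≤ H → 0 ≤ y ∧ y ≤ H → |x - y| ≤ H := by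
    intro x y hx hy
    rw [abs_le]; constructor <;> linarith
  have hH : 0 ≤ H := by linarith
  unfold vd
  simp only [abs_mul]
  have := k b a hb ha
  have := k c a hc ha
  have := k d a hd ha
  have := k c b hc hb
  have := k d b hd hb
  have := k d c hd hc
  calc _ ≤ H * H * H * H * H * H := by gcongr
    _ = _ := by ring

theorem dt_cubic (r m0 m1 m2 m3 m4 x0 x1 x2 x3 x4 t0 t1 t2 t3 : ℝ) :
    r * dt m0 m1 m2 m3 m4 x0 x1 x2 x3 x4 =
    dt (r * m0 - (t0 + t1 * x0 + t2 * x0 ^ 2 + t3 * x0 ^ 3))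
      (r * m1 - (t0 + t1 * x1 + t2 * x1 ^ 2 + t3 * x1 ^ 3))
      (r * m2 - (t0 + t1 * x2 + t2 * x2 ^ 2 + t3 * x2 ^ 3))
      (r * m3 - (t0 + t1 * x3 + t2 * x3 ^ 2 + t3 * x3 ^ 3))
      (r * m4 - (t0 + t1 * x4 + t2 * x4 ^ 2 + t3 * x4 ^ 3)) x0 x1 x2 x3 x4 := by
  unfold dt vd; ring

theorem dt_bd (H E e0 e1 e2 e3 e4 x0 x1 x2 x3 x4 : ℝ)
    (h0 : 0 ≤ x0 ∧ x0 ≤ H) (h1 : 0 ≤ x1 ∧ x1 ≤ H) (h2 : 0 ≤ x2 ∧ x2 ≤ H) (h3 : 0 ≤ x3 ∧ x3 ≤ H)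
    (h4 : 0 ≤ x4 ∧ x4 ≤ H)
    (k0 : |e0| ≤ E) (k1 : |e1| ≤ E) (k2 : |e2| ≤ E) (k3 : |e3| ≤ E) (k4 : |e4| ≤ E) :
    |dt e0 e1 e2 e3 e4 x0 x1 x2 x3 x4| ≤ 5 * (E * H ^ 6) := by
  have hE : 0 ≤ E := (abs_nonneg _).trans k0
  have q : ∀ e a b c d, |e| ≤ E → 0 ≤ a ∧ a ≤ H → 0 ≤ b ∧ b ≤ H → 0 ≤ c ∧ c ≤ H →
      0 ≤ d ∧ d ≤ H → |e * vd a b c d| ≤ E * H ^ 6 := by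
    intro e a b c d he ha hb hc hd
    rw [abs_mul]
    exact mul_le_mul he (vd_bd H a b c d ha hb hc hd) (abs_nonneg _) hE
  have a0 := abs_le.mp (q e0 x1 x2 x3 x4 k0 h1 h2 h3 h4)
  have a1 := abs_le.mp (q e1 x0 x2 x3 x4 k1 h0 h2 h3 h4)
  have a2 := abs_le.mp (q e2 x0 x1 x3 x4 k2 h0 h1 h3 h4)
  have a3 := abs_le.mp (q e3 x0 x1 x2 x4 k3 h0 h1 h2 h4)
  have a4 := abs_le.mp (q e4 x0 x1 x2 x3 k4 h0 h1 h2 h3)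
  unfold dt
  rw [abs_le]
  constructor <;> linarith [a0.1, a0.2, a1.1, a1.2, a2.1, a2.2, a3.1, a3.2, a4.1, a4.2]

open Polynomial in
theorem poly_few (a v k x0 x1 x2 x3 m0 m1 m2 m3 : ℤ) (hv : 0 < v) (hk : 0 ≤ k)
    (hV : vd x0 x1 x2 x3 ≠ 0) (s : Finset ℤ)
    (h : ∀ x ∈ s, ∃ m : ℤ, - fG (a + x) v = k * m ^ 2 ∧ dt m0 m1 m2 m3 m x0 x1 x2 x3 x = 0) :
    s.card ≤ 6 := by
  by_contra hc
  push Not at hc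
  let l : ℤ → ℤ → ℤ → ℤ → ℤ[X] := fun m a b c =>
    C (m * ((b - a) * (c - a) * (c - b))) * ((X - C a) * (X - C b) * (X - C c))
  have hl : ∀ m a b c x, (l m a b c).eval x = m * vd a b c x := by
    intro m a b c x
    simp only [l, eval_mul, eval_C, eval_sub, eval_X, vd]
    ring
  have hld : ∀ m a b c, (l m a b c).natDegree ≤ 3 := by
    intro m a b c
    simp only [l]
    compute_degree
  let q : ℤ[X] := - l m0 x1 x2 x3 + l m1 x0 x2 x3 - l m2 x0 x1 x3 + l m3 x0 x1 x2
  have hqd : q.natDegree ≤ 3 := by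
    simp only [q]
    refine (natDegree_add_le_of_degree_le (natDegree_sub_le_of_le
      (natDegree_add_le_of_degree_le ?_ (hld _ _ _ _)) (hld _ _ _ _)) (hld _ _ _ _))
    rw [natDegree_neg]; exact hld _ _ _ _
  let g : ℤ[X] := C (-240347 * v ^ 6) + C (- 17767750 * v ^ 5) * (X + C a)
    + C (867410541 * v ^ 4) * (X + C a) ^ 2 + C (710710000 * v ^ 3) * (X + C a) ^ 3
    + C (- 7112334168 * v ^ 2) * (X + C a) ^ 4 + C (- 2558556000 * v) * (X + C a) ^ 5
    + C 13601688912 * (X + C a) ^ 6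
  have hge : ∀ x, g.eval x = fG (a + x) v := by
    intro x
    simp only [g, eval_add, eval_mul, eval_C, eval_pow, eval_X, fG]
    ring
  have hgd : g.natDegree ≤ 6 := by
    simp only [g]
    compute_degree
  let Φ : ℤ[X] := C k * q ^ 2 + C (vd x0 x1 x2 x3 ^ 2) * g
  have hΦd : Φ.natDegree ≤ 6 := by
    simp only [Φ]
    refine natDegree_add_le_of_degree_le ((natDegree_C_mul_le _ _).trans ?_)
      ((natDegree_C_mul_le _ _).trans hgd)
    exact (natDegree_pow_le_of_le 2 hqd)
  have hΦ : Φ = 0 := by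
    apply Polynomial.eq_zero_of_natDegree_lt_card_of_eval_eq_zero' Φ s _ (by omega)
    intro x hx
    obtain ⟨m, e1, e2⟩ := h x hx
    have : q.eval x = m * vd x0 x1 x2 x3 := by
      simp only [q, eval_add, eval_sub, eval_neg, hl]
      unfold dt at e2
      linear_combination (-1) * e2
    simp only [Φ, eval_add, eval_mul, eval_pow, eval_C, this, hge]
    linear_combination (-(vd x0 x1 x2 x3 ^ 2)) * e1
  have e := congrArg (Polynomial.eval (v - a)) hΦ
  simp only [Φ, eval_add, eval_mul, eval_pow, eval_C, hge, eval_zero] at e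
  have e3 : fG (a + (v - a)) v = 5490911188 * v ^ 6 := by unfold fG; ring
  rw [e3] at e
  have p1 : 0 ≤ k * (eval (v - a) q) ^ 2 := by positivity
  have p2 : 0 < vd x0 x1 x2 x3 ^ 2 * (5490911188 * v ^ 6) := by
    have := sq_pos_of_ne_zero hV
    positivity
  linarith

theorem interval_few : ∃ C : ℝ, 1 ≤ C ∧ ∀ (L H v k : ℤ), 1 ≤ L → 0 ≤ H → 1 ≤ k → 4 * C ^ 3 * H ≤ L →
    100 * C ^ 6 * H ^ 10 < L → ∀ s : Finset ℤ, (∀ u ∈ s, FPt L (u, v)) →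
    (∀ u ∈ s, ∀ u' ∈ s, u - u' ≤ H) →
    (∀ u ∈ s, ∃ m : ℤ, 0 ≤ m ∧ - fG u v = k * m ^ 2) → s.card ≤ 6 := by
  obtain ⟨C, hC, hCb⟩ := gc_bd
  refine ⟨C, hC, ?_⟩
  intro L H v k hL hH hk hH1 hH2 s hs hd hm
  by_contra hcard
  push Not at hcard
  have hne : s.Nonempty := by rw [← Finset.card_pos]; omega
  obtain ⟨a, ha⟩ : ∃ a, a = s.min' hne := ⟨_, rfl⟩
  have has : a ∈ s := by rw [ha]; exact Finset.min'_mem _ _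
  have hmin : ∀ u ∈ s, a ≤ u := by intro u hu; rw [ha]; exact Finset.min'_le _ _ hu
  have hLr : (1 : ℝ) ≤ L := by exact_mod_cast hL
  have hHr : (0 : ℝ) ≤ H := by exact_mod_cast hH
  have hFa := hs a has
  have b22 : (22 * L : ℝ) ≤ a := by exact_mod_cast hFa.u1
  have b23 : (a : ℝ) ≤ 23 * L := by exact_mod_cast hFa.u2
  have b42 : (42 * L : ℝ) ≤ v := by exact_mod_cast hFa.v1
  have b44 : (v : ℝ) ≤ 44 * L := by exact_mod_cast hFa.v2
  have hv : 0 < v := by have := hFa.v1; simp only at this; omega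
  obtain ⟨h1, h2, h3, h4, h5, h6⟩ := hCb L a v hLr b22 b23 b42 b44
  have h0 : (L : ℝ) ^ 6 ≤ gc0 a v := by
    have e := gc_expand a 0 v
    have := (hFa.G_bd hL).1
    simp only [Int.cast_zero, mul_zero, zero_pow, ne_eq, OfNat.ofNat_ne_zero, not_false_eq_true,
      add_zero] at e
    rw [← e]
    exact_mod_cast this
  obtain ⟨t0, t1, t2, t3, hT⟩ := cubic_approx C L _ _ _ _ _ _ _ hC hLr h0 h1 h2 h3 h4 h5 h6
  have hk0 : (1 : ℝ) ≤ k := by exact_mod_cast hk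
  obtain ⟨r, hr⟩ : ∃ r, r = Real.sqrt k := ⟨_, rfl⟩
  have hr2 : r ^ 2 = k := by rw [hr]; exact Real.sq_sqrt (by linarith)
  have hr1 : 1 ≤ r := by rw [hr]; exact Real.one_le_sqrt.mpr hk0
  -- shifted set
  have key : ∀ u ∈ s, ∀ m : ℤ, 0 ≤ m → - fG u v = k * m ^ 2 →
      |r * m - (t0 + t1 * ((u - a : ℤ) : ℝ) + t2 * ((u - a : ℤ) : ℝ) ^ 2 +
        t3 * ((u - a : ℤ) : ℝ) ^ 3)| ≤ 20 * C ^ 6 * H ^ 4 / L := by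
    intro u hu m hm0 hmu
    have hx0 : (0 : ℝ) ≤ ((u - a : ℤ) : ℝ) := by exact_mod_cast sub_nonneg.mpr (hmin u hu)
    have hx1 : ((u - a : ℤ) : ℝ) ≤ H := by exact_mod_cast hd u hu a has
    have hm0' : (0 : ℝ) ≤ m := by exact_mod_cast hm0
    have hsq : (r * m) ^ 2 = ((- fG u v : ℤ) : ℝ) := by
      rw [hmu]; push_cast; rw [mul_pow, hr2]
    refine (hT _ (r * m) hx0 ?_ ?_ ?_).trans ?_
    · refine le_trans ?_ hH1
      gcongr
    · have g1 : (L : ℝ) ^ 6 ≤ ((- fG u v : ℤ) : ℝ) := by exact_mod_cast ((hs u hu).G_bd hL).1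
      rw [← hsq] at g1
      apply le_of_sq_le_sq _ (by positivity)
      calc ((L : ℝ) ^ 3) ^ 2 = (L : ℝ) ^ 6 := by ring
        _ ≤ _ := g1
    · rw [hsq, ← gc_expand, add_sub_cancel]
    · gcongr
  have hdet : ∀ u0 ∈ s, ∀ u1 ∈ s, ∀ u2 ∈ s, ∀ u3 ∈ s, ∀ u4 ∈ s, ∀ m0 m1 m2 m3 m4 : ℤ,
      0 ≤ m0 → 0 ≤ m1 → 0 ≤ m2 → 0 ≤ m3 → 0 ≤ m4 →
      - fG u0 v = k * m0 ^ 2 → - fG u1 v = k * m1 ^ 2 → - fG u2 v = k * m2 ^ 2 →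
      - fG u3 v = k * m3 ^ 2 → - fG u4 v = k * m4 ^ 2 →
      dt m0 m1 m2 m3 m4 (u0 - a) (u1 - a) (u2 - a) (u3 - a) (u4 - a) = 0 := by
    intro u0 w0 u1 w1 u2 w2 u3 w3 u4 w4 m0 m1 m2 m3 m4 n0 n1 n2 n3 n4 e0 e1 e2 e3 e4
    have rg : ∀ u ∈ s, (0 : ℝ) ≤ ((u - a : ℤ) : ℝ) ∧ ((u - a : ℤ) : ℝ) ≤ H := by
      intro u hu
      exact ⟨by exact_mod_cast sub_nonneg.mpr (hmin u hu), by exact_mod_cast hd u hu a has⟩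
    have B := dt_bd H _ _ _ _ _ _ _ _ _ _ _ (rg u0 w0) (rg u1 w1) (rg u2 w2) (rg u3 w3) (rg u4 w4)
      (key u0 w0 m0 n0 e0) (key u1 w1 m1 n1 e1) (key u2 w2 m2 n2 e2) (key u3 w3 m3 n3 e3)
      (key u4 w4 m4 n4 e4)
    rw [← dt_cubic] at B
    have B2 : 5 * (20 * C ^ 6 * (H : ℝ) ^ 4 / L * H ^ 6) < 1 := by
      rw [show 5 * (20 * C ^ 6 * (H : ℝ) ^ 4 / L * H ^ 6) = 100 * C ^ 6 * H ^ 10 / L by ring,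
        div_lt_one (by linarith)]
      exact hH2
    obtain ⟨D, hD⟩ : ∃ D : ℤ, D = dt m0 m1 m2 m3 m4 (u0 - a) (u1 - a) (u2 - a) (u3 - a) (u4 - a) :=
      ⟨_, rfl⟩
    have cst : dt (m0 : ℝ) m1 m2 m3 m4 ((u0 - a : ℤ) : ℝ) ((u1 - a : ℤ) : ℝ) ((u2 - a : ℤ) : ℝ)
        ((u3 - a : ℤ) : ℝ) ((u4 - a : ℤ) : ℝ) = (D : ℝ) := by
      rw [hD]; unfold dt vd; push_cast; ring
    rw [cst, abs_mul, abs_of_pos (by linarith)] at B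
    have B3 : |(D : ℝ)| < 1 := by
      have := abs_nonneg (D : ℝ)
      nlinarith
    rw [← hD]
    have B4 : |D| < 1 := by exact_mod_cast B3
    exact Int.abs_lt_one_iff.mp B4
  -- four distinct points
  let e := s.orderEmbOfCardLe hcard.le
  have hinj := e.injective
  have hmem : ∀ i, e i ∈ s := s.orderEmbOfCardLe_mem hcard.le
  obtain ⟨m0, n0, c0⟩ := hm _ (hmem 0)
  obtain ⟨m1, n1, c1⟩ := hm _ (hmem 1)
  obtain ⟨m2, n2, c2⟩ := hm _ (hmem 2)
  obtain ⟨m3, n3, c3⟩ := hm _ (hmem 3)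
  have hne : ∀ i j, i ≠ j → (e i - a) - (e j - a) ≠ 0 := by
    intro i j hij h
    exact hij (hinj (by omega))
  have := poly_few a v k (e 0 - a) (e 1 - a) (e 2 - a) (e 3 - a) m0 m1 m2 m3 hv (by omega)
    (by
      unfold vd
      refine mul_ne_zero (mul_ne_zero (mul_ne_zero (mul_ne_zero (mul_ne_zero ?_ ?_) ?_) ?_) ?_) ?_
      all_goals exact hne _ _ (by decide)) (s.image (fun u => u - a)) (by
      intro x hx
      obtain ⟨u, hu, rfl⟩ := Finset.mem_image.mp hx
      obtain ⟨m, n, c⟩ := hm u hu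
      refine ⟨m, by rw [add_sub_cancel]; exact c, ?_⟩
      exact hdet _ (hmem 0) _ (hmem 1) _ (hmem 2) _ (hmem 3) u hu m0 m1 m2 m3 m n0 n1 n2 n3 n
        c0 c1 c2 c3 c)
  rw [Finset.card_image_of_injective _ (by intro x y h; simpa using h)] at this
  omega

theorem exc_few : ∃ C : ℝ, 1 ≤ C ∧ ∀ (L H Km : ℤ), 1 ≤ L → 1 ≤ H → 1 ≤ Km → 4 * C ^ 3 * H ≤ L →
    100 * C ^ 6 * H ^ 10 < L → ∀ s : Finset (ℤ × ℤ), (∀ P ∈ s, FPt L P) →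
    (∀ P ∈ s, ∃ k m : ℤ, 1 ≤ k ∧ k ≤ Km ∧ 0 ≤ m ∧ - fG P.1 P.2 = k * m ^ 2) →
    (s.card : ℝ) ≤ 6 * ((2 * L + 1) * Km * (L / H + 1)) := by
  obtain ⟨C, hC, hfew⟩ := interval_few
  refine ⟨C, hC, ?_⟩
  intro L H Km hL hH hKm h1 h2 s hs hk
  classical
  choose! k m k1 k2 m0 hkm using hk
  let φ : ℤ × ℤ → ℤ × ℤ × ℤ := fun P => (P.2, k P, (P.1 - 22 * L) / H)
  let T : Finset (ℤ × ℤ × ℤ) := Finset.Icc (42 * L) (44 * L) ×ˢ Finset.Icc 1 Km ×ˢ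
    Finset.Icc 0 (L / H)
  have hmap : ∀ P ∈ s, φ P ∈ T := by
    intro P hP
    have hF := hs P hP
    simp only [φ, T, Finset.mem_product, Finset.mem_Icc]
    refine ⟨⟨hF.v1, hF.v2⟩, ⟨k1 P hP, k2 P hP⟩, Int.ediv_nonneg (by linarith [hF.u1]) (by omega), ?_⟩
    exact Int.ediv_le_ediv (by omega) (by linarith [hF.u2])
  have hfib : ∀ t ∈ T, (s.filter (fun P => φ P = t)).card ≤ 6 := by
    rintro ⟨v, k', q⟩ ht
    have hpt : ∀ P ∈ s.filter (fun P => φ P = (v, k', q)), P ∈ s ∧ P.2 = v ∧ k P = k' ∧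
        (P.1 - 22 * L) / H = q := by
      intro P hP
      rw [Finset.mem_filter] at hP
      simp only [φ, Prod.mk.injEq] at hP
      exact ⟨hP.1, hP.2.1, hP.2.2.1, hP.2.2.2⟩
    have hcard : (s.filter (fun P => φ P = (v, k', q))).card =
        ((s.filter (fun P => φ P = (v, k', q))).image Prod.fst).card := by
      rw [Finset.card_image_of_injOn]
      intro P hP Q hQ hPQ
      have a := hpt P hP
      have b := hpt Q hQ
      exact Prod.ext hPQ (a.2.1.trans b.2.1.symm)
    rw [hcard]
    have hk' : 1 ≤ k' := by
      simp only [T, Finset.mem_product, Finset.mem_Icc] at ht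
      exact ht.2.1.1
    apply hfew L H v k' hL (by omega) hk' h1 h2
    · intro u hu
      obtain ⟨P, hP, rfl⟩ := Finset.mem_image.mp hu
      obtain ⟨a, b, c, d⟩ := hpt P hP
      rw [← b]; exact hs P a
    · intro u hu u' hu'
      obtain ⟨P, hP, rfl⟩ := Finset.mem_image.mp hu
      obtain ⟨Q, hQ, rfl⟩ := Finset.mem_image.mp hu'
      obtain ⟨a, b, c, d⟩ := hpt P hP
      obtain ⟨a', b', c', d'⟩ := hpt Q hQ
      have e1 := Int.mul_ediv_add_emod (P.1 - 22 * L) H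
      have e2 := Int.mul_ediv_add_emod (Q.1 - 22 * L) H
      have e3 := Int.emod_lt_of_pos (P.1 - 22 * L) (by omega : 0 < H)
      have e4 := Int.emod_nonneg (Q.1 - 22 * L) (by omega : H ≠ 0)
      rw [d] at e1
      rw [d'] at e2
      linarith
    · intro u hu
      obtain ⟨P, hP, rfl⟩ := Finset.mem_image.mp hu
      obtain ⟨a, b, c, d⟩ := hpt P hP
      refine ⟨m P, m0 P a, ?_⟩
      rw [← b, ← c]; exact hkm P a
  have h := Finset.card_le_mul_card_image_of_maps_to hmap 6 hfib
  have hT : (T.card : ℝ) ≤ (2 * L + 1) * Km * (L / H + 1) := by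
    simp only [T, Finset.card_product, Int.card_Icc]
    have c1 : (((44 * L + 1 - 42 * L).toNat : ℕ) : ℝ) = 2 * L + 1 := by
      have : ((44 * L + 1 - 42 * L).toNat : ℤ) = 2 * L + 1 := by omega
      exact_mod_cast this
    have c2 : (((Km + 1 - 1).toNat : ℕ) : ℝ) = Km := by
      have : ((Km + 1 - 1).toNat : ℤ) = Km := by omega
      exact_mod_cast this
    have c3 : (((L / H + 1 - 0).toNat : ℕ) : ℝ) ≤ L / H + 1 := by
      have h0 : 0 ≤ L / H := Int.ediv_nonneg (by omega) (by omega)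
      have : ((L / H + 1 - 0).toNat : ℤ) = L / H + 1 := by omega
      have h3 : (((L / H + 1 - 0).toNat : ℕ) : ℝ) = ((L / H : ℤ) : ℝ) + 1 := by exact_mod_cast this
      rw [h3]
      have hHr : (0 : ℝ) < H := by exact_mod_cast (by omega : 0 < H)
      have h4 : L / H * H ≤ L := Int.ediv_mul_le L (by omega)
      have h5 : ((L / H : ℤ) : ℝ) * H ≤ L := by exact_mod_cast h4
      have := (le_div_iff₀ hHr).mpr h5
      linarith
    push_cast [c1, c2]
    rw [mul_assoc]
    have hLr : (1 : ℝ) ≤ L := by exact_mod_cast hL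
    have hKr : (1 : ℝ) ≤ Km := by exact_mod_cast hKm
    gcongr
  calc (s.card : ℝ) ≤ ((6 * T.card : ℕ) : ℝ) := by exact_mod_cast h
    _ = 6 * (T.card : ℝ) := by push_cast; ring
    _ ≤ _ := by gcongr

/-! ## Structure of the good points -/

theorem nat_struct (n w g a b z N M B : ℕ) (hn : n = w * g) (hn2 : b ^ 2 * a = n) (hn0 : 0 < n)
    (hcop : ∀ p, p.Prime → p ∣ w → ¬ p ∣ g) (hw : w ≤ 10 ^ 4 * (M * N) ^ 2)
    (hg : g ≤ 10 ^ 18 * (M * N) ^ 6) (hF : (M * N) ^ 8 ≤ n) (hN : N = B ^ 80) (hM : 1 ≤ M)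
    (hB1 : 10 ^ 30 * M ^ 6 ≤ N ^ 2) (hB2 : 1012 < B ^ 2)
    (ha : ∀ p, p.Prime → z < p → 1000 * p ≤ N ^ 2 → ¬ p ^ 2 ∣ n) (hb : smo z n ≤ B ^ 2)
    (hc : ∀ p, p.Prime → p ^ 2 ∣ g → p ≤ B ^ 238) : 1012 * (M * N) ^ 2 < rou z a := by
  have hb0 : b ≠ 0 := by rintro rfl; simp at hn2; omega
  have ha0 : a ≠ 0 := by rintro rfl; simp at hn2; omega
  have hw0 : 0 < w := by rcases Nat.eq_zero_or_pos w with h | h; · simp [h] at hn; omega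
                         · exact h
  have hg0 : 0 < g := by rcases Nat.eq_zero_or_pos g with h | h; · simp [h] at hn; omega
                         · exact h
  have hBpos : 0 < B := by rcases Nat.eq_zero_or_pos B with h | h; · simp [h] at hB2
                           · exact h
  have hNpos : 0 < N := by rw [hN]; positivity
  have hM6 : M ^ 2 ≤ M ^ 6 := Nat.pow_le_pow_right hM (by norm_num)
  -- primes dividing rou b
  have hp1 : ∀ p, p.Prime → p ∣ rou z b → N ^ 2 < 1000 * p ∧ ¬ p ∣ w ∧ p ^ 2 ∣ g := by
    intro p hp hpb
    have h1 : p ∣ b := hpb.trans (rou_dvd z b hb0)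
    have h2 : p ^ 2 ∣ n := (pow_dvd_pow_of_dvd h1 2).trans ⟨a, hn2.symm⟩
    have h3 : N ^ 2 < 1000 * p := by
      by_contra h
      exact ha p hp (rou_prime z b p hp hpb) (by omega) h2
    have h4 : ¬ p ∣ w := by
      intro h4
      have h5 := hcop p hp h4
      rw [hn] at h2
      have h6 : p ^ 2 ∣ w := by
        apply Nat.Coprime.dvd_of_dvd_mul_right _ h2
        exact Nat.Coprime.pow_left 2 ((Nat.Prime.coprime_iff_not_dvd hp).mpr h5)
      have h7 := Nat.le_of_dvd hw0 h6
      have h8 : (N ^ 2) ^ 2 < (1000 * p) ^ 2 := Nat.pow_lt_pow_left h3 (by norm_num)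
      have h9 : 10 ^ 10 * M ^ 2 * N ^ 2 ≤ N ^ 2 * N ^ 2 := by
        apply Nat.mul_le_mul_right
        omega
      have h10 : (1000 * p) ^ 2 ≤ 10 ^ 6 * (10 ^ 4 * (M * N) ^ 2) := by
        calc (1000 * p) ^ 2 = 10 ^ 6 * p ^ 2 := by ring
          _ ≤ _ := Nat.mul_le_mul_left _ (h7.trans hw)
      have h11 : 10 ^ 6 * (10 ^ 4 * (M * N) ^ 2) = 10 ^ 10 * M ^ 2 * N ^ 2 := by ring
      have h12 : (N ^ 2) ^ 2 = N ^ 2 * N ^ 2 := by ring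
      omega
    refine ⟨h3, h4, ?_⟩
    rw [hn] at h2
    exact Nat.Coprime.dvd_of_dvd_mul_left
      (Nat.Coprime.pow_left 2 ((Nat.Prime.coprime_iff_not_dvd hp).mpr h4)) h2
  have hrb : rou z b ≤ B ^ 238 := by
    by_cases h1 : rou z b = 1
    · rw [h1]; exact Nat.one_le_pow _ _ hBpos
    obtain ⟨p, hp, hpd⟩ := Nat.exists_prime_and_dvd h1
    obtain ⟨t, ht⟩ := hpd
    by_cases h2 : t = 1
    · rw [ht, h2, mul_one]
      exact hc p hp (hp1 p hp ⟨t, ht⟩).2.2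
    exfalso
    obtain ⟨q, hq, hqd⟩ := Nat.exists_prime_and_dvd h2
    have hpq : p * q ∣ rou z b := by rw [ht]; exact Nat.mul_dvd_mul_left p hqd
    obtain ⟨p1, p2, p3⟩ := hp1 p hp ((dvd_mul_right p q).trans hpq)
    obtain ⟨q1, q2, q3⟩ := hp1 q hq ((dvd_mul_left q p).trans hpq)
    have h3 : (p * q) ^ 2 ∣ n :=
      (pow_dvd_pow_of_dvd (hpq.trans (rou_dvd z b hb0)) 2).trans ⟨a, hn2.symm⟩
    rw [hn] at h3
    have h4 : (p * q) ^ 2 ∣ g := by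
      apply Nat.Coprime.dvd_of_dvd_mul_left _ h3
      exact Nat.Coprime.pow_left 2 (Nat.Coprime.mul_left
        ((Nat.Prime.coprime_iff_not_dvd hp).mpr p2) ((Nat.Prime.coprime_iff_not_dvd hq).mpr q2))
    have h5 := (Nat.le_of_dvd hg0 h4).trans hg
    have h6 : (N ^ 2 * N ^ 2) ^ 2 < ((1000 * p) * (1000 * q)) ^ 2 :=
      Nat.pow_lt_pow_left (Nat.mul_lt_mul'' p1 q1) (by norm_num)
    have h7 : ((1000 * p) * (1000 * q)) ^ 2 ≤ 10 ^ 12 * (10 ^ 18 * (M * N) ^ 6) := by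
      calc _ = 10 ^ 12 * (p * q) ^ 2 := by ring
        _ ≤ _ := Nat.mul_le_mul_left _ h5
    have h8 : 10 ^ 30 * M ^ 6 * N ^ 6 ≤ N ^ 2 * N ^ 6 := Nat.mul_le_mul_right _ hB1
    have h9 : 10 ^ 12 * (10 ^ 18 * (M * N) ^ 6) = 10 ^ 30 * M ^ 6 * N ^ 6 := by ring
    have h10 : (N ^ 2 * N ^ 2) ^ 2 = N ^ 2 * N ^ 6 := by ring
    omega
  have hrn : rou z n = rou z b * rou z b * rou z a := by
    rw [← hn2, rou_mul z _ _ (by positivity) ha0, sq, rou_mul z _ _ hb0 hb0]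
  have hsr := smo_mul_rou z n hn0.ne'
  by_contra hlt
  push Not at hlt
  have k1 : n ≤ B ^ 2 * (B ^ 238 * B ^ 238 * (1012 * (M * N) ^ 2)) := by
    rw [← hsr, hrn]
    gcongr
  have k2 : B ^ 2 * (B ^ 238 * B ^ 238 * (1012 * (M * N) ^ 2)) = 1012 * (M ^ 2 * B ^ 638) := by
    rw [hN]; ring
  have k3 : (M * N) ^ 8 = M ^ 8 * B ^ 2 * B ^ 638 := by rw [hN]; ring
  have k4 : 1012 * (M ^ 2 * B ^ 638) < B ^ 2 * (M ^ 2 * B ^ 638) :=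
    Nat.mul_lt_mul_of_pos_right hB2 (by positivity)
  have k5 : M ^ 2 * (B ^ 2 * B ^ 638) ≤ M ^ 8 * (B ^ 2 * B ^ 638) :=
    Nat.mul_le_mul_right _ (Nat.pow_le_pow_right hM (by norm_num))
  have k6 : B ^ 2 * (M ^ 2 * B ^ 638) = M ^ 2 * (B ^ 2 * B ^ 638) := by ring
  have k7 : M ^ 8 * (B ^ 2 * B ^ 638) = M ^ 8 * B ^ 2 * B ^ 638 := by ring
  generalize B ^ 638 = x at *
  omega

theorem mult_card {L : ℤ} (T : Finset ℕ) (hT : ∀ p ∈ T, p.Prime) :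
    ∀ S : Finset (ℤ × ℤ), (∀ P ∈ S, FPt L P) → (∀ P ∈ S, ∀ p ∈ T, (p : ℤ) ∣ fF P.1 P.2) →
    (∀ P ∈ S, ∀ Q ∈ S, (∀ p ∈ T, (p : ℤ) ∣ P.1 * Q.2 - Q.1 * P.2) → P = Q) →
    S.card ≤ 8 ^ T.card := by
  classical
  induction T using Finset.induction_on with
  | empty =>
    intro S _ _ h
    simp only [Finset.card_empty, pow_zero]
    exact Finset.card_le_one.mpr (fun P hP Q hQ => h P hP Q hQ (by simp))
  | insert p T hpT ih =>
    intro S hS hF h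
    have : Fact p.Prime := ⟨hT p (Finset.mem_insert_self _ _)⟩
    have hmaps : ∀ P ∈ S, (P.1 : ZMod p) / (P.2 : ZMod p) ∈ (fpoly p).roots.toFinset :=
      fun P hP => (hS P hP).root p (hF P hP p (Finset.mem_insert_self _ _))
    have h1 := Finset.card_le_mul_card_image_of_maps_to hmaps (8 ^ T.card) (by
      intro t ht
      apply ih (fun q hq => hT q (Finset.mem_insert_of_mem hq))
      · intro P hP; exact hS P (Finset.mem_of_mem_filter P hP)
      · intro P hP q hq
        exact hF P (Finset.mem_of_mem_filter P hP) q (Finset.mem_insert_of_mem hq)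
      · intro P hP Q hQ hPQ
        rw [Finset.mem_filter] at hP hQ
        apply h P hP.1 Q hQ.1
        intro q hq
        rcases Finset.mem_insert.mp hq with rfl | hq
        · exact (hS P hP.1).same_root (hS Q hQ.1) q (hF P hP.1 _ (Finset.mem_insert_self _ _))
            (hF Q hQ.1 _ (Finset.mem_insert_self _ _)) (hP.2.trans hQ.2.symm)
        · exact hPQ q hq)
    rw [Finset.card_insert_of_notMem hpT, pow_succ]
    exact h1.trans (Nat.mul_le_mul_left _ (fpoly_card p))

/-- few points share a given rough squarefree divisor -/
theorem rough_mult {L : ℤ} (hL : 1 ≤ L) (z E : ℕ) (hz : 2 ≤ z) (hE : (10 : ℤ) ^ 22 * L ^ 8 ≤ z ^ E)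
    (a : ℕ) (hsq : Squarefree a) (hg : 1012 * L ^ 2 < (rou z a : ℤ)) (S : Finset (ℤ × ℤ))
    (hS : ∀ P ∈ S, FPt L P) (hF : ∀ P ∈ S, (a : ℤ) ∣ fF P.1 P.2) : S.card ≤ 8 ^ E := by
  classical
  rcases S.eq_empty_or_nonempty with rfl | ⟨P0, hP0⟩
  · simp
  have ha0 : a ≠ 0 := hsq.ne_zero
  obtain ⟨g, hgd⟩ : ∃ g, g = rou z a := ⟨_, rfl⟩
  rw [← hgd] at hg
  have hga : g ∣ a := by rw [hgd]; exact rou_dvd z a ha0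
  have hg0 : g ≠ 0 := by rintro rfl; exact ha0 (Nat.eq_zero_of_zero_dvd hga)
  have hgs : Squarefree g := hsq.squarefree_of_dvd hga
  have hgp : ∏ p ∈ g.primeFactors, p = g := Nat.prod_primeFactors_of_squarefree hgs
  have hgF : ∀ P ∈ S, (g : ℤ) ∣ fF P.1 P.2 := fun P hP =>
    (Int.natCast_dvd_natCast.mpr hga).trans (hF P hP)
  have h1 : S.card ≤ 8 ^ g.primeFactors.card := by
    apply mult_card g.primeFactors (fun p hp => Nat.prime_of_mem_primeFactors hp) S hS
    · intro P hP p hp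
      exact (Int.natCast_dvd_natCast.mpr (Nat.dvd_of_mem_primeFactors hp)).trans (hgF P hP)
    · intro P hP Q hQ h
      apply (hS P hP).eq_of_det (hS Q hQ) hL
      have hd : (g : ℤ) ∣ P.1 * Q.2 - Q.1 * P.2 := by
        rw [Int.natCast_dvd, ← hgp]
        apply Finset.prod_primes_dvd
        · intro p hp; exact (Nat.prime_of_mem_primeFactors hp).prime
        · intro p hp; exact Int.natCast_dvd.mp (h p hp)
      exact Int.eq_zero_of_abs_lt_dvd hd (lt_of_le_of_lt ((hS P hP).det_lt (hS Q hQ) hL) hg)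
  have h2 : z ^ g.primeFactors.card ≤ z ^ E := by
    have e1 : z ^ g.primeFactors.card ≤ g := by
      conv_rhs => rw [← hgp]
      apply Finset.pow_card_le_prod
      intro p hp
      have := rou_prime z a p (Nat.prime_of_mem_primeFactors hp)
        (by rw [← hgd]; exact Nat.dvd_of_mem_primeFactors hp)
      exact this.le
    have e2 : (g : ℤ) ≤ 10 ^ 22 * L ^ 8 := by
      have := (hS P0 hP0).F_bd hL
      have k := Int.le_of_dvd (by linarith [(hS P0 hP0).F_neg hL]) ((dvd_neg).mpr (hgF P0 hP0))
      linarith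
    have e3 : (g : ℤ) ≤ ((z ^ E : ℕ) : ℤ) := by push_cast; exact e2.trans hE
    exact e1.trans (by exact_mod_cast e3)
  have h3 : g.primeFactors.card ≤ E := (Nat.pow_le_pow_iff_right (by omega)).mp h2
  exact h1.trans (Nat.pow_le_pow_right (by norm_num) h3)

/-! ## Counting the good points -/

theorem bad1 {L : ℤ} (hL : 1 ≤ L) (s : Finset (ℤ × ℤ)) (hs : ∀ P ∈ s, FPt L P) (z Y : ℕ)
    (hz : 1 ≤ z) (t : Finset (ℤ × ℤ)) (hts : t ⊆ s)
    (ht : ∀ P ∈ t, ∃ p : ℕ, p.Prime ∧ z < p ∧ p ≤ Y ∧ (p : ℤ) ^ 2 ∣ fF P.1 P.2) :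
    (t.card : ℝ) ≤ 16 * Y + 16000 * (L : ℝ) ^ 2 / z := by
  classical
  have hsub : t ⊆ ((Finset.Ioc z Y).filter Nat.Prime).biUnion
      (fun p => s.filter (fun P => (p : ℤ) ^ 2 ∣ fF P.1 P.2)) := by
    intro P hP
    obtain ⟨p, h1, h2, h3, h4⟩ := ht P hP
    simp only [Finset.mem_biUnion, Finset.mem_filter, Finset.mem_Ioc]
    exact ⟨p, ⟨⟨h2, h3⟩, h1⟩, hts hP, h4⟩
  have h1 : (t.card : ℝ) ≤ ∑ p ∈ (Finset.Ioc z Y).filter Nat.Prime,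
      ((s.filter (fun P => (p : ℤ) ^ 2 ∣ fF P.1 P.2)).card : ℝ) := by
    exact_mod_cast (Finset.card_le_card hsub).trans Finset.card_biUnion_le
  have h2 : ∑ p ∈ (Finset.Ioc z Y).filter Nat.Prime,
      ((s.filter (fun P => (p : ℤ) ^ 2 ∣ fF P.1 P.2)).card : ℝ) ≤
      ∑ p ∈ (Finset.Ioc z Y).filter Nat.Prime, (16 + 16000 * (L : ℝ) ^ 2 / (p : ℝ) ^ 2) := by
    apply Finset.sum_le_sum
    intro p hp
    exact pow_card hL s hs p 2 (Finset.mem_filter.mp hp).2 (by norm_num)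
  have h3 : ∑ p ∈ (Finset.Ioc z Y).filter Nat.Prime, (16 + 16000 * (L : ℝ) ^ 2 / (p : ℝ) ^ 2) ≤
      ∑ p ∈ Finset.Ioc z Y, (16 + 16000 * (L : ℝ) ^ 2 / (p : ℝ) ^ 2) := by
    apply Finset.sum_le_sum_of_subset_of_nonneg (Finset.filter_subset _ _)
    intros; positivity
  have h4 : ∑ p ∈ Finset.Ioc z Y, (16 + 16000 * (L : ℝ) ^ 2 / (p : ℝ) ^ 2) =
      16 * (Finset.Ioc z Y).card + 16000 * (L : ℝ) ^ 2 * ∑ p ∈ Finset.Ioc z Y, ((p : ℝ) ^ 2)⁻¹ := by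
    rw [Finset.sum_add_distrib, Finset.mul_sum]
    simp [div_eq_mul_inv, mul_comm]
  have h5 : ∑ p ∈ Finset.Ioc z Y, ((p : ℝ) ^ 2)⁻¹ ≤ (z : ℝ)⁻¹ := by
    rcases le_or_gt z Y with h | h
    · refine (sum_Ioc_inv_sq_le_sub (by omega) h).trans ?_
      have : (0 : ℝ) ≤ (Y : ℝ)⁻¹ := by positivity
      linarith
    · rw [Finset.Ioc_eq_empty (by omega)]; simp
  have h6 : ((Finset.Ioc z Y).card : ℝ) ≤ Y := by
    rw [Nat.card_Ioc]; exact_mod_cast Nat.sub_le _ _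
  calc (t.card : ℝ) ≤ _ := h1.trans (h2.trans (h3.trans h4.le))
    _ ≤ 16 * Y + 16000 * (L : ℝ) ^ 2 * (z : ℝ)⁻¹ := by gcongr
    _ = _ := by rw [div_eq_mul_inv]

theorem bad2 {L : ℤ} (hL : 1 ≤ L) (s : Finset (ℤ × ℤ)) (hs : ∀ P ∈ s, FPt L P) (i J j : ℕ)
    (hi : 1 ≤ i) (hj : 1 ≤ j)
    (hJ : (10 : ℤ) ^ 22 * L ^ 8 < 2 ^ J) (t : Finset (ℤ × ℤ)) (hts : t ⊆ s)
    (ht : ∀ P ∈ t, (2 ^ (j * i)) ^ 2 < smo (2 ^ i) (fF P.1 P.2).natAbs) :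
    (t.card : ℝ) ≤ (32 * J * 2 ^ i + 128000 * (L : ℝ) ^ 2) / j := by
  have h1 := smooth_sum hL t (fun P hP => hs P (hts hP)) i J hJ
  have h2 : ∑ P ∈ t, ((j : ℝ) * i) ≤ ∑ P ∈ t, Real.log (smo (2 ^ i) (fF P.1 P.2).natAbs) := by
    apply Finset.sum_le_sum
    intro P hP
    have h3 := ht P hP
    have h4 : (((2 ^ (j * i)) ^ 2 : ℕ) : ℝ) < smo (2 ^ i) (fF P.1 P.2).natAbs := by
      exact_mod_cast h3
    have h5 := Real.log_le_log (by positivity) h4.le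
    push_cast at h5
    rw [Real.log_pow, Real.log_pow] at h5
    have h6 := Real.log_two_gt_d9
    push_cast at h5
    have h7 : (0 : ℝ) ≤ j * i := by positivity
    nlinarith
  rw [Finset.sum_const, nsmul_eq_mul] at h2
  have hir : (1 : ℝ) ≤ i := by exact_mod_cast hi
  have hjr : (1 : ℝ) ≤ j := by exact_mod_cast hj
  rw [le_div_iff₀ (by linarith)]
  have h3 : (t.card * j : ℝ) * i ≤ (32 * J * 2 ^ i + 128000 * (L : ℝ) ^ 2) * i := by
    calc _ = (t.card : ℝ) * (j * i) := by ring
      _ ≤ _ := h2.trans h1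
      _ = _ := by ring
  exact le_of_mul_le_mul_right h3 (by linarith)

structure Gd (N B z : ℕ) (P : ℤ × ℤ) : Prop where
  a : ∀ p : ℕ, p.Prime → z < p → 1000 * p ≤ N ^ 2 → ¬ (p : ℤ) ^ 2 ∣ fF P.1 P.2
  b : smo z (fF P.1 P.2).natAbs ≤ B ^ 2
  c : ∀ p : ℕ, p.Prime → (p : ℤ) ^ 2 ∣ fG P.1 P.2 → p ≤ B ^ 238

theorem Gd_struct (M N B z : ℕ) (hM : (M : ℤ) = fM) (hN : N = B ^ 80)
    (hB1 : 10 ^ 30 * M ^ 6 ≤ N ^ 2) (hB2 : 1012 < B ^ 2) (P : ℤ × ℤ)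
    (hP : FPt (fM * N) P) (h : Gd N B z P) :
    ∃ (a : ℕ) (s : ℤ), Squarefree a ∧ fF P.1 P.2 = (-(a : ℤ)) * s ^ 2 ∧
      1012 * (fM * N) ^ 2 < (rou z a : ℤ) := by
  have hM1 : 1 ≤ M := by have := fM_pos; omega
  have hN1 : 1 ≤ N := by
    rcases Nat.eq_zero_or_pos N with h | h
    · rw [h] at hB1
      have : 0 < M ^ 6 := by positivity
      omega
    · exact h
  have hL : 1 ≤ fM * (N : ℤ) := by
    have := fM_pos
    have : (1 : ℤ) ≤ N := by exact_mod_cast hN1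
    nlinarith
  obtain ⟨a, b, hab, hsq⟩ := Nat.sq_mul_squarefree (fF P.1 P.2).natAbs
  have hF := hP.F_bd hL
  have hG := hP.G_bd hL
  have hW := hP.W_bd hL
  have hneg := hP.F_neg hL
  have l2 : 0 < (fM * (N : ℤ)) ^ 2 := by positivity
  have l6 : 0 < (fM * (N : ℤ)) ^ 6 := by positivity
  have cF : ((fF P.1 P.2).natAbs : ℤ) = - fF P.1 P.2 := by omega
  have cG : ((fG P.1 P.2).natAbs : ℤ) = - fG P.1 P.2 := by omega
  have cW : ((fW P.1 P.2).natAbs : ℤ) = fW P.1 P.2 := by omega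
  refine ⟨a, b, hsq, ?_, ?_⟩
  · have : ((b ^ 2 * a : ℕ) : ℤ) = - fF P.1 P.2 := by rw [hab, cF]
    push_cast at this
    linear_combination this
  · have := nat_struct (fF P.1 P.2).natAbs (fW P.1 P.2).natAbs (fG P.1 P.2).natAbs a b z N M B
      (by rw [← Int.natAbs_mul]; rfl) hab (by omega)
      (fun p hp h1 h2 => hP.not_WG p hp (Int.natCast_dvd.mpr h1) (Int.natCast_dvd.mpr h2))
      (by zify; rw [← Int.natCast_natAbs, cW, hM]; exact hW.2)
      (by zify; rw [← Int.natCast_natAbs, cG, hM]; exact hG.2)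
      (by zify; rw [← Int.natCast_natAbs, cF, hM]; exact hF.1)
      hN hM1 hB1 hB2
      (fun p hp h1 h2 h3 => h.a p hp h1 h2 (by
        have := Int.natCast_dvd.mpr h3
        push_cast at this
        exact this)) h.b
      (fun p hp h3 => h.c p hp (by
        have := Int.natCast_dvd.mpr h3
        push_cast at this
        exact this))
    rw [← hM]
    exact_mod_cast this

theorem bad3 (C : ℝ)
    (hC : ∀ (L H Km : ℤ), 1 ≤ L → 1 ≤ H → 1 ≤ Km → 4 * C ^ 3 * H ≤ L →
    100 * C ^ 6 * H ^ 10 < L → ∀ s : Finset (ℤ × ℤ), (∀ P ∈ s, FPt L P) →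
    (∀ P ∈ s, ∃ k m : ℤ, 1 ≤ k ∧ k ≤ Km ∧ 0 ≤ m ∧ - fG P.1 P.2 = k * m ^ 2) →
    (s.card : ℝ) ≤ 6 * ((2 * L + 1) * Km * (L / H + 1)))
    (M N B : ℕ) (hM : (M : ℤ) = fM) (hN : N = B ^ 80) (hB : 2 ≤ B) (h1 : 4 * C ^ 3 ≤ B)
    (h2 : 100 * C ^ 6 < B) (t : Finset (ℤ × ℤ)) (ht : ∀ P ∈ t, FPt (fM * N) P)
    (htp : ∀ P ∈ t, ∃ p : ℕ, p.Prime ∧ B ^ 238 < p ∧ (p : ℤ) ^ 2 ∣ fG P.1 P.2) :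
    (t.card : ℝ) * B ≤ 36 * 10 ^ 18 * M ^ 8 * N ^ 2 := by
  have hM1 : 1 ≤ M := by have := fM_pos; omega
  have hMr : (1 : ℝ) ≤ M := by exact_mod_cast hM1
  have hBr : (1 : ℝ) ≤ B := by exact_mod_cast (by omega : 1 ≤ B)
  have hNr : (N : ℝ) = (B : ℝ) ^ 80 := by rw [hN]; push_cast; rfl
  have hN1 : (1 : ℝ) ≤ N := by rw [hNr]; exact one_le_pow₀ hBr
  have hL1r : (1 : ℝ) ≤ M * N := by nlinarith
  have hL1 : (1 : ℤ) ≤ fM * N := by rw [← hM]; exact_mod_cast hL1r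
  have hLr : ((fM * N : ℤ) : ℝ) = M * N := by rw [← hM]; push_cast; rfl
  have hNL : (N : ℝ) ≤ M * N := by nlinarith
  have key := hC (fM * N) (B ^ 5) (10 ^ 18 * fM ^ 6 * B ^ 4) hL1
    (one_le_pow₀ (by omega)) (by
      have a1 : (1 : ℤ) ≤ fM ^ 6 := one_le_pow₀ (by omega)
      have a2 : (1 : ℤ) ≤ (B : ℤ) ^ 4 := one_le_pow₀ (by omega)
      nlinarith) (by
      rw [hLr]; push_cast
      calc 4 * C ^ 3 * (B : ℝ) ^ 5 ≤ B * (B : ℝ) ^ 5 := by gcongr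
        _ = (B : ℝ) ^ 6 := by ring
        _ ≤ (B : ℝ) ^ 80 := pow_le_pow_right₀ hBr (by norm_num)
        _ ≤ _ := by rw [← hNr]; exact hNL) (by
      rw [hLr]; push_cast
      calc 100 * C ^ 6 * ((B : ℝ) ^ 5) ^ 10 < B * ((B : ℝ) ^ 5) ^ 10 := by gcongr
        _ = (B : ℝ) ^ 51 := by ring
        _ ≤ (B : ℝ) ^ 80 := pow_le_pow_right₀ hBr (by norm_num)
        _ ≤ _ := by rw [← hNr]; exact hNL) t ht (by
      intro P hP
      obtain ⟨p, hp, hpB, k, hk⟩ := htp P hP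
      have hG := (ht P hP).G_bd hL1
      have l6 : 0 < (fM * (N : ℤ)) ^ 6 := by positivity
      have hp2 : (0 : ℤ) < (p : ℤ) ^ 2 := by have := hp.pos; positivity
      have hk1 : 1 ≤ -k := by
        by_contra hcon
        have : 0 ≤ k := by omega
        have : 0 ≤ (p : ℤ) ^ 2 * k := by positivity
        linarith [hG.1]
      refine ⟨-k, p, hk1, ?_, by positivity, by rw [hk]; ring⟩
      have e1 : ((B : ℤ) ^ 238) ^ 2 ≤ (p : ℤ) ^ 2 := by
        have : (B : ℤ) ^ 238 ≤ p := by exact_mod_cast hpB.le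
        exact pow_le_pow_left₀ (by positivity) this 2
      have e2 : (-k) * ((B : ℤ) ^ 238) ^ 2 ≤ 10 ^ 18 * (fM * N) ^ 6 := by
        have : (-k) * ((B : ℤ) ^ 238) ^ 2 ≤ (-k) * (p : ℤ) ^ 2 :=
          mul_le_mul_of_nonneg_left e1 (by omega)
        have e3 : (-k) * (p : ℤ) ^ 2 = - fG P.1 P.2 := by rw [hk]; ring
        linarith [hG.2]
      have e4 : (10 : ℤ) ^ 18 * (fM * N) ^ 6 = (10 ^ 18 * fM ^ 6 * B ^ 4) * ((B : ℤ) ^ 238) ^ 2 := by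
        rw [hN]; push_cast; ring
      rw [e4] at e2
      exact le_of_mul_le_mul_right e2 (by positivity))
  rw [hLr] at key
  have hMr' : (fM : ℝ) = M := by rw [← hM]; push_cast; rfl
  push_cast at key
  rw [hMr'] at key
  have hq : (M * N : ℝ) / (B : ℝ) ^ 5 + 1 ≤ 2 * ((M * N : ℝ) / (B : ℝ) ^ 5) := by
    have : 1 ≤ (M * N : ℝ) / (B : ℝ) ^ 5 := by
      rw [le_div_iff₀ (by positivity), one_mul]
      refine le_trans ?_ hNL
      rw [hNr]; exact pow_le_pow_right₀ hBr (by norm_num)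
    linarith
  have hq2 : (2 * (M * N : ℝ) + 1) ≤ 3 * (M * N) := by linarith
  have key2 : (t.card : ℝ) ≤ 6 * ((3 * (M * N)) * (10 ^ 18 * (M : ℝ) ^ 6 * (B : ℝ) ^ 4) *
      (2 * ((M * N : ℝ) / (B : ℝ) ^ 5))) := by
    refine key.trans ?_
    gcongr
    norm_num
  calc (t.card : ℝ) * B ≤ (6 * ((3 * (M * N)) * (10 ^ 18 * (M : ℝ) ^ 6 * (B : ℝ) ^ 4) *
      (2 * ((M * N : ℝ) / (B : ℝ) ^ 5)))) * B := by gcongr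
    _ = _ := by
      have : (B : ℝ) ≠ 0 := by linarith
      field_simp
      ring

theorem count_good : ∃ j i0 : ℕ, 1 ≤ j ∧ 1 ≤ i0 ∧ ∀ i, i0 ≤ i → ∀ M N B : ℕ, (M : ℤ) = fM →
    B = 2 ^ (j * i) → N = B ^ 80 →
    10 ^ 30 * M ^ 6 ≤ N ^ 2 ∧ 1012 < B ^ 2 ∧
    (10 : ℤ) ^ 22 * (fM * N) ^ 8 < 2 ^ (i * (640 * j + 1)) ∧
    ∃ t : Finset (ℤ × ℤ), (∀ P ∈ t, FPt (fM * N) P ∧ Gd N B (2 ^ i) P) ∧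
      (1 / 5 : ℝ) * N ^ 2 ≤ t.card := by
  obtain ⟨C, hC1, hC⟩ := exc_few
  obtain ⟨M, hM⟩ : ∃ M : ℕ, (M : ℤ) = fM := ⟨fM.toNat, by have := fM_pos; omega⟩
  have hM1 : 1 ≤ M := by have := fM_pos; omega
  have hMr : (1 : ℝ) ≤ M := by exact_mod_cast hM1
  obtain ⟨A, hA⟩ : ∃ A : ℝ, A = 4 * C ^ 3 + (100 * C ^ 6 + 1) + 36 * 20 * 10 ^ 18 * M ^ 8 +
    16000 * 40 * M ^ 2 + 10 ^ 6 + 10 ^ 30 * M ^ 6 + (10 ^ 22 * M ^ 8 + 1) := ⟨_, rfl⟩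
  obtain ⟨i0, hi0⟩ := pow_unbounded_of_one_lt A (by norm_num : (1 : ℝ) < 2)
  have p1 : 0 < 4 * C ^ 3 := by positivity
  have p2 : 0 < 100 * C ^ 6 := by positivity
  have p3 : 0 < 36 * 20 * 10 ^ 18 * (M : ℝ) ^ 8 := by positivity
  have p4 : 0 < 16000 * 40 * (M : ℝ) ^ 2 := by positivity
  have p5 : 0 < 10 ^ 30 * (M : ℝ) ^ 6 := by positivity
  have p6 : 0 < 10 ^ 22 * (M : ℝ) ^ 8 := by positivity
  refine ⟨128000 * 20 * M ^ 2, i0 + 1, ?_, by omega, ?_⟩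
  · have : 0 < 128000 * 20 * M ^ 2 := by positivity
    exact this
  intro i hi M' N B hM' hB hN
  obtain rfl : M = M' := by
    have : (M : ℤ) = M' := by rw [hM, hM']
    exact_mod_cast this
  obtain ⟨j, hj⟩ : ∃ j, j = 128000 * 20 * M ^ 2 := ⟨_, rfl⟩
  rw [← hj] at hB ⊢
  have hj1 : 1 ≤ j := by
    have : 0 < 128000 * 20 * M ^ 2 := by positivity
    rw [hj]; exact this
  have hjr : (1 : ℝ) ≤ j := by exact_mod_cast hj1
  obtain ⟨x, hx⟩ : ∃ x : ℝ, x = 2 ^ i := ⟨_, rfl⟩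
  have hxA : A ≤ x := by
    rw [hx]; exact hi0.le.trans (pow_le_pow_right₀ (by norm_num) (by omega))
  have hx1 : (10 : ℝ) ^ 6 ≤ x := by linarith
  have hBr : (B : ℝ) = x ^ j := by rw [hB, hx]; push_cast; rw [mul_comm, pow_mul]
  have hBx : x ≤ B := by rw [hBr]; exact le_self_pow₀ (by linarith) (by omega)
  have hNr : (N : ℝ) = (B : ℝ) ^ 80 := by rw [hN]; push_cast; rfl
  have hB1 : (1 : ℝ) ≤ B := by linarith
  have hNB3 : (B : ℝ) ^ 3 ≤ N ^ 2 := by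
    rw [hNr, ← pow_mul]; exact pow_le_pow_right₀ hB1 (by norm_num)
  have hNB1 : (B : ℝ) ≤ N ^ 2 := (le_self_pow₀ hB1 (by norm_num)).trans hNB3
  have hNB : (B : ℝ) ≤ N := by rw [hNr]; exact le_self_pow₀ hB1 (by norm_num)
  have hN1 : (1 : ℝ) ≤ N := by linarith
  have hL1r : (1 : ℝ) ≤ M * N := by nlinarith
  have hL1 : (1 : ℤ) ≤ fM * N := by rw [← hM]; exact_mod_cast hL1r
  have hLr : ((fM * N : ℤ) : ℝ) = M * N := by rw [← hM]; push_cast; rfl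
  have r1 : 10 ^ 30 * M ^ 6 ≤ N ^ 2 := by
    have : (10 : ℝ) ^ 30 * M ^ 6 ≤ N ^ 2 := by linarith
    exact_mod_cast this
  have r2 : 1012 < B ^ 2 := by
    have : (1012 : ℝ) < B ^ 2 := by nlinarith
    exact_mod_cast this
  have r3 : (10 : ℤ) ^ 22 * (fM * N) ^ 8 < 2 ^ (i * (640 * j + 1)) := by
    have : (10 : ℝ) ^ 22 * (M * N) ^ 8 < 2 ^ (i * (640 * j + 1)) := by
      calc (10 : ℝ) ^ 22 * (M * N) ^ 8 = (10 ^ 22 * M ^ 8) * (N : ℝ) ^ 8 := by ring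
        _ < x * (N : ℝ) ^ 8 := by
          apply mul_lt_mul_of_pos_right (by linarith) (by positivity)
        _ = _ := by rw [hNr, hBr, pow_mul, ← hx]; ring
    rw [← hM]
    exact_mod_cast this
  refine ⟨r1, r2, r3, ?_⟩
  classical
  have hbp : ∀ P ∈ box N, FPt (fM * N) P := fun P hP => box_pt N P hP
  refine ⟨(box N).filter (fun P => Gd N B (2 ^ i) P), ?_, ?_⟩
  · intro P hP
    rw [Finset.mem_filter] at hP
    exact ⟨hbp P hP.1, hP.2⟩
  let t1 := (box N).filter (fun P => ∃ p : ℕ, p.Prime ∧ 2 ^ i < p ∧ p ≤ N ^ 2 / 1000 ∧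
    (p : ℤ) ^ 2 ∣ fF P.1 P.2)
  let t2 := (box N).filter (fun P => (2 ^ (j * i)) ^ 2 < smo (2 ^ i) (fF P.1 P.2).natAbs)
  let t3 := (box N).filter (fun P => ∃ p : ℕ, p.Prime ∧ B ^ 238 < p ∧ (p : ℤ) ^ 2 ∣ fG P.1 P.2)
  have hcover : box N ⊆ (box N).filter (fun P => Gd N B (2 ^ i) P) ∪ (t1 ∪ (t2 ∪ t3)) := by
    intro P hP
    by_contra hcon
    simp only [Finset.mem_union, Finset.mem_filter, t1, t2, t3, hP, true_and, not_or, not_exists,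
      not_and, not_lt] at hcon
    obtain ⟨c0, c1, c2, c3⟩ := hcon
    apply c0
    refine ⟨?_, ?_, ?_⟩
    · intro p hp h1 h2
      exact c1 p hp h1 ((Nat.le_div_iff_mul_le (by norm_num)).mpr (by omega))
    · rw [hB]; exact c2
    · intro p hp h1
      by_contra h2
      exact c3 p hp (by omega) h1
  have b1 := bad1 hL1 (box N) hbp (2 ^ i) (N ^ 2 / 1000) Nat.one_le_two_pow t1
    (Finset.filter_subset _ _) (fun P hP => (Finset.mem_filter.mp hP).2)
  have b2 := bad2 hL1 (box N) hbp i (i * (640 * j + 1)) j (by omega) hj1 r3 t2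
    (Finset.filter_subset _ _) (fun P hP => (Finset.mem_filter.mp hP).2)
  have b3 := bad3 C hC M N B hM hN (by
      have : (2 : ℝ) ≤ B := by linarith
      exact_mod_cast this) (by linarith) (by linarith) t3
    (fun P hP => hbp P (Finset.mem_filter.mp hP).1) (fun P hP => (Finset.mem_filter.mp hP).2)
  have b0 := box_card N (by
    have : (1380 : ℝ) ≤ N := by linarith
    exact_mod_cast this)
  have hN2 : (0 : ℝ) < (N : ℝ) ^ 2 := by positivity
  have c1 : (t1.card : ℝ) ≤ 41 / 1000 * N ^ 2 := by
    rw [hLr] at b1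
    push_cast at b1
    rw [← hx] at b1
    have e1 : ((N ^ 2 / 1000 : ℕ) : ℝ) ≤ N ^ 2 / 1000 := by
      have := @Nat.cast_div_le ℝ _ _ _ (N ^ 2) 1000
      push_cast at this
      exact this
    have e2 : 16000 * ((M : ℝ) * N) ^ 2 / x ≤ N ^ 2 / 40 := by
      rw [div_le_div_iff₀ (by linarith) (by norm_num)]
      calc 16000 * ((M : ℝ) * N) ^ 2 * 40 = N ^ 2 * (16000 * 40 * (M : ℝ) ^ 2) := by ring
        _ ≤ _ := by
          apply mul_le_mul_of_nonneg_left _ hN2.le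
          linarith
    linarith
  have c2 : (t2.card : ℝ) ≤ 1 / 10 * N ^ 2 := by
    rw [hLr] at b2
    push_cast at b2
    rw [← hx] at b2
    refine b2.trans ?_
    rw [div_le_iff₀ (by linarith)]
    have hir : (i : ℝ) ≤ x := by
      rw [hx]; exact_mod_cast Nat.lt_two_pow_self.le
    have e1 : 32 * ((i : ℝ) * (640 * j + 1)) * x ≤ 1 / 20 * N ^ 2 * j := by
      calc 32 * ((i : ℝ) * (640 * j + 1)) * x ≤ 32 * (x * (641 * j)) * x := by
            gcongr; linarith
        _ = (20512 * x ^ 2) * j := by ring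
        _ ≤ (1 / 20 * x ^ 3) * j := by
            gcongr ?_ * _
            nlinarith [sq_nonneg x]
        _ ≤ _ := by
            gcongr ?_ * _
            apply mul_le_mul_of_nonneg_left _ (by norm_num)
            exact (pow_le_pow_left₀ (by linarith) hBx 3).trans hNB3
    have e2 : 128000 * ((M : ℝ) * N) ^ 2 = 1 / 20 * N ^ 2 * j := by
      rw [hj]; push_cast; ring
    linarith
  have c3 : (t3.card : ℝ) ≤ 1 / 20 * N ^ 2 := by
    have : (t3.card : ℝ) * B ≤ (1 / 20 * N ^ 2) * B := by
      refine b3.trans ?_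
      calc 36 * 10 ^ 18 * (M : ℝ) ^ 8 * N ^ 2 = (1 / 20 * N ^ 2) * (36 * 20 * 10 ^ 18 * M ^ 8) := by
            ring
        _ ≤ _ := by
            apply mul_le_mul_of_nonneg_left _ (by positivity)
            linarith
    exact le_of_mul_le_mul_right this (by linarith)
  have hcard : ((box N).card : ℝ) ≤ ((box N).filter (fun P => Gd N B (2 ^ i) P)).card +
      (t1.card + (t2.card + t3.card)) := by
    have h1 := Finset.card_le_card hcover
    have h2 := Finset.card_union_le ((box N).filter (fun P => Gd N B (2 ^ i) P)) (t1 ∪ (t2 ∪ t3))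
    have h3 := Finset.card_union_le t1 (t2 ∪ t3)
    have h4 := Finset.card_union_le t2 t3
    exact_mod_cast (by omega : (box N).card ≤ ((box N).filter (fun P => Gd N B (2 ^ i) P)).card +
      (t1.card + (t2.card + t3.card)))
  linarith

/-! ## Conclusion -/

theorem good_finite (X : ℝ) : {d : ℤ | GoodRank7sq X d}.Finite := by
  apply (Set.finite_Icc (-⌈X⌉) 0).subset
  rintro d ⟨hd, hsq, h⟩
  obtain ⟨K, iF, iN, ⟨x, hx⟩, hfr⟩ := qf_exists d hd
  have h1 := (h K ⟨x, hx⟩ hfr).1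
  have h2 := (qf_discr d hd hsq x hx hfr).1
  have h3 : ((|d| : ℤ) : ℝ) ≤ X := by
    refine le_trans ?_ h1
    exact_mod_cast h2
  have h4 : |d| ≤ ⌈X⌉ := by
    have := h3.trans (Int.le_ceil X)
    exact_mod_cast this
  exact ⟨(abs_le.mp h4).1, hd.le⟩

theorem good_of_point (X : ℝ) (L : ℤ) (hL : 1 ≤ L) (P : ℤ × ℤ) (hP : FPt L P) (a z : ℕ) (s : ℤ)
    (hsq : Squarefree a) (hF : fF P.1 P.2 = (-(a : ℤ)) * s ^ 2) (hg : 1012 * L ^ 2 < (rou z a : ℤ))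
    (hX : 4 * 10 ^ 22 * (L : ℝ) ^ 8 ≤ X) : GoodRank7sq X (-(a : ℤ)) := by
  have ha0 : a ≠ 0 := hsq.ne_zero
  have h1 : rou z a ≤ a := Nat.le_of_dvd (by omega) (rou_dvd z a ha0)
  have hL2 : 1 ≤ L ^ 2 := one_le_pow₀ hL
  have ha4 : (-(a : ℤ)) < -4 := by
    have : (rou z a : ℤ) ≤ a := by exact_mod_cast h1
    omega
  have hsq' : Squarefree (-(a : ℤ)) := by
    rw [Int.squarefree_natAbs.symm]
    simpa using hsq
  refine ⟨by omega, hsq', ?_⟩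
  intro K _ _ hx hfr
  obtain ⟨x, hx⟩ := hx
  constructor
  · have h2 := (qf_discr (-(a : ℤ)) (by omega) hsq' x hx hfr).2
    rw [abs_neg, Nat.abs_cast] at h2
    have h3 : (a : ℤ) ≤ 10 ^ 22 * L ^ 8 := by
      have hb := (hP.F_bd hL).2
      have hn := hP.F_neg hL
      have : (a : ℤ) ∣ - fF P.1 P.2 := ⟨s ^ 2, by rw [hF]; ring⟩
      exact (Int.le_of_dvd (by omega) this).trans hb
    have h4 : |discr K| ≤ 4 * 10 ^ 22 * L ^ 8 := by linarith
    refine le_trans ?_ hX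
    exact_mod_cast h4
  · exact fam_class K (-(a : ℤ)) ha4 hsq' x hx hfr P.1 P.2 s hP.cop hP.hu hP.hv hF

/-- Byeon: there are `≫ X^(1/4)` imaginary quadratic fields with `|d_k| ≤ X`
whose ideal class group has 7-rank at least 2. -/
theorem count_imag_quad_7rank_two_quarter :
    ∃ c : ℝ, 0 < c ∧ ∃ X₀ : ℝ, ∀ X : ℝ, X₀ ≤ X →
      c * X ^ ((1 : ℝ) / 4) ≤ ({d : ℤ | GoodRank7sq X d}.ncard : ℝ) := by
  obtain ⟨j, i0, hj, hi0, hcount⟩ := count_good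
  obtain ⟨M, hM⟩ : ∃ M : ℕ, (M : ℤ) = fM := ⟨fM.toNat, by have := fM_pos; omega⟩
  have hM1 : 1 ≤ M := by have := fM_pos; omega
  have hMr : (1 : ℝ) ≤ M := by exact_mod_cast hM1
  obtain ⟨q, hq⟩ : ∃ q : ℝ, q = 2 ^ (640 * j) := ⟨_, rfl⟩
  obtain ⟨c0, hc0⟩ : ∃ c0 : ℝ, c0 = 4 * 10 ^ 22 * M ^ 8 := ⟨_, rfl⟩
  have hc1 : 1 ≤ c0 := by
    rw [hc0]
    have : (1 : ℝ) ≤ (M : ℝ) ^ 8 := one_le_pow₀ hMr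
    linarith
  have hq1 : 1 < q := by rw [hq]; exact one_lt_pow₀ (by norm_num) (by omega)
  have hE : (0 : ℝ) < 8 ^ (640 * j + 1) := by positivity
  refine ⟨1 / (5 * 8 ^ (640 * j + 1) * (c0 * q)), by positivity, c0 * q ^ i0, ?_⟩
  intro X hX
  have hc0p : 0 < c0 := by linarith
  have hXc : q ^ i0 ≤ X / c0 := by rw [le_div_iff₀ hc0p]; linarith
  obtain ⟨i, hi1, hi2⟩ := exists_nat_pow_near ((one_le_pow₀ hq1.le).trans hXc) hq1
  have hi : i0 ≤ i := by
    have := (pow_lt_pow_iff_right₀ hq1).mp (lt_of_le_of_lt hXc hi2)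
    omega
  obtain ⟨B, hB⟩ : ∃ B : ℕ, B = 2 ^ (j * i) := ⟨_, rfl⟩
  obtain ⟨N, hN⟩ : ∃ N : ℕ, N = B ^ 80 := ⟨_, rfl⟩
  obtain ⟨r1, r2, r3, t, ht, htc⟩ := hcount i hi M N B hM hB hN
  have hBpos : 0 < B := by rw [hB]; positivity
  have hNpos : 0 < N := by rw [hN]; positivity
  have hNr : (N : ℝ) ^ 8 = q ^ i := by
    rw [hN, hB, hq]; push_cast
    rw [← pow_mul, ← pow_mul, ← pow_mul]
    congr 1; ring
  have hL1 : (1 : ℤ) ≤ fM * N := by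
    rw [← hM]; exact_mod_cast Nat.mul_pos hM1 hNpos
  have hLr : ((fM * N : ℤ) : ℝ) = M * N := by rw [← hM]; push_cast; rfl
  have hXL : 4 * 10 ^ 22 * ((fM * N : ℤ) : ℝ) ^ 8 ≤ X := by
    rw [le_div_iff₀ hc0p] at hi1
    rw [hLr]
    calc 4 * 10 ^ 22 * ((M : ℝ) * N) ^ 8 = (N : ℝ) ^ 8 * c0 := by rw [hc0]; ring
      _ ≤ X := by rw [hNr]; exact hi1
  classical
  have hst : ∀ P ∈ t, ∃ (a : ℕ) (s : ℤ), Squarefree a ∧ fF P.1 P.2 = (-(a : ℤ)) * s ^ 2 ∧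
      1012 * (fM * N) ^ 2 < (rou (2 ^ i) a : ℤ) := fun P hP =>
    Gd_struct M N B (2 ^ i) hM hN r1 r2 P (ht P hP).1 (ht P hP).2
  choose! a s ha1 ha2 ha3 using hst
  have hmaps : ∀ P ∈ t, a P ∈ t.image a := fun P hP => Finset.mem_image_of_mem a hP
  have hcard := Finset.card_le_mul_card_image_of_maps_to hmaps (8 ^ (640 * j + 1)) (by
    intro b hb
    obtain ⟨P0, hP0, rfl⟩ := Finset.mem_image.mp hb
    apply rough_mult hL1 (2 ^ i) (640 * j + 1) _ _ (a P0) (ha1 P0 hP0) (ha3 P0 hP0)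
    · intro P hP; exact (ht P (Finset.mem_filter.mp hP).1).1
    · intro P hP
      rw [Finset.mem_filter] at hP
      rw [← hP.2, ha2 P hP.1]
      exact Dvd.dvd.mul_right (by simp) _
    · calc 2 = 2 ^ 1 := rfl
        _ ≤ 2 ^ i := Nat.pow_le_pow_right (by norm_num) (by omega)
    · push_cast
      rw [← pow_mul]
      exact r3.le)
  have himg : (t.image a).card ≤ {d : ℤ | GoodRank7sq X d}.ncard := by
    have h1 : ((t.image a).image (fun n : ℕ => (-(n : ℤ)))).card = (t.image a).card :=
      Finset.card_image_of_injective _ (by intro x y h; simpa using h)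
    rw [← h1, ← Set.ncard_coe_finset]
    apply Set.ncard_le_ncard _ (good_finite X)
    intro d hd
    simp only [Finset.coe_image, Set.mem_image, Finset.mem_coe] at hd
    obtain ⟨n, ⟨P, hP, rfl⟩, rfl⟩ := hd
    exact good_of_point X (fM * N) hL1 P (ht P hP).1 (a P) (2 ^ i) (s P) (ha1 P hP) (ha2 P hP)
      (ha3 P hP) hXL
  have hfin : (1 / 5 : ℝ) * N ^ 2 ≤ 8 ^ (640 * j + 1) * ({d : ℤ | GoodRank7sq X d}.ncard : ℝ) := by
    refine htc.trans ?_
    have := hcard.trans (Nat.mul_le_mul_left _ himg)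
    exact_mod_cast this
  have hX0 : 0 ≤ X := le_trans (by positivity) hX
  have hroot : X ^ ((1 : ℝ) / 4) ≤ c0 * q * N ^ 2 := by
    have h1 : X ≤ (c0 * q * N ^ 2) ^ 4 := by
      rw [div_lt_iff₀ hc0p, pow_succ, ← hNr] at hi2
      have h2 : 1 ≤ c0 * q := by nlinarith
      calc X ≤ (N : ℝ) ^ 8 * q * c0 := hi2.le
        _ = (c0 * q) ^ 1 * (N : ℝ) ^ 8 := by ring
        _ ≤ (c0 * q) ^ 4 * (N : ℝ) ^ 8 :=
          mul_le_mul_of_nonneg_right (pow_le_pow_right₀ h2 (by norm_num)) (by positivity)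
        _ = _ := by ring
    calc X ^ ((1 : ℝ) / 4) ≤ ((c0 * q * N ^ 2) ^ 4) ^ ((1 : ℝ) / 4) :=
          Real.rpow_le_rpow hX0 h1 (by norm_num)
      _ = _ := by
          rw [← Real.rpow_natCast, ← Real.rpow_mul (by positivity)]
          norm_num
  rw [div_mul_eq_mul_div, one_mul, div_le_iff₀ (by positivity)]
  calc X ^ ((1 : ℝ) / 4) ≤ c0 * q * N ^ 2 := hroot
    _ = (5 * (c0 * q)) * (1 / 5 * N ^ 2) := by ring
    _ ≤ (5 * (c0 * q)) * (8 ^ (640 * j + 1) * ({d : ℤ | GoodRank7sq X d}.ncard : ℝ)) :=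
      mul_le_mul_of_nonneg_left hfin (by positivity)
    _ = _ := by ring
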